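/- Let G=(V,E) be a graph, let S ⊆ V, and let 𝒯 be an S-nice tree decomposition of G of width k. Then there exists a slim S-nice tree decomposition 𝒯' of G of width at most k. -/

import Mathlib

/-! Preliminary definitions: rooted tree decompositions, `S`-traces, `S`-nice and
slim tree decompositions, following Chapelle et al. -/

/-- A walk in `G` all of whose vertices lie in the set `W`. -/
def SimpleGraph.ReachableIn {V : Type} (G : SimpleGraph V) (W : Set V) (u v : V) : Prop :=
  ∃ p : G.Walk u v, ∀ x ∈ p.support, x ∈ W

/-- The open neighborhood of a set of vertices. -/
def SimpleGraph.nbhdSet {V : Type} (G : SimpleGraph V) (W : Set V) : Set V :=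
  {x | x ∉ W ∧ ∃ w ∈ W, G.Adj w x}

/-- The vertex set of the connected component of `G − X` that contains `v`
(assuming `v ∉ X`). -/
def SimpleGraph.compOutside {V : Type} (G : SimpleGraph V) (X : Set V) (v : V) : Set V :=
  {w | G.ReachableIn Xᶜ v w}

/-- A rooted tree decomposition of a graph `G` on vertex type `V`, with node type `ι`.
The rooted tree is given by a parent function: the root is a fixed point of `parent`
and every node reaches the root by iterating `parent`.  The bags satisfy the three
usual conditions of a tree decomposition; connectedness of `{t | v ∈ bag t}` is
expressed by the existence of a highest node `m` containing `v` such that from any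
node whose bag contains `v` the whole ancestor chain up to `m` contains `v`. -/
structure RootedTreeDecomp (V ι : Type) (G : SimpleGraph V) where
  root : ι
  parent : ι → ι
  parent_root : parent root = root
  reaches_root : ∀ t : ι, ∃ n : ℕ, parent^[n] t = root
  bag : ι → Set V
  bags_cover : ∀ v : V, ∃ t : ι, v ∈ bag t
  bags_of_edges : ∀ ⦃u v : V⦄, G.Adj u v → ∃ t : ι, u ∈ bag t ∧ v ∈ bag t
  bags_connected : ∀ v : V, ∃ m : ι, v ∈ bag m ∧
    ∀ t : ι, v ∈ bag t → ∃ n : ℕ, parent^[n] t = m ∧ ∀ i ≤ n, v ∈ bag (parent^[i] t)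

namespace RootedTreeDecomp

variable {V ι : Type} {G : SimpleGraph V}

/-- `t'` lies in the subtree `T_t` rooted at `t`; equivalently, `t` is an
ancestor (possibly equal) of `t'`. -/
def InSubtree (𝒯 : RootedTreeDecomp V ι G) (t t' : ι) : Prop :=
  ∃ n : ℕ, 𝒯.parent^[n] t' = t

/-- `t` is the parent of `t'`. -/
def IsParent (𝒯 : RootedTreeDecomp V ι G) (t t' : ι) : Prop :=
  t' ≠ 𝒯.root ∧ 𝒯.parent t' = t

/-- `V_t`: the union of the bags of the nodes of the subtree rooted at `t`. -/
def Vt (𝒯 : RootedTreeDecomp V ι G) (t : ι) : Set V :=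
  {v | ∃ t', 𝒯.InSubtree t t' ∧ v ∈ 𝒯.bag t'}

/-- `L_t = V_t ∖ X_t`. -/
def Lt (𝒯 : RootedTreeDecomp V ι G) (t : ι) : Set V := 𝒯.Vt t \ 𝒯.bag t

/-- `R_t = V ∖ V_t`. -/
def Rt (𝒯 : RootedTreeDecomp V ι G) (t : ι) : Set V := (𝒯.Vt t)ᶜ

/-- `L_t^S = L_t ∩ S`. -/
def LS (𝒯 : RootedTreeDecomp V ι G) (S : Set V) (t : ι) : Set V := 𝒯.Lt t ∩ S

/-- `X_t^S = X_t ∩ S`. -/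
def XS (𝒯 : RootedTreeDecomp V ι G) (S : Set V) (t : ι) : Set V := 𝒯.bag t ∩ S

/-- `R_t^S = R_t ∩ S`. -/
def RS (𝒯 : RootedTreeDecomp V ι G) (S : Set V) (t : ι) : Set V := 𝒯.Rt t ∩ S

/-- The `S`-trace of a node `t`. -/
def STrace (𝒯 : RootedTreeDecomp V ι G) (S : Set V) (t : ι) : Set V × Set V × Set V :=
  (𝒯.LS S t, 𝒯.XS S t, 𝒯.RS S t)

/-- Every bag has size at most `k + 1`, i.e. the width is at most `k`. -/
def WidthAtMost (𝒯 : RootedTreeDecomp V ι G) (k : ℕ) : Prop :=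
  ∀ t : ι, (𝒯.bag t).ncard ≤ k + 1

/-- The width of the decomposition (max bag size minus one) is exactly `k`. -/
def HasWidth (𝒯 : RootedTreeDecomp V ι G) (k : ℕ) : Prop :=
  𝒯.WidthAtMost k ∧ ∃ t : ι, (𝒯.bag t).ncard = k + 1

/-- `t'` is an `S`-child of `t`. -/
def IsSChild (𝒯 : RootedTreeDecomp V ι G) (S : Set V) (t t' : ι) : Prop :=
  𝒯.IsParent t t' ∧ ((𝒯.LS S t' ∪ 𝒯.XS S t') \ (𝒯.RS S t ∪ 𝒯.XS S t)).Nonempty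

/-- `t` is an `S`-bottom node: `L_t^S ≠ ∅` and `t` is the bottom node of the
directed path of its own `S`-trace (every node with the same `S`-trace is an
ancestor of `t`). -/
def IsSBottom (𝒯 : RootedTreeDecomp V ι G) (S : Set V) (t : ι) : Prop :=
  (𝒯.LS S t).Nonempty ∧ ∀ t', 𝒯.STrace S t' = 𝒯.STrace S t → 𝒯.InSubtree t' t

/-- `t` admits the `S`-operation `introduce(v)`. -/
def AdmitsIntroduce (𝒯 : RootedTreeDecomp V ι G) (S : Set V) (t : ι) (v : V) : Prop :=
  ∃ t₁, 𝒯.IsSChild S t t₁ ∧ (∀ t₂, 𝒯.IsSChild S t t₂ → t₂ = t₁) ∧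
    v ∈ S ∧ v ∉ 𝒯.bag t₁ ∧ 𝒯.XS S t = 𝒯.XS S t₁ ∪ {v}

/-- `t` admits the `S`-operation `forget(v)`. -/
def AdmitsForget (𝒯 : RootedTreeDecomp V ι G) (S : Set V) (t : ι) (v : V) : Prop :=
  ∃ t₁, 𝒯.IsSChild S t t₁ ∧ (∀ t₂, 𝒯.IsSChild S t t₂ → t₂ = t₁) ∧
    v ∈ S ∧ v ∈ 𝒯.bag t₁ ∧ 𝒯.XS S t = 𝒯.XS S t₁ \ {v}

/-- `t` admits the `S`-operation `join` with the two `S`-children `t₁, t₂`. -/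
def AdmitsJoin (𝒯 : RootedTreeDecomp V ι G) (S : Set V) (t t₁ t₂ : ι) : Prop :=
  t₁ ≠ t₂ ∧ 𝒯.IsSChild S t t₁ ∧ 𝒯.IsSChild S t t₂ ∧
    (∀ t₃, 𝒯.IsSChild S t t₃ → t₃ = t₁ ∨ t₃ = t₂) ∧
    𝒯.XS S t₁ ∪ 𝒯.XS S t₂ ⊆ 𝒯.XS S t

/-- `S`-nice tree decomposition: bags along tree edges are comparable and differ in
size by at most one, and every `S`-bottom node admits one of the `S`-operations. -/
def IsSNice (𝒯 : RootedTreeDecomp V ι G) (S : Set V) : Prop :=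
  (∀ t t' : ι, 𝒯.IsParent t' t →
      (𝒯.bag t ⊆ 𝒯.bag t' ∨ 𝒯.bag t' ⊆ 𝒯.bag t) ∧
      (𝒯.bag t).ncard ≤ (𝒯.bag t').ncard + 1 ∧ (𝒯.bag t').ncard ≤ (𝒯.bag t).ncard + 1) ∧
  ∀ t : ι, 𝒯.IsSBottom S t →
    (∃ v, 𝒯.AdmitsIntroduce S t v) ∨ (∃ v, 𝒯.AdmitsForget S t v) ∨
      (∃ t₁ t₂, 𝒯.AdmitsJoin S t t₁ t₂)

/-- Nice tree decomposition: root and leaves have empty bags, and every internal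
node is an introduce, forget, or join node. -/
def IsNice (𝒯 : RootedTreeDecomp V ι G) : Prop :=
  𝒯.bag 𝒯.root = ∅ ∧
  (∀ t : ι, (∀ t', ¬𝒯.IsParent t t') → 𝒯.bag t = ∅) ∧
  ∀ t : ι, (∃ t', 𝒯.IsParent t t') →
    (∃ t', 𝒯.IsParent t t' ∧ (∀ t'', 𝒯.IsParent t t'' → t'' = t') ∧
      ((∃ v, v ∉ 𝒯.bag t' ∧ 𝒯.bag t = 𝒯.bag t' ∪ {v}) ∨
        (∃ v, v ∈ 𝒯.bag t' ∧ 𝒯.bag t = 𝒯.bag t' \ {v}))) ∨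
    (∃ t₁ t₂, t₁ ≠ t₂ ∧ 𝒯.IsParent t t₁ ∧ 𝒯.IsParent t t₂ ∧
      (∀ t₃, 𝒯.IsParent t t₃ → t₃ = t₁ ∨ t₃ = t₂) ∧
      𝒯.bag t = 𝒯.bag t₁ ∧ 𝒯.bag t = 𝒯.bag t₂)

/-- A set of nodes inducing a connected subtree of the tree: it contains a node `m`
such that from every node of the set the whole ancestor chain up to `m` stays in
the set. -/
def ConnectedNodeSet (𝒯 : RootedTreeDecomp V ι G) (A : Set ι) : Prop :=
  ∃ m ∈ A, ∀ t ∈ A, ∃ n : ℕ, 𝒯.parent^[n] t = m ∧ ∀ i ≤ n, 𝒯.parent^[i] t ∈ A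

/-- A full join tree: a non-trivial inclusion-maximal connected set of nodes all of
which share one and the same full bag `X` (of size `k + 1`). -/
def IsFullJoinTree (𝒯 : RootedTreeDecomp V ι G) (k : ℕ) (A : Set ι) (X : Set V) : Prop :=
  A.Nontrivial ∧ 𝒯.ConnectedNodeSet A ∧ X.ncard = k + 1 ∧ (∀ t ∈ A, 𝒯.bag t = X) ∧
  ∀ A' : Set ι, A ⊆ A' → 𝒯.ConnectedNodeSet A' → (∀ t ∈ A', 𝒯.bag t = X) → A' = A

/-- `m` is the root (top node) of the node set `A`. -/
def IsTopOf (𝒯 : RootedTreeDecomp V ι G) (A : Set ι) (m : ι) : Prop :=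
  m ∈ A ∧ ∀ t ∈ A, 𝒯.InSubtree m t

/-- The condition on a pair `(u, ti)` appearing in condition (7) of slimness:
either `ti` belongs to `T'_C` (it is an `S`-child of a node of the full join tree
`A` but is not itself in `A`) and `u ∈ V_{ti}`, or `ti` is the parent of the root
`tr` of the full join tree and `u ∈ V ∖ V_{tr}`. -/
def FullJoinBranch (𝒯 : RootedTreeDecomp V ι G) (S : Set V) (A : Set ι) (tr : ι)
    (u : V) (ti : ι) : Prop :=
  (ti ∉ A ∧ (∃ ta ∈ A, 𝒯.IsSChild S ta ti) ∧ u ∈ 𝒯.Vt ti) ∨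
  (tr ≠ 𝒯.root ∧ ti = 𝒯.parent tr ∧ u ∉ 𝒯.Vt tr)

/-- Slim `S`-nice tree decomposition of width `k` (the seven conditions of the
paper; a bag is *full* if it has size `k + 1`). -/
def IsSlim (𝒯 : RootedTreeDecomp V ι G) (S : Set V) (k : ℕ) : Prop :=
  -- (1) the root is not an S-bottom node
  (¬𝒯.IsSBottom S 𝒯.root) ∧
  -- (2) S-bottom nodes with two S-children
  (∀ t t₁ t₂ : ι, 𝒯.IsSBottom S t → t₁ ≠ t₂ → 𝒯.IsSChild S t t₁ → 𝒯.IsSChild S t t₂ →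
    (∃ A X, 𝒯.IsFullJoinTree k A X ∧ t ∈ A) ∨
      ((𝒯.bag t₁).ncard ≠ k + 1 ∧ (𝒯.bag t₂).ncard ≠ k + 1 ∧
        (𝒯.bag t₁).ncard ≤ (𝒯.bag t).ncard ∧ (𝒯.bag t₂).ncard ≤ (𝒯.bag t).ncard ∧
        ∀ tp, 𝒯.IsParent tp t →
          (𝒯.bag tp).ncard ≠ k + 1 ∧ (𝒯.bag tp).ncard ≤ (𝒯.bag t).ncard)) ∧
  -- (3) S-bottom nodes with a non-full bag
  (∀ t tp : ι, 𝒯.IsSBottom S t → (𝒯.bag t).ncard ≠ k + 1 → 𝒯.IsParent tp t →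
    𝒯.bag t = 𝒯.bag tp ∧ ∀ t'', 𝒯.IsSChild S tp t'' → t'' = t) ∧
  -- (4) S-bottom nodes admitting forget(v)
  (∀ t v t', 𝒯.IsSBottom S t → 𝒯.AdmitsForget S t v → 𝒯.IsSChild S t t' →
    (𝒯.bag t').ncard ≠ k + 1 →
    (∀ t₁ t₂, 𝒯.IsSChild S t' t₁ → 𝒯.IsSChild S t' t₂ → t₁ = t₂) ∧
      ∀ t'', 𝒯.IsSChild S t' t'' → 𝒯.bag t' = 𝒯.bag t'') ∧
  -- (5) parents of S-bottom nodes with non-full bags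
  (∀ t tp, 𝒯.IsSBottom S t → 𝒯.IsParent tp t → (𝒯.bag tp).ncard ≠ k + 1 →
    tp = 𝒯.root ∨ ∀ tpp, 𝒯.IsParent tpp tp → ¬𝒯.IsSBottom S tpp) ∧
  -- (6) nodes of full join trees
  (∀ A X, 𝒯.IsFullJoinTree k A X → ∀ t ∈ A,
    𝒯.IsSBottom S t ∧ ∃ t₁ t₂, t₁ ≠ t₂ ∧ 𝒯.IsSChild S t t₁ ∧ 𝒯.IsSChild S t t₂) ∧
  -- (7) branching condition of full join trees
  (∀ A X tr, 𝒯.IsFullJoinTree k A X → 𝒯.IsTopOf A tr →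
    ∀ v ∈ X \ S, ∃ u₁ u₂ u₃ : V, ∃ t₁ t₂ t₃ : ι,
      u₁ ≠ u₂ ∧ u₁ ≠ u₃ ∧ u₂ ≠ u₃ ∧ t₁ ≠ t₂ ∧ t₁ ≠ t₃ ∧ t₂ ≠ t₃ ∧
      (G.Adj v u₁ ∧ u₁ ∉ X ∧ (∃ s ∈ S, G.ReachableIn Xᶜ u₁ s) ∧
        𝒯.FullJoinBranch S A tr u₁ t₁) ∧
      (G.Adj v u₂ ∧ u₂ ∉ X ∧ (∃ s ∈ S, G.ReachableIn Xᶜ u₂ s) ∧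
        𝒯.FullJoinBranch S A tr u₂ t₂) ∧
      (G.Adj v u₃ ∧ u₃ ∉ X ∧ (∃ s ∈ S, G.ReachableIn Xᶜ u₃ s) ∧
        𝒯.FullJoinBranch S A tr u₃ t₃))

end RootedTreeDecomp

/-- `tw(G) ≤ k`: `G` admits a (rooted) tree decomposition of width at most `k`. -/
def SimpleGraph.TreewidthAtMost {V : Type} (G : SimpleGraph V) (k : ℕ) : Prop :=
  ∃ (ι : Type) (𝒯 : RootedTreeDecomp V ι G), 𝒯.WidthAtMost k

/-!
A rooted tree decomposition amounts to a derivation of statements that a vertex set `W` can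
be decomposed below a bag `X`, one rule for each of leaf, join, introduce and forget. It suffices to
turn a derivation of width `k` into one in a normal form in which full bags occur only where all
branches below a full bag split off at once, and to unfold the latter into a tree decomposition,
repeating every node that is not full three times. With `k` the treewidth, the width is exact.

To reach the normal form, one first cuts off every part `C` that avoids `S` and can be separated by
a bag: making the neighbourhood of `C` a clique keeps it inside some bag of the smaller
decomposition, where `C` is attached again. Once no bag separates anything from `S`, each connected
part `C` is decomposed at a bag `Y` of minimum size at which `C` falls apart or does not see all of
`Y`. If `Y` is full, every branch below it meets `S` and misses a vertex of `Y`, so it hangs below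
a bag that is not full. If moreover some vertex of `Y` touches at most two of the parts around `Y`,
then either the other branches can be merged or that vertex can be forgotten early, and `Y` is left
with at most two branches; otherwise condition (7) of slimness holds.
-/

namespace SlimDecomp

section ListUnion

variable {α : Type*} {A B : Set α} {l l' : List (Set α)}

/-- The union of a list of sets. Vertex sets that are cut into pairwise disjoint pieces are
recorded as the list of their pieces. -/
def listUnion (l : List (Set α)) : Set α := {a | ∃ A ∈ l, a ∈ A}

@[simp] theorem listUnion_nil : listUnion ([] : List (Set α)) = ∅ := by
  simp [listUnion]

@[simp] theorem listUnion_cons : listUnion (A :: l) = A ∪ listUnion l := by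
  ext a
  simp [listUnion]

@[simp] theorem listUnion_append : listUnion (l ++ l') = listUnion l ∪ listUnion l' := by
  induction l with
  | nil => simp
  | cons A l ih => rw [List.cons_append, listUnion_cons, ih, listUnion_cons, Set.union_assoc]

theorem subset_listUnion (hA : A ∈ l) : A ⊆ listUnion l := fun _ ha => ⟨A, hA, ha⟩

theorem listUnion_subset (h : ∀ A ∈ l, A ⊆ B) : listUnion l ⊆ B := by
  rintro a ⟨A, hA, ha⟩
  exact h A hA ha

theorem listUnion_perm (h : l.Perm l') : listUnion l = listUnion l' := by
  ext a
  simp only [listUnion, h.mem_iff]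

theorem disjoint_listUnion_right : Disjoint B (listUnion l) ↔ ∀ A ∈ l, Disjoint B A := by
  simp only [Set.disjoint_right, listUnion, Set.mem_ofPred_eq]
  grind

theorem eq_of_mem_of_pairwise_disjoint (hl : l.Pairwise Disjoint) (hA : A ∈ l) (hB : B ∈ l)
    {a : α} (haA : a ∈ A) (haB : a ∈ B) : A = B := by
  by_contra hne
  have hdisj : Disjoint A B := hl.forall hA hB hne
  exact Set.disjoint_left.1 hdisj haA haB

end ListUnion

section Connectivity

variable {V : Type} {G : SimpleGraph V} {A C C' W W' X : Set V} {u v w : V}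

theorem disjoint_nbhdSet : Disjoint (G.nbhdSet W) W := Set.disjoint_left.2 fun _ hv => hv.1

theorem nbhdSet_subset_iff :
    G.nbhdSet W ⊆ X ↔ ∀ w ∈ W, ∀ v, G.Adj w v → v ∈ X ∨ v ∈ W := by
  constructor
  · intro h w hw v hwv
    by_cases hv : v ∈ W
    · exact Or.inr hv
    · exact Or.inl (h ⟨hv, w, hw, hwv⟩)
  · rintro h v ⟨hv, w, hw, hwv⟩
    exact (h w hw v hwv).resolve_right hv

theorem reachableIn_refl (hv : v ∈ W) : G.ReachableIn W v v := ⟨.nil, by simpa using hv⟩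

theorem reachableIn_symm (h : G.ReachableIn W u v) : G.ReachableIn W v u := by
  obtain ⟨p, hp⟩ := h
  exact ⟨p.reverse, by simpa using hp⟩

theorem reachableIn_trans (h : G.ReachableIn W u v) (h' : G.ReachableIn W v w) :
    G.ReachableIn W u w := by
  obtain ⟨p, hp⟩ := h
  obtain ⟨q, hq⟩ := h'
  refine ⟨p.append q, fun x hx => ?_⟩
  rw [SimpleGraph.Walk.mem_support_append_iff] at hx
  exact hx.elim (hp x) (hq x)

theorem reachableIn_of_adj (hu : u ∈ W) (hv : v ∈ W) (huv : G.Adj u v) : G.ReachableIn W u v :=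
  ⟨.cons huv .nil, by simp [hu, hv]⟩

theorem reachableIn_mono (hW : W ⊆ W') (h : G.ReachableIn W u v) : G.ReachableIn W' u v := by
  obtain ⟨p, hp⟩ := h
  exact ⟨p, fun x hx => hW (hp x hx)⟩

theorem mem_of_reachableIn (h : G.ReachableIn W u v) : v ∈ W := by
  obtain ⟨p, hp⟩ := h
  exact hp v p.end_mem_support

theorem reachableIn_induction {P : V → Prop} (h : G.ReachableIn W u v) (hu : P u)
    (hstep : ∀ a ∈ W, ∀ b ∈ W, G.Adj a b → P a → P b) : P v := by
  obtain ⟨p, hp⟩ := h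
  induction p with
  | nil => exact hu
  | cons hadj p ih =>
    simp only [SimpleGraph.Walk.support_cons, List.mem_cons, forall_eq_or_imp] at hp
    exact ih (hstep _ hp.1 _ (hp.2 _ p.start_mem_support) hadj hu) hp.2

theorem reachableIn_iff_reachable_induce (hu : u ∈ W) (hv : v ∈ W) :
    G.ReachableIn W u v ↔ (G.induce W).Reachable ⟨u, hu⟩ ⟨v, hv⟩ := by
  constructor
  · rintro ⟨p, hp⟩
    exact ⟨p.induce W hp⟩
  · rintro ⟨p⟩
    have hsupport : ∀ x ∈ (p.map (SimpleGraph.Embedding.induce W).toHom).support, x ∈ W := by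
      simp only [SimpleGraph.Walk.support_map, List.mem_map]
      rintro _ ⟨y, _, rfl⟩
      exact y.2
    exact ⟨_, hsupport⟩

theorem reachableIn_of_connected (hC : (G.induce C).Connected) (hu : u ∈ C) (hv : v ∈ C) :
    G.ReachableIn C u v :=
  (reachableIn_iff_reachable_induce hu hv).2 (hC.preconnected _ _)

theorem nonempty_of_connected (hC : (G.induce C).Connected) : C.Nonempty :=
  Set.nonempty_coe_sort.1 hC.nonempty

theorem eq_of_connected_of_adj_closed (hC : (G.induce C).Connected) (hA : A.Nonempty)
    (hAC : A ⊆ C) (hclosed : ∀ u ∈ A, ∀ v ∈ C, G.Adj u v → v ∈ A) : A = C := by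
  obtain ⟨a, ha⟩ := hA
  refine hAC.antisymm fun c hc => ?_
  exact reachableIn_induction (P := (· ∈ A)) (reachableIn_of_connected hC (hAC ha) hc) ha
    fun u _ v hv huv hu => hclosed u hu v hv huv

theorem connected_of_forall_reachableIn (hw : w ∈ C) (h : ∀ v ∈ C, G.ReachableIn C w v) :
    (G.induce C).Connected := by
  have : Nonempty C := ⟨⟨w, hw⟩⟩
  refine ⟨fun ⟨u, hu⟩ ⟨v, hv⟩ => ?_⟩
  exact (reachableIn_iff_reachable_induce hu hv).1
    (reachableIn_trans (reachableIn_symm (h u hu)) (h v hv))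

/-- `C` is the vertex set of a connected component of `G[W]`. -/
structure IsComponent (G : SimpleGraph V) (W C : Set V) : Prop where
  subset : C ⊆ W
  connected : (G.induce C).Connected
  mem_of_adj : ∀ u ∈ C, ∀ v ∈ W, G.Adj u v → v ∈ C

namespace IsComponent

theorem nonempty (hC : IsComponent G W C) : C.Nonempty := nonempty_of_connected hC.connected

theorem eq_of_mem (hC : IsComponent G W C) (hC' : IsComponent G W C') (hv : v ∈ C)
    (hv' : v ∈ C') : C = C' := by
  have hinter : (C ∩ C').Nonempty := ⟨v, hv, hv'⟩
  have hinter_left : C ∩ C' = C := eq_of_connected_of_adj_closed hC.connected hinter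
    Set.inter_subset_left fun a ha b hb hab => ⟨hb, hC'.mem_of_adj a ha.2 b (hC.subset hb) hab⟩
  have hinter_right : C ∩ C' = C' := eq_of_connected_of_adj_closed hC'.connected hinter
    Set.inter_subset_right fun a ha b hb hab => ⟨hC.mem_of_adj a ha.1 b (hC'.subset hb) hab, hb⟩
  rw [← hinter_left, hinter_right]

theorem nbhdSet_subset (hC : IsComponent G W C) (hW : G.nbhdSet W ⊆ X) : G.nbhdSet C ⊆ X := by
  rintro v ⟨hv, c, hc, hcv⟩
  exact hW ⟨fun hvW => hv (hC.mem_of_adj c hc v hvW hcv), c, hC.subset hc, hcv⟩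

end IsComponent

theorem exists_isComponent_mem (hw : w ∈ W) : ∃ C, IsComponent G W C ∧ w ∈ C := by
  have hclosed : ∀ u, G.ReachableIn W w u → ∀ v ∈ W, G.Adj u v → G.ReachableIn W w v :=
    fun u hu v hv huv =>
      reachableIn_trans hu (reachableIn_of_adj (mem_of_reachableIn hu) hv huv)
  refine ⟨{v | G.ReachableIn W w v}, ⟨fun v => mem_of_reachableIn, ?_, hclosed⟩,
    reachableIn_refl hw⟩
  refine connected_of_forall_reachableIn (reachableIn_refl hw) fun v hv => ?_
  refine (reachableIn_induction (P := fun u => G.ReachableIn W w u ∧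
    G.ReachableIn {v | G.ReachableIn W w v} w u) hv ?_ ?_).2
  · exact ⟨reachableIn_refl hw, reachableIn_refl (reachableIn_refl hw)⟩
  · rintro a - b hb hab ⟨ha, ha'⟩
    have hwb := hclosed a ha b hb hab
    exact ⟨hwb, reachableIn_trans ha' (reachableIn_of_adj ha hwb hab)⟩

theorem exists_list_isComponent [Finite V] (G : SimpleGraph V) (W : Set V) :
    ∃ l : List (Set V), (∀ C, C ∈ l ↔ IsComponent G W C) ∧ l.Pairwise Disjoint ∧
      listUnion l = W := by
  have hfin : {C | IsComponent G W C}.Finite := Set.toFinite _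
  have hmem : ∀ C, C ∈ hfin.toFinset.toList ↔ IsComponent G W C := by simp
  refine ⟨hfin.toFinset.toList, hmem, ?_, ?_⟩
  · refine hfin.toFinset.nodup_toList.imp_of_mem fun {C C'} hC hC' hne => ?_
    rw [hmem] at hC hC'
    exact Set.disjoint_left.2 fun v hv hv' => hne (hC.eq_of_mem hC' hv hv')
  · refine (listUnion_subset fun C hC => ((hmem C).1 hC).subset).antisymm fun w hw => ?_
    obtain ⟨C, hC, hwC⟩ := exists_isComponent_mem (G := G) hw
    exact ⟨C, (hmem C).2 hC, hwC⟩

end Connectivity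

/-! ### Derivations -/

section DecompositionRel

variable {V : Type} {G : SimpleGraph V} {m : ℕ} {P : Set V → Set V → Prop} {W X Z : Set V}

/-- `P X W` is to be read as: the vertices of `W` can be decomposed below the bag `X`, all bags
having at most `m` vertices. The fields are the operations that the two notions of decomposability
used below, `Derivable` and `SlimDerivable`, have in common. -/
structure IsDecompositionRel (G : SimpleGraph V) (m : ℕ) (P : Set V → Set V → Prop) : Prop where
  disjoint : ∀ X W, P X W → Disjoint X W
  leaf : ∀ X, X.ncard ≤ m → P X ∅
  join : ∀ X W₁ W₂, Disjoint W₁ W₂ → P X W₁ → P X W₂ → P X (W₁ ∪ W₂)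
  introduce : ∀ X W, ∀ v ∈ X, v ∉ W → X.ncard ≤ m → P (X \ {v}) W → P X W
  forget : ∀ X W, ∀ w ∉ X, w ∉ W → G.neighborSet w ⊆ X ∪ W → P (insert w X) W → P X (insert w W)

namespace IsDecompositionRel

theorem join_list (hP : IsDecompositionRel G m P) {l : List (Set V)} (hX : X.ncard ≤ m)
    (hl : l.Pairwise Disjoint) (h : ∀ W ∈ l, P X W) : P X (listUnion l) := by
  induction l with
  | nil => simpa using hP.leaf X hX
  | cons W l ih =>
    rw [List.pairwise_cons] at hl
    rw [List.forall_mem_cons] at h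
    rw [listUnion_cons]
    exact hP.join X W _ (disjoint_listUnion_right.2 hl.1) h.1 (ih hl.2 h.2)

theorem join_components [Finite V] (hP : IsDecompositionRel G m P) (hX : X.ncard ≤ m)
    (h : ∀ C, IsComponent G W C → P X C) : P X W := by
  obtain ⟨l, hl, hdisj, rfl⟩ := exists_list_isComponent G W
  exact hP.join_list hX hdisj fun C hC => h C ((hl C).1 hC)

theorem introduce_all [Finite V] (hP : IsDecompositionRel G m P) (h : P X W) (hXZ : X ⊆ Z)
    (hZW : Disjoint Z W) (hZ : Z.ncard ≤ m) : P Z W := by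
  induction hn : (Z \ X).ncard generalizing Z with
  | zero =>
    rw [Set.ncard_eq_zero, Set.sdiff_eq_empty] at hn
    rwa [hn.antisymm hXZ]
  | succ n ih =>
    obtain ⟨z, hz⟩ : (Z \ X).Nonempty := Set.nonempty_of_ncard_ne_zero (by omega)
    refine hP.introduce Z W z hz.1 (Set.disjoint_left.1 hZW hz.1) hZ ?_
    refine ih (Set.subset_sdiff_singleton hXZ hz.2) (hZW.mono_left Set.sdiff_subset)
      ((Set.ncard_le_ncard Set.sdiff_subset).trans hZ) ?_
    rw [sdiff_right_comm, Set.ncard_sdiff_singleton_of_mem hz, hn, Nat.add_sub_cancel]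

theorem forget_all [Finite V] (hP : IsDecompositionRel G m P) (h : P X W) (hZ : Z ⊆ X)
    (hnbr : ∀ x ∈ X \ Z, G.neighborSet x ⊆ X ∪ W) : P Z (W ∪ X \ Z) := by
  induction hn : (X \ Z).ncard generalizing Z with
  | zero =>
    rw [Set.ncard_eq_zero] at hn
    rw [hn, Set.union_empty]
    rwa [hZ.antisymm (Set.sdiff_eq_empty.1 hn)]
  | succ n ih =>
    obtain ⟨z, hz⟩ : (X \ Z).Nonempty := Set.nonempty_of_ncard_ne_zero (by omega)
    have hzW : z ∉ W := Set.disjoint_left.1 (hP.disjoint X W h) hz.1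
    have hsplit : W ∪ X \ Z = insert z (W ∪ X \ insert z Z) := by grind
    rw [hsplit]
    refine hP.forget _ _ z hz.2 (by grind) ?_ (ih (Set.insert_subset hz.1 hZ) (by grind) ?_)
    · intro u hu
      have huz : u ≠ z := (G.ne_of_adj hu).symm
      have := hnbr z hz hu
      grind
    · have hsdiff : X \ insert z Z = (X \ Z) \ {z} := by grind
      rw [hsdiff, Set.ncard_sdiff_singleton_of_mem hz, hn, Nat.add_sub_cancel]

end IsDecompositionRel

end DecompositionRel

section Derivable

variable {V : Type} {G G' : SimpleGraph V} {W W' X X' : Set V} {m : ℕ}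

/-- `Derivable G m X W` says that `W` can be decomposed below the bag `X` by the operations of a
nice tree decomposition, all bags having at most `m` vertices. -/
inductive Derivable (G : SimpleGraph V) (m : ℕ) : Set V → Set V → Prop
  | leaf (X : Set V) (hX : X.ncard ≤ m) : Derivable G m X ∅
  | join (X W₁ W₂ : Set V) (hdisj : Disjoint W₁ W₂) (hW₁ : Derivable G m X W₁)
      (hW₂ : Derivable G m X W₂) : Derivable G m X (W₁ ∪ W₂)
  | introduce (X W : Set V) (v : V) (hvX : v ∈ X) (hvW : v ∉ W) (hX : X.ncard ≤ m)
      (hW : Derivable G m (X \ {v}) W) : Derivable G m X W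
  | forget (X W : Set V) (w : V) (hwX : w ∉ X) (hwW : w ∉ W) (hw : G.neighborSet w ⊆ X ∪ W)
      (hW : Derivable G m (insert w X) W) : Derivable G m X (insert w W)

namespace Derivable

theorem ncard_le [Finite V] (h : Derivable G m X W) : X.ncard ≤ m := by
  induction h with
  | leaf _ hX => exact hX
  | join _ _ _ _ _ _ ih₁ _ => exact ih₁
  | introduce _ _ _ _ _ hX _ _ => exact hX
  | forget X _ w _ _ _ _ ih => exact (Set.ncard_le_ncard (Set.subset_insert w X)).trans ih

theorem disjoint (h : Derivable G m X W) : Disjoint X W := by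
  induction h with
  | leaf X _ => exact Set.disjoint_empty X
  | join _ _ _ _ _ _ ih₁ ih₂ => exact ih₁.union_right ih₂
  | introduce _ _ _ _ _ _ _ ih => grind
  | forget _ _ _ _ _ _ _ ih => grind

theorem nbhdSet_subset (h : Derivable G m X W) : G.nbhdSet W ⊆ X := by
  rw [nbhdSet_subset_iff]
  induction h with
  | leaf _ _ => simp
  | join _ _ _ _ _ _ ih₁ ih₂ => grind
  | introduce _ _ _ _ _ _ _ ih => grind
  | forget _ _ _ _ _ hw _ ih =>
    have := fun v (hv : G.Adj _ v) => hw hv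
    grind

theorem isDecompositionRel : IsDecompositionRel G m (Derivable G m) where
  disjoint _ _ h := h.disjoint
  leaf := leaf
  join := join
  introduce := introduce
  forget := forget

theorem mono (h : Derivable G m X W) (hG : ∀ w ∈ W, G'.neighborSet w ⊆ G.neighborSet w) :
    Derivable G' m X W := by
  induction h with
  | leaf X hX => exact leaf X hX
  | join X W₁ W₂ hdisj _ _ ih₁ ih₂ =>
    exact join X W₁ W₂ hdisj (ih₁ fun w hw => hG w (Or.inl hw)) (ih₂ fun w hw => hG w (Or.inr hw))
  | introduce X W v hvX hvW hX _ ih => exact introduce X W v hvX hvW hX (ih hG)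
  | forget X W w hwX hwW hw _ ih =>
    exact forget X W w hwX hwW ((hG w (Set.mem_insert w W)).trans hw)
      (ih fun v hv => hG v (Set.mem_insert_of_mem w hv))

theorem restrict [Finite V] (h : Derivable G m X W) (hX : X' ⊆ X) (hW : W' ⊆ W)
    (hnbr : G.nbhdSet W' ⊆ X') : Derivable G m X' W' := by
  induction h generalizing X' W' with
  | leaf X hXm =>
    rw [Set.subset_empty_iff.1 hW]
    exact leaf X' ((Set.ncard_le_ncard hX).trans hXm)
  | join X W₁ W₂ hdisj h₁ h₂ ih₁ ih₂ =>
    have hnbr₁ := nbhdSet_subset_iff.1 h₁.nbhdSet_subset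
    have hnbr₂ := nbhdSet_subset_iff.1 h₂.nbhdSet_subset
    have hXW₁ := h₁.disjoint
    have hXW₂ := h₂.disjoint
    rw [nbhdSet_subset_iff] at hnbr
    have hsplit : W' = W' ∩ W₁ ∪ W' ∩ W₂ := by grind
    rw [hsplit]
    exact join X' _ _ (hdisj.mono Set.inter_subset_right Set.inter_subset_right)
      (ih₁ hX Set.inter_subset_right (nbhdSet_subset_iff.2 (by grind)))
      (ih₂ hX Set.inter_subset_right (nbhdSet_subset_iff.2 (by grind)))
  | introduce X W v _ hvW hXm hder ih =>
    by_cases hv : v ∈ X'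
    · have := nbhdSet_subset_iff.1 hder.nbhdSet_subset
      rw [nbhdSet_subset_iff] at hnbr
      exact introduce X' W' v hv (fun h => hvW (hW h)) ((Set.ncard_le_ncard hX).trans hXm)
        (ih (Set.sdiff_subset_sdiff_left hX) hW (nbhdSet_subset_iff.2 (by grind)))
    · exact ih (Set.subset_sdiff_singleton hX hv) hW hnbr
  | forget X W w hwX _ _ _ ih =>
    rw [nbhdSet_subset_iff] at hnbr
    by_cases hwW' : w ∈ W'
    · have hsplit : W' = insert w (W' \ {w}) := by grind
      rw [hsplit]
      refine forget X' _ w (fun h => hwX (hX h)) (by simp) (fun u hu => ?_)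
        (ih (Set.insert_subset_insert hX) (by grind) (nbhdSet_subset_iff.2 (by grind)))
      have huw : u ≠ w := (G.ne_of_adj hu).symm
      have := hnbr w hwW' u hu
      grind
    · exact ih (hX.trans (Set.subset_insert w X)) (by grind) (nbhdSet_subset_iff.2 hnbr)

theorem change_bag [Finite V] (h : Derivable G m X W) (hW' : G.nbhdSet W ⊆ X')
    (hdisj : Disjoint X' W) (hX' : X'.ncard ≤ m) : Derivable G m X' W :=
  isDecompositionRel.introduce_all
    (h.restrict Set.inter_subset_left subset_rfl (Set.subset_inter h.nbhdSet_subset hW'))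
    Set.inter_subset_right hdisj hX'

theorem exists_forget (h : Derivable G m X W) (hW : (G.induce W).Connected)
    (hX : X ⊆ G.nbhdSet W) : ∃ w ∈ W, Derivable G m (insert w X) (W \ {w}) := by
  induction h with
  | leaf _ _ => simpa using nonempty_of_connected hW
  | introduce X W v hvX hvW _ hder _ =>
    obtain ⟨_, w, hw, hwv⟩ := hX hvX
    have := hder.nbhdSet_subset ⟨hvW, w, hw, hwv⟩
    grind
  | forget X W w _ hwW _ hder _ =>
    refine ⟨w, Set.mem_insert w W, ?_⟩
    rwa [Set.insert_sdiff_self_of_notMem hwW]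
  | join X W₁ W₂ hdisj h₁ h₂ ih₁ ih₂ =>
    rcases W₁.eq_empty_or_nonempty with rfl | hW₁
    · rw [Set.empty_union] at hW hX ⊢
      exact ih₂ hW hX
    · have heq : W₁ = W₁ ∪ W₂ := by
        refine eq_of_connected_of_adj_closed hW hW₁ Set.subset_union_left fun u hu v hv huv => ?_
        have hv' := nbhdSet_subset_iff.1 h₁.nbhdSet_subset u hu v huv
        exact hv'.resolve_left fun hvX => Set.disjoint_left.1 (h₁.disjoint.union_right h₂.disjoint)
          hvX hv
      rw [← heq] at hW hX ⊢
      exact ih₁ hW hX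

theorem exists_mem_notMem_nbhdSet [Finite V] (h : Derivable G m X W)
    (hW : (G.induce W).Connected) (hX : m ≤ X.ncard) : ∃ x ∈ X, x ∉ G.nbhdSet W := by
  by_contra! hX'
  obtain ⟨w, hw, hder⟩ := h.exists_forget hW hX'
  have := hder.ncard_le
  rw [Set.ncard_insert_of_notMem fun hwX => Set.disjoint_left.1 h.disjoint hwX hw] at this
  omega

end Derivable

end Derivable

section TreeDecomposition

variable {V ι : Type} {G : SimpleGraph V} (𝒯 : RootedTreeDecomp V ι G) {a b c : ι} {m : ℕ}
  {W : Set V}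

/-- The nodes of a rooted tree, ordered so that ancestors are smaller. -/
abbrev nodeOrder : PartialOrder ι where
  le := 𝒯.InSubtree
  le_refl _ := ⟨0, rfl⟩
  le_trans a b c := by
    rintro ⟨i, rfl⟩ ⟨j, rfl⟩
    exact ⟨i + j, Function.iterate_add_apply _ _ _ _⟩
  le_antisymm a b := by
    rintro ⟨i, rfl⟩ ⟨j, hj⟩
    rcases Nat.eq_zero_or_pos (j + i) with hji | hji
    · simp [Nat.eq_zero_of_add_eq_zero_left hji]
    have hroot : b = 𝒯.root := by
      obtain ⟨n, hn⟩ := 𝒯.reaches_root b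
      have hperiod : Function.IsPeriodicPt 𝒯.parent (n * (j + i)) b := by
        refine Function.IsPeriodicPt.const_mul ?_ n
        rwa [← Function.iterate_add_apply] at hj
      have hle : n ≤ n * (j + i) := Nat.le_mul_of_pos_right n hji
      rw [← hperiod.eq, ← Nat.sub_add_cancel hle, Function.iterate_add_apply, hn]
      exact Function.iterate_fixed 𝒯.parent_root _
    rw [hroot, Function.iterate_fixed 𝒯.parent_root]

theorem inSubtree_or_inSubtree (ha : 𝒯.InSubtree a c) (hb : 𝒯.InSubtree b c) :
    𝒯.InSubtree a b ∨ 𝒯.InSubtree b a := by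
  obtain ⟨i, rfl⟩ := ha
  obtain ⟨j, rfl⟩ := hb
  rcases le_total i j with hij | hji
  · exact Or.inr ⟨j - i, by rw [← Function.iterate_add_apply, Nat.sub_add_cancel hij]⟩
  · exact Or.inl ⟨i - j, by rw [← Function.iterate_add_apply, Nat.sub_add_cancel hji]⟩

theorem mem_bag_of_inSubtree {v : V} (hab : 𝒯.InSubtree a b) (hbc : 𝒯.InSubtree b c)
    (ha : v ∈ 𝒯.bag a) (hc : v ∈ 𝒯.bag c) : v ∈ 𝒯.bag b := by
  let _ := nodeOrder 𝒯
  obtain ⟨m, hm, hpath⟩ := 𝒯.bags_connected v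
  obtain ⟨n, hn, hcm⟩ := hpath c hc
  obtain ⟨i, hi, -⟩ := hpath a ha
  obtain ⟨j, rfl⟩ := hbc
  rcases le_or_gt j n with hjn | hnj
  · exact hcm j hjn
  · have hbm : 𝒯.parent^[j] c ≤ m :=
      ⟨j - n, by rw [← hn, ← Function.iterate_add_apply, Nat.sub_add_cancel hnj.le]⟩
    have hmb : m ≤ 𝒯.parent^[j] c := le_trans (b := a) ⟨i, hi⟩ hab
    rwa [hbm.antisymm hmb]

theorem exists_highest_bag [Finite V] (hW : (G.induce W).Connected) :
    ∃ t, (W ∩ 𝒯.bag t).Nonempty ∧ ∀ s, (W ∩ 𝒯.bag s).Nonempty → 𝒯.InSubtree t s := by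
  let _ := nodeOrder 𝒯
  choose top htop hpath using 𝒯.bags_connected
  have htop_le : ∀ v s, v ∈ 𝒯.bag s → top v ≤ s := fun v s hv =>
    let ⟨n, hn, _⟩ := hpath v s hv
    ⟨n, hn⟩
  obtain ⟨w, hwW, hmin⟩ := W.toFinite.exists_minimalFor top W (nonempty_of_connected hW)
  have hall : {v ∈ W | top w ≤ top v} = W := by
    refine eq_of_connected_of_adj_closed hW ⟨w, hwW, le_rfl⟩ (Set.sep_subset _ _) ?_
    rintro u ⟨_, hwu⟩ v hv huv
    obtain ⟨s, hus, hvs⟩ := 𝒯.bags_of_edges huv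
    exact ⟨hv, (inSubtree_or_inSubtree 𝒯 (hwu.trans (htop_le u s hus)) (htop_le v s hvs)).elim id
      (hmin hv)⟩
  refine ⟨top w, ⟨w, hwW, htop w⟩, ?_⟩
  rintro s ⟨v, hvW, hvs⟩
  rw [← hall] at hvW
  exact hvW.2.trans (htop_le v s hvs)

theorem derivable_of_connected [Finite V] (hm : ∀ t, (𝒯.bag t).ncard ≤ m)
    (hW : (G.induce W).Connected) (t : ι) (hnbr : G.nbhdSet W ⊆ 𝒯.bag t)
    (ht : ∀ s, (W ∩ 𝒯.bag s).Nonempty → 𝒯.InSubtree t s) : Derivable G m (G.nbhdSet W) W := by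
  induction hn : W.ncard using Nat.strong_induction_on generalizing W t with
  | _ n ih =>
  obtain ⟨r, hrW, hr⟩ := exists_highest_bag 𝒯 hW
  have hnbr_r : G.nbhdSet W ⊆ 𝒯.bag r := by
    rintro v ⟨hv, w, hw, hwv⟩
    obtain ⟨s, hws, hvs⟩ := 𝒯.bags_of_edges hwv
    exact mem_bag_of_inSubtree 𝒯 (ht r hrW) (hr s ⟨w, hw, hws⟩) (hnbr ⟨hv, w, hw, hwv⟩) hvs
  have hbelow : Derivable G m (𝒯.bag r) (W \ 𝒯.bag r) := by
    refine Derivable.isDecompositionRel.join_components (hm r) fun C hC => ?_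
    have hnbrC : G.nbhdSet C ⊆ 𝒯.bag r := by
      refine hC.nbhdSet_subset (nbhdSet_subset_iff.2 fun w hw v hwv => ?_)
      have := nbhdSet_subset_iff.1 hnbr_r w hw.1 v hwv
      grind
    have hCW : C ⊆ W := hC.subset.trans Set.sdiff_subset
    have hlt : C.ncard < n := by
      obtain ⟨w, hw, hwr⟩ := hrW
      exact hn ▸ Set.ncard_lt_ncard (hCW.ssubset_of_mem_notMem hw fun h => (hC.subset h).2 hwr)
    have hder := ih C.ncard hlt hC.connected r hnbrC
      (fun s hs => hr s (hs.mono (Set.inter_subset_inter_left _ hCW))) rfl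
    exact Derivable.isDecompositionRel.introduce_all hder hnbrC
      (Set.disjoint_sdiff_right.mono_right hC.subset) (hm r)
  have hsplit : W \ 𝒯.bag r ∪ (G.nbhdSet W ∪ W ∩ 𝒯.bag r) \ G.nbhdSet W = W := by
    have := disjoint_nbhdSet (G := G) (W := W)
    grind
  have hclosed := nbhdSet_subset_iff.1 (subset_refl (G.nbhdSet W))
  have hbelow' : Derivable G m (G.nbhdSet W ∪ W ∩ 𝒯.bag r) (W \ 𝒯.bag r) :=
    hbelow.restrict (Set.union_subset hnbr_r Set.inter_subset_right) subset_rfl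
      (nbhdSet_subset_iff.2 fun w hw v hwv => by grind)
  have hder := Derivable.isDecompositionRel.forget_all hbelow' Set.subset_union_left
    fun w hw v hwv => by
      have := hclosed w (by grind) v hwv
      grind
  rwa [hsplit] at hder

theorem derivable_of_forall_ncard_le [Finite V] (hm : ∀ t, (𝒯.bag t).ncard ≤ m) :
    Derivable G m ∅ Set.univ := by
  refine Derivable.isDecompositionRel.join_components (by simp) fun C hC => ?_
  have hnbr : G.nbhdSet C = ∅ :=
    Set.subset_empty_iff.1 (hC.nbhdSet_subset (by simp [SimpleGraph.nbhdSet]))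
  have hder := derivable_of_connected 𝒯 hm hC.connected 𝒯.root (by simp [hnbr])
    fun s _ => 𝒯.reaches_root s
  rwa [hnbr] at hder

end TreeDecomposition

section SlimDerivable

variable {V : Type} {G : SimpleGraph V} {S X Y W : Set V} {k : ℕ} {lS lN : List (Set V)}
  {x : Set V → V}

/-- Seen from the bag `Y`, the vertex `v` has a neighbour in `B` that reaches `S` while avoiding
`Y`; one of the three witnesses asked for in condition (7) of slimness. -/
def Touches (G : SimpleGraph V) (S Y : Set V) (v : V) (B : Set V) : Prop :=
  ∃ u ∈ B, G.Adj v u ∧ u ∉ Y ∧ ∃ s ∈ S, G.ReachableIn Yᶜ u s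

/-- Every vertex of `Y` outside `S` touches three different sets of the list `l`: condition (7) of
slimness for a full join tree with bag `Y` whose branches and outside are listed in `l`. -/
def TouchesThree (G : SimpleGraph V) (S Y : Set V) (l : List (Set V)) : Prop :=
  ∀ v ∈ Y \ S, ∃ B₁ ∈ l, ∃ B₂ ∈ l, ∃ B₃ ∈ l, B₁ ≠ B₂ ∧ B₁ ≠ B₃ ∧ B₂ ≠ B₃ ∧
    Touches G S Y v B₁ ∧ Touches G S Y v B₂ ∧ Touches G S Y v B₃

/-- Branches hanging below a full bag `Y`: the pieces in `lS` meet `S`, those in `lN` do not, and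
the bag below which the piece `W` is decomposed is `Y` without the vertex `x W`. -/
structure IsBranching (S : Set V) (k : ℕ) (Y : Set V) (lS lN : List (Set V)) (x : Set V → V) :
    Prop where
  ncard_eq : Y.ncard = k + 1
  pairwise : (lS ++ lN).Pairwise Disjoint
  nonempty : ∀ W ∈ lS ++ lN, W.Nonempty
  disjoint : ∀ W ∈ lS ++ lN, Disjoint Y W
  mem : ∀ W ∈ lS ++ lN, x W ∈ Y
  meets : ∀ W ∈ lS, (W ∩ S).Nonempty
  misses : ∀ W ∈ lN, Disjoint W S

/-- `SlimDerivable G S k X W` says that `W` can be decomposed below the bag `X` in the normal form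
from which a slim decomposition of width `k` is read off. The bag `X` is never full: full bags
only occur directly below the forgetting of a vertex `w` (rule `full`), where they carry all
branches at once. -/
inductive SlimDerivable (G : SimpleGraph V) (S : Set V) (k : ℕ) : Set V → Set V → Prop
  | leaf (X : Set V) (hX : X.ncard ≤ k) : SlimDerivable G S k X ∅
  | join (X W₁ W₂ : Set V) (h₁ : W₁.Nonempty) (h₂ : W₂.Nonempty) (hdisj : Disjoint W₁ W₂)
      (hW₁ : SlimDerivable G S k X W₁) (hW₂ : SlimDerivable G S k X W₂) :
      SlimDerivable G S k X (W₁ ∪ W₂)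
  | introduce (X W : Set V) (v : V) (hvX : v ∈ X) (hvW : v ∉ W) (hX : X.ncard ≤ k)
      (hW : SlimDerivable G S k (X \ {v}) W) : SlimDerivable G S k X W
  | forget (X W : Set V) (w : V) (hwX : w ∉ X) (hwW : w ∉ W) (hw : G.neighborSet w ⊆ X ∪ W)
      (hW : SlimDerivable G S k (insert w X) W) : SlimDerivable G S k X (insert w W)
  | full (X : Set V) (w : V) (lS lN : List (Set V)) (x : Set V → V) (hwX : w ∉ X)
      (hB : IsBranching S k (insert w X) lS lN x)
      (hW : ∀ W ∈ lS ++ lN, SlimDerivable G S k (insert w X \ {x W}) W)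
      (hw : G.neighborSet w ⊆ X ∪ listUnion (lS ++ lN))
      (htouch : lS.length ≤ 2 ∨
        TouchesThree G S (insert w X) ((insert w X ∪ listUnion (lS ++ lN))ᶜ :: lS)) :
      SlimDerivable G S k X (insert w (listUnion (lS ++ lN)))

theorem IsBranching.disjoint_listUnion (h : IsBranching S k Y lS lN x) :
    Disjoint Y (listUnion (lS ++ lN)) :=
  disjoint_listUnion_right.2 h.disjoint

namespace SlimDerivable

theorem ncard_le [Finite V] (h : SlimDerivable G S k X W) : X.ncard ≤ k := by
  induction h with
  | leaf _ hX => exact hX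
  | join _ _ _ _ _ _ _ _ ih₁ _ => exact ih₁
  | introduce _ _ _ _ _ hX _ _ => exact hX
  | forget X _ w _ _ _ _ ih => exact (Set.ncard_le_ncard (Set.subset_insert w X)).trans ih
  | full _ _ _ _ _ hwX hB _ _ _ _ =>
    have hcard := hB.ncard_eq
    rw [Set.ncard_insert_of_notMem hwX] at hcard
    omega

theorem disjoint (h : SlimDerivable G S k X W) : Disjoint X W := by
  induction h with
  | leaf X _ => exact Set.disjoint_empty X
  | join _ _ _ _ _ _ _ _ ih₁ ih₂ => exact ih₁.union_right ih₂
  | introduce _ _ _ _ _ _ _ ih => grind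
  | forget _ _ _ _ _ _ _ ih => grind
  | full X w _ _ _ hwX hB _ _ _ _ =>
    rw [Set.disjoint_insert_right]
    exact ⟨hwX, hB.disjoint_listUnion.mono_left (Set.subset_insert w X)⟩

theorem neighborSet_subset (h : SlimDerivable G S k X W) :
    ∀ v ∈ W, G.neighborSet v ⊆ X ∪ W := by
  induction h with
  | leaf _ _ => simp
  | join _ _ _ _ _ _ _ _ ih₁ ih₂ => grind
  | introduce _ _ _ _ _ _ _ ih => grind
  | forget _ _ _ _ _ _ _ ih => grind
  | full X _ _ _ _ _ _ hW hw _ ih =>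
    rintro v (rfl | ⟨W, hW, hv⟩)
    · exact hw.trans (Set.union_subset_union_right X (Set.subset_insert v _))
    · have := ih W hW v hv
      have := subset_listUnion hW
      grind

end SlimDerivable

end SlimDerivable

section MergingPieces

variable {V : Type} {G : SimpleGraph V} {S X Y W C : Set V} {k : ℕ} {l l' lS lN : List (Set V)}
  {x : Set V → V} {v y : V}

theorem Derivable.exists_sdiff_singleton [Finite V] (h : Derivable G (k + 1) Y W)
    (hC : IsComponent G W C) (hY : Y.ncard = k + 1) :
    ∃ y ∈ Y, Derivable G (k + 1) (Y \ {y}) C := by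
  have hnbr := hC.nbhdSet_subset h.nbhdSet_subset
  obtain ⟨y, hy, hyC⟩ := (h.restrict subset_rfl hC.subset hnbr).exists_mem_notMem_nbhdSet
    hC.connected hY.ge
  exact ⟨y, hy, h.restrict Set.sdiff_subset hC.subset (Set.subset_sdiff_singleton hnbr hyC)⟩

namespace SlimDerivable

theorem isDecompositionRel : IsDecompositionRel G k (SlimDerivable G S k) where
  disjoint _ _ h := h.disjoint
  leaf := leaf
  join X W₁ W₂ hdisj h₁ h₂ := by
    rcases W₁.eq_empty_or_nonempty with rfl | hW₁
    · rwa [Set.empty_union]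
    rcases W₂.eq_empty_or_nonempty with rfl | hW₂
    · rwa [Set.union_empty]
    exact join X W₁ W₂ hW₁ hW₂ hdisj h₁ h₂
  introduce := introduce
  forget := forget

theorem full_sdiff_singleton (hy : y ∈ Y) (hB : IsBranching S k Y lS lN x)
    (hW : ∀ W ∈ lS ++ lN, SlimDerivable G S k (Y \ {x W}) W)
    (hnbr : G.neighborSet y ⊆ Y ∪ listUnion (lS ++ lN))
    (htouch : lS.length ≤ 2 ∨ TouchesThree G S Y ((Y ∪ listUnion (lS ++ lN))ᶜ :: lS)) :
    SlimDerivable G S k (Y \ {y}) (insert y (listUnion (lS ++ lN))) := by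
  have hins : insert y (Y \ {y}) = Y := Set.insert_sdiff_self_of_mem hy
  refine full (Y \ {y}) y lS lN x (by simp) ?_ ?_ (fun u hu => ?_) ?_
  · rwa [hins]
  · rwa [hins]
  · have huy : u ≠ y := (G.ne_of_adj hu).symm
    have := hnbr hu
    grind
  · rwa [hins]

theorem full_of_disjoint [Finite V] (h : Derivable G (k + 1) Y W) (hWS : Disjoint W S)
    (hY : Y.ncard = k + 1) (hy : y ∈ Y) (hnbr : G.neighborSet y ⊆ Y ∪ W)
    (ih : ∀ C, IsComponent G W C → ∀ z ∈ Y, Derivable G (k + 1) (Y \ {z}) C →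
      SlimDerivable G S k (Y \ {z}) C) :
    SlimDerivable G S k (Y \ {y}) (insert y W) := by
  have : Nonempty V := ⟨y⟩
  choose! x hxY hx using fun C (hC : IsComponent G W C) => h.exists_sdiff_singleton hC hY
  obtain ⟨l, hl, hdisj, hlW⟩ := exists_list_isComponent G W
  have hbranch : IsBranching S k Y [] l x :=
    { ncard_eq := hY
      pairwise := hdisj
      nonempty := fun C hC => ((hl C).1 hC).nonempty
      disjoint := fun C hC => h.disjoint.mono_right ((hl C).1 hC).subset
      mem := fun C hC => hxY C ((hl C).1 hC)
      meets := by simp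
      misses := fun C hC => hWS.mono_left ((hl C).1 hC).subset }
  have hder : ∀ C ∈ l, SlimDerivable G S k (Y \ {x C}) C := fun C hC =>
    ih C ((hl C).1 hC) _ (hxY C ((hl C).1 hC)) (hx C ((hl C).1 hC))
  have hfull := full_sdiff_singleton (G := G) hy hbranch hder (by rwa [List.nil_append, hlW])
    (Or.inl (by simp))
  rwa [List.nil_append, hlW] at hfull

theorem of_disjoint [Finite V] (h : Derivable G (k + 1) X W) (hWS : Disjoint W S)
    (hX : X.ncard ≤ k) : SlimDerivable G S k X W := by
  induction hn : W.ncard using Nat.strong_induction_on generalizing X W with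
  | _ n ih =>
  subst hn
  refine isDecompositionRel.join_components hX fun C hC => ?_
  have hCX : G.nbhdSet C ⊆ X := hC.nbhdSet_subset h.nbhdSet_subset
  refine isDecompositionRel.introduce_all ?_ hCX (h.disjoint.mono_right hC.subset) hX
  obtain ⟨w, hwC, hw⟩ := (h.restrict hCX hC.subset subset_rfl).exists_forget hC.connected subset_rfl
  have hwN : w ∉ G.nbhdSet C := fun hw' => hw'.1 hwC
  have hlt : (C \ {w}).ncard < W.ncard :=
    (Set.ncard_sdiff_singleton_lt_of_mem hwC).trans_le (Set.ncard_le_ncard hC.subset)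
  have hdisj : Disjoint (C \ {w}) S := hWS.mono_left (Set.sdiff_subset.trans hC.subset)
  have hwnbr : G.neighborSet w ⊆ G.nbhdSet C ∪ C \ {w} := by
    intro u hu
    have huw : u ≠ w := (G.ne_of_adj hu).symm
    have := nbhdSet_subset_iff.1 (subset_refl (G.nbhdSet C)) w hwC u hu
    grind
  suffices SlimDerivable G S k (G.nbhdSet C) (insert w (C \ {w})) by
    rwa [Set.insert_sdiff_self_of_mem hwC] at this
  by_cases hcard : (insert w (G.nbhdSet C)).ncard ≤ k
  · exact forget _ _ w hwN (by simp) hwnbr (ih _ hlt hw hdisj hcard rfl)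
  have hY : (insert w (G.nbhdSet C)).ncard = k + 1 := by
    have := hw.ncard_le
    omega
  rw [← Set.insert_sdiff_self_of_notMem hwN]
  refine full_of_disjoint hw hdisj hY (Set.mem_insert w _)
    (hwnbr.trans (Set.union_subset_union_left _ (Set.subset_insert w _))) fun D hD y hy hder => ?_
  refine ih _ ((Set.ncard_le_ncard hD.subset).trans_lt hlt) hder (hdisj.mono_left hD.subset) ?_ rfl
  rw [Set.ncard_sdiff_singleton_of_mem hy, hY, Nat.add_sub_cancel]

end SlimDerivable

end MergingPieces

/-! ### Branches at a full bag -/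

section FullBag

variable {V : Type} {G : SimpleGraph V} {S Y A B : Set V} {k : ℕ} {l l' : List (Set V)} {v y : V}

/-- A full bag `Y` below which the pieces listed in `l` hang: every piece meets `S`, misses a
vertex of `Y` in its neighbourhood and is derivable below `Y` without any such vertex; every vertex
next to `Y` reaches `S` outside `Y`. -/
structure IsFullBag (G : SimpleGraph V) (S : Set V) (k : ℕ) (Y : Set V) (l : List (Set V)) :
    Prop where
  ncard_eq : Y.ncard = k + 1
  pairwise : l.Pairwise Disjoint
  disjoint : ∀ A ∈ l, Disjoint Y A
  meets : ∀ A ∈ l, (A ∩ S).Nonempty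
  exists_notMem : ∀ A ∈ l, ∃ y ∈ Y, y ∉ G.nbhdSet A
  derivable : ∀ A ∈ l, ∀ y ∈ Y, y ∉ G.nbhdSet A → SlimDerivable G S k (Y \ {y}) A
  reaches : ∀ v ∈ Y, ∀ u ∉ Y, G.Adj v u → ∃ s ∈ S, G.ReachableIn Yᶜ u s

namespace IsFullBag

theorem perm (h : IsFullBag G S k Y l) (hl : l.Perm l') : IsFullBag G S k Y l' where
  ncard_eq := h.ncard_eq
  pairwise := hl.pairwise h.pairwise fun hAB => hAB.symm
  disjoint A hA := h.disjoint A (hl.mem_iff.2 hA)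
  meets A hA := h.meets A (hl.mem_iff.2 hA)
  exists_notMem A hA := h.exists_notMem A (hl.mem_iff.2 hA)
  derivable A hA := h.derivable A (hl.mem_iff.2 hA)
  reaches := h.reaches

theorem sublist (h : IsFullBag G S k Y l) (hl : l'.Sublist l) : IsFullBag G S k Y l' where
  ncard_eq := h.ncard_eq
  pairwise := h.pairwise.sublist hl
  disjoint A hA := h.disjoint A (hl.subset hA)
  meets A hA := h.meets A (hl.subset hA)
  exists_notMem A hA := h.exists_notMem A (hl.subset hA)
  derivable A hA := h.derivable A (hl.subset hA)
  reaches := h.reaches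

theorem touches (h : IsFullBag G S k Y l) (hv : v ∈ Y) {u : V} (hu : u ∉ Y) (hvu : G.Adj v u)
    (huA : u ∈ A) : Touches G S Y v A :=
  ⟨u, huA, hvu, hu, h.reaches v hv u hu hvu⟩

theorem notMem_nbhdSet_of_not_touches (h : IsFullBag G S k Y l) (hA : A ∈ l) (hv : v ∈ Y)
    (htouch : ¬Touches G S Y v A) : v ∉ G.nbhdSet A := fun ⟨_, _, huA, huv⟩ =>
  htouch (h.touches hv (Set.disjoint_right.1 (h.disjoint A hA) huA) huv.symm huA)

theorem ncard_sdiff_singleton (h : IsFullBag G S k Y l) (hy : y ∈ Y) : (Y \ {y}).ncard = k := by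
  rw [Set.ncard_sdiff_singleton_of_mem hy, h.ncard_eq, Nat.add_sub_cancel]

theorem slimDerivable_of_touchesThree (h : IsFullBag G S k Y l) (hy : y ∈ Y)
    (hnbr : G.neighborSet y ⊆ Y ∪ listUnion l)
    (htouch : l.length ≤ 2 ∨ TouchesThree G S Y ((Y ∪ listUnion l)ᶜ :: l)) :
    SlimDerivable G S k (Y \ {y}) (insert y (listUnion l)) := by
  have : Nonempty V := ⟨y⟩
  choose! x hxY hx using fun A (hA : A ∈ l) => h.exists_notMem A hA
  have hbranch : IsBranching S k Y l [] x :=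
    { ncard_eq := h.ncard_eq
      pairwise := by simpa using h.pairwise
      nonempty := by simpa using fun A hA => (h.meets A hA).mono Set.inter_subset_left
      disjoint := by simpa using h.disjoint
      mem := by simpa using hxY
      meets := h.meets
      misses := by simp }
  have hfull := SlimDerivable.full_sdiff_singleton (G := G) hy hbranch
    (by simpa using fun A hA => h.derivable A hA _ (hxY A hA) (hx A hA))
    (by rwa [List.append_nil]) (by rwa [List.append_nil])
  rwa [List.append_nil] at hfull

theorem slimDerivable_listUnion (h : IsFullBag G S k Y l) (hv : v ∈ Y)
    (hvl : ∀ A ∈ l, v ∉ G.nbhdSet A) : SlimDerivable G S k (Y \ {v}) (listUnion l) :=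
  SlimDerivable.isDecompositionRel.join_list (h.ncard_sdiff_singleton hv).le h.pairwise
    fun A hA => h.derivable A hA v hv (hvl A hA)

/-- A vertex `v` of the bag outside all but one of the neighbourhoods can be dropped below all the
other pieces, which can therefore be handled as one. -/
theorem merge (h : IsFullBag G S k Y (A :: l)) (hl : l ≠ []) (hv : v ∈ Y)
    (hvl : ∀ B ∈ l, v ∉ G.nbhdSet B) : IsFullBag G S k Y [A, listUnion l] := by
  have hrest := h.sublist (List.sublist_cons_self A l)
  obtain ⟨B, hB⟩ := List.exists_mem_of_ne_nil l hl
  have hYl : Disjoint Y (listUnion l) := disjoint_listUnion_right.2 hrest.disjoint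
  have hnbhd : ∀ y ∈ Y, y ∉ G.nbhdSet (listUnion l) ↔ ∀ B ∈ l, y ∉ G.nbhdSet B := by
    refine fun y hy => ⟨fun hyl B hB ⟨_, w, hw, hwy⟩ => ?_, fun hyl ⟨_, w, ⟨B, hB, hw⟩, hwy⟩ => ?_⟩
    · exact hyl ⟨Set.disjoint_left.1 hYl hy, w, subset_listUnion hB hw, hwy⟩
    · exact hyl B hB ⟨Set.disjoint_left.1 (hrest.disjoint B hB) hy, w, hw, hwy⟩
  constructor
  case ncard_eq => exact h.ncard_eq
  case pairwise =>
    simpa using disjoint_listUnion_right.2 (List.pairwise_cons.1 h.pairwise).1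
  case reaches => exact h.reaches
  all_goals
    rw [List.forall_mem_cons, List.forall_mem_singleton]
  case disjoint => exact ⟨h.disjoint A List.mem_cons_self, hYl⟩
  case meets =>
    exact ⟨h.meets A List.mem_cons_self,
      (hrest.meets B hB).mono (Set.inter_subset_inter_left S (subset_listUnion hB))⟩
  case exists_notMem =>
    exact ⟨h.exists_notMem A List.mem_cons_self, v, hv, (hnbhd v hv).2 hvl⟩
  case derivable =>
    exact ⟨h.derivable A List.mem_cons_self,
      fun y hy hyl => hrest.slimDerivable_listUnion hy ((hnbhd y hy).1 hyl)⟩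

theorem slimDerivable_of_touches_one (h : IsFullBag G S k Y (A :: l)) (hl : l ≠ [])
    (hv : v ∈ Y) (hvl : ∀ B ∈ l, ¬Touches G S Y v B) (hy : y ∈ Y)
    (hnbr : G.neighborSet y ⊆ Y ∪ listUnion (A :: l)) :
    SlimDerivable G S k (Y \ {y}) (insert y (listUnion (A :: l))) := by
  have hmerge := h.merge hl hv fun B hB =>
    h.notMem_nbhdSet_of_not_touches (List.mem_cons_of_mem A hB) hv (hvl B hB)
  have hunion : listUnion [A, listUnion l] = listUnion (A :: l) := by simp
  have hder := hmerge.slimDerivable_of_touchesThree hy (by rwa [hunion]) (Or.inl (by simp))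
  rwa [hunion] at hder

theorem neighborSet_subset_of_touches_two (h : IsFullBag G S k Y (A :: B :: l)) (hv : v ∈ Y)
    (hvl : ∀ C ∈ l, ¬Touches G S Y v C)
    (hout : ¬Touches G S Y v (Y ∪ listUnion (A :: B :: l))ᶜ) :
    G.neighborSet v ⊆ Y ∪ listUnion [A, B] := by
  intro u hu
  by_contra hu'
  simp only [listUnion_cons, listUnion_nil, Set.union_empty, Set.mem_union, not_or] at hu'
  obtain ⟨huY, huA, huB⟩ := hu'
  refine hout (h.touches hv huY hu ?_)
  simp only [listUnion_cons, Set.mem_compl_iff, Set.mem_union, not_or]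
  exact ⟨huY, huA, huB, fun ⟨C, hC, huC⟩ => hvl C hC (h.touches hv huY hu huC)⟩

theorem slimDerivable_of_touches_two (h : IsFullBag G S k Y (A :: B :: l)) (hv : v ∈ Y)
    (hvl : ∀ C ∈ l, ¬Touches G S Y v C) (hnbr : G.neighborSet v ⊆ Y ∪ listUnion [A, B]) :
    SlimDerivable G S k (Y \ {v}) (insert v (listUnion (A :: B :: l))) := by
  have hpair := h.sublist (List.sublist_append_left [A, B] l)
  have hrest := h.sublist (List.sublist_append_right [A, B] l)
  have hder := hpair.slimDerivable_of_touchesThree hv hnbr (Or.inl (by simp))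
  have hder' := hrest.slimDerivable_listUnion hv fun C hC =>
    hrest.notMem_nbhdSet_of_not_touches hC hv (hvl C hC)
  have hdisj : Disjoint (insert v (listUnion [A, B])) (listUnion l) := by
    refine Set.disjoint_insert_left.2
      ⟨Set.disjoint_left.1 (disjoint_listUnion_right.2 hrest.disjoint) hv, ?_⟩
    refine disjoint_listUnion_right.2 fun C hC => (disjoint_listUnion_right.2 fun D hD => ?_).symm
    exact (List.pairwise_append.1 h.pairwise).2.2 D hD C hC |>.symm
  have hjoin := SlimDerivable.isDecompositionRel.join _ _ _ hdisj hder hder'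
  rwa [Set.insert_union, ← listUnion_append] at hjoin

theorem nodup (h : IsFullBag G S k Y l) : ((Y ∪ listUnion l)ᶜ :: l).Nodup := by
  rw [List.nodup_cons]
  constructor
  · intro hout
    obtain ⟨a, ha, -⟩ := h.meets _ hout
    exact ha (Or.inr ⟨_, hout, ha⟩)
  · refine h.pairwise.imp_of_mem fun {A B} hA _ hAB => ?_
    rintro rfl
    obtain ⟨a, ha, -⟩ := h.meets A hA
    exact Set.disjoint_left.1 hAB ha ha

theorem exists_perm_of_not_touchesThree (h : IsFullBag G S k Y l) (hlen : 2 < l.length)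
    (hthree : ¬TouchesThree G S Y ((Y ∪ listUnion l)ᶜ :: l)) :
    ∃ v ∈ Y, (∃ A l', l' ≠ [] ∧ l.Perm (A :: l') ∧ ∀ B ∈ l', ¬Touches G S Y v B) ∨
      (∃ A B l', l.Perm (A :: B :: l') ∧ (∀ C ∈ l', ¬Touches G S Y v C) ∧
        ¬Touches G S Y v (Y ∪ listUnion l)ᶜ) := by
  classical
  simp only [TouchesThree, not_forall] at hthree
  obtain ⟨v, ⟨hv, -⟩, hthree⟩ := hthree
  refine ⟨v, hv, ?_⟩
  have hperm := (List.filter_append_perm (fun A => Touches G S Y v A) l).symm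
  have hmem := fun A => hperm.mem_iff (a := A)
  have hnodup := h.nodup
  rw [List.nodup_cons, hperm.nodup_iff] at hnodup
  have hrest : ∀ B ∈ l.filter (fun A => !decide (Touches G S Y v A)), ¬Touches G S Y v B := by
    simp
  have htouched : ∀ B ∈ l.filter (fun A => Touches G S Y v A), Touches G S Y v B := by simp
  generalize l.filter (fun A => !decide (Touches G S Y v A)) = rest at *
  generalize l.filter (fun A => Touches G S Y v A) = touched at *
  rw [hperm.length_eq] at hlen
  match touched, rest with
  | [], [] => simp at hlen
  | [], A :: l' =>
    exact Or.inl ⟨A, l', by rintro rfl; simp at hlen, hperm, (List.forall_mem_cons.1 hrest).2⟩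
  | [A], l' =>
    exact Or.inl ⟨A, l', by rintro rfl; simp at hlen, hperm, hrest⟩
  | A :: B :: touched, rest =>
    have hout : ¬Touches G S Y v (Y ∪ listUnion l)ᶜ := fun hout => hthree
      ⟨_, List.mem_cons_self, A, by simp [hmem], B, by simp [hmem], by grind⟩
    cases touched with
    | nil => exact Or.inr ⟨A, B, rest, hperm, hrest, hout⟩
    | cons C touched =>
      refine absurd ⟨A, by simp [hmem], B, by simp [hmem], C, by simp [hmem], ?_⟩ hthree
      grind

/-- If `Y` cannot carry all pieces at once, some `v ∈ Y` touches at most two of the parts around it.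
If `v` touches at most one piece, the others are merged; if it touches two pieces and not the
outside, `v` is forgotten above these two and the others are joined in without it. -/
theorem exists_slimDerivable (h : IsFullBag G S k Y l) (hy : y ∈ Y)
    (hnbr : G.neighborSet y ⊆ Y ∪ listUnion l) : ∃ z ∈ Y, G.neighborSet z ⊆ Y ∪ listUnion l ∧
      SlimDerivable G S k (Y \ {z}) (insert z (listUnion l)) := by
  by_cases htouch : l.length ≤ 2 ∨ TouchesThree G S Y ((Y ∪ listUnion l)ᶜ :: l)
  · exact ⟨y, hy, hnbr, h.slimDerivable_of_touchesThree hy hnbr htouch⟩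
  rw [not_or, not_le] at htouch
  obtain ⟨v, hv, ⟨A, l', hl', hperm, hvl⟩ | ⟨A, B, l', hperm, hvl, hout⟩⟩ :=
    h.exists_perm_of_not_touchesThree htouch.1 htouch.2
  · rw [listUnion_perm hperm] at hnbr ⊢
    exact ⟨y, hy, hnbr, (h.perm hperm).slimDerivable_of_touches_one hl' hv hvl hy hnbr⟩
  · rw [listUnion_perm hperm] at hout ⊢
    have hvnbr := (h.perm hperm).neighborSet_subset_of_touches_two hv hvl hout
    refine ⟨v, hv, hvnbr.trans ?_, (h.perm hperm).slimDerivable_of_touches_two hv hvl hvnbr⟩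
    simp only [listUnion_cons, listUnion_nil]
    grind

end IsFullBag

end FullBag

/-! ### Splitting connected parts -/

section Splitting

variable {V : Type} {G : SimpleGraph V} {S U C C' Y : Set V} {k : ℕ} {x y : V}

theorem Derivable.compl_of_isComponent [Finite V] {m : ℕ} (h : Derivable G m Y (U \ Y))
    (hU : G.nbhdSet U ⊆ ∅) (hYU : Y ⊆ U) (hC : IsComponent G (U \ Y) C) :
    Derivable G m (G.nbhdSet C) (U \ (G.nbhdSet C ∪ C)) := by
  have hNY := hC.nbhdSet_subset h.nbhdSet_subset
  have hCU := hC.subset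
  have hnbr := nbhdSet_subset_iff.1 h.nbhdSet_subset
  have hC' := hC.mem_of_adj
  have hrest : Derivable G m Y ((U \ Y) \ C) := by
    refine h.restrict subset_rfl Set.sdiff_subset (nbhdSet_subset_iff.2 fun u hu v huv => ?_)
    have := huv.symm
    grind
  have hsplit : U \ (G.nbhdSet C ∪ C) = (U \ Y) \ C ∪ Y \ G.nbhdSet C := by grind
  rw [hsplit]
  refine Derivable.isDecompositionRel.forget_all hrest hNY fun y hy u hyu => ?_
  have huU := nbhdSet_subset_iff.1 hU y (hYU hy.1) u hyu
  have huC : u ∉ C := fun huC => hy.2 ⟨fun hyC => (hCU hyC).2 hy.1, u, huC, hyu.symm⟩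
  grind

/-- The part `C` of a decomposition of `G[U]` that is to be decomposed below its neighbourhood; the
rest of `U` is decomposed on the other side of the neighbourhood and is attached to all of it. -/
structure IsPiece (G : SimpleGraph V) (k : ℕ) (U C : Set V) : Prop where
  connected : (G.induce C).Connected
  subset : C ⊆ U
  derivable : Derivable G (k + 1) (G.nbhdSet C) C
  derivable_rest : Derivable G (k + 1) (G.nbhdSet C) (U \ (G.nbhdSet C ∪ C))
  exists_adj : ∀ x ∈ G.nbhdSet C, ∃ r ∈ U \ (G.nbhdSet C ∪ C), G.Adj x r

/-- A bag `Y` at which a decomposition of `C` stops growing: what is left of `C` falls apart or no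
longer sees all of `Y`. -/
structure IsSplitBag (G : SimpleGraph V) (k : ℕ) (C Y : Set V) : Prop where
  nbhdSet_subset : G.nbhdSet C ⊆ Y
  subset : Y ⊆ G.nbhdSet C ∪ C
  derivable : Derivable G (k + 1) Y (C \ Y)
  not_subset_nbhdSet : (G.induce (C \ Y)).Connected → ¬Y ⊆ G.nbhdSet (C \ Y)

theorem IsPiece.exists_isSplitBag [Finite V] (hC : IsPiece G k U C) :
    ∃ Y, IsSplitBag G k C Y := by
  have hsdiff : C \ G.nbhdSet C = C := disjoint_nbhdSet.symm.sdiff_eq_left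
  obtain ⟨Y, ⟨hNY, hYC, hY⟩, hmax⟩ := Set.exists_max_image
    {Y | G.nbhdSet C ⊆ Y ∧ Y ⊆ G.nbhdSet C ∪ C ∧ Derivable G (k + 1) Y (C \ Y)} Set.ncard
    (Set.toFinite _)
    ⟨G.nbhdSet C, subset_rfl, Set.subset_union_left, by rw [hsdiff]; exact hC.derivable⟩
  refine ⟨Y, hNY, hYC, hY, fun hconn hsub => ?_⟩
  obtain ⟨w, hw, hder⟩ := hY.exists_forget hconn hsub
  rw [Set.sdiff_sdiff, Set.union_singleton] at hder
  have hle := hmax (insert w Y) ⟨hNY.trans (Set.subset_insert w Y),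
    Set.insert_subset (Or.inr hw.1) hYC, hder⟩
  rw [Set.ncard_insert_of_notMem hw.2] at hle
  omega

namespace IsSplitBag

theorem exists_mem (hY : IsSplitBag G k C Y) (hC : IsPiece G k U C) : ∃ y ∈ Y, y ∈ C := by
  by_contra! hYC
  have hdiff : C \ Y = C := (Set.disjoint_left.2 hYC).symm.sdiff_eq_left
  refine hY.not_subset_nbhdSet (by rw [hdiff]; exact hC.connected) fun y hy => ?_
  rw [hdiff]
  exact (hY.subset hy).resolve_right (hYC y hy)

theorem nbhdSet_subset_of_isComponent (hY : IsSplitBag G k C Y)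
    (hC' : IsComponent G (C \ Y) C') : G.nbhdSet C' ⊆ Y :=
  hC'.nbhdSet_subset hY.derivable.nbhdSet_subset

theorem ncard_nbhdSet_le [Finite V] (hY : IsSplitBag G k C Y)
    (hC' : IsComponent G (C \ Y) C') : (G.nbhdSet C').ncard ≤ k := by
  have hsub := hY.nbhdSet_subset_of_isComponent hC'
  obtain hcard | hcard := hY.derivable.ncard_le.lt_or_eq
  · exact (Set.ncard_le_ncard hsub).trans (Nat.lt_succ_iff.1 hcard)
  · obtain ⟨y, hy, hyC'⟩ := (hY.derivable.restrict subset_rfl hC'.subset hsub)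
      |>.exists_mem_notMem_nbhdSet hC'.connected hcard.ge
    have := Set.ncard_le_ncard (Set.subset_sdiff_singleton hsub hyC')
    rw [Set.ncard_sdiff_singleton_of_mem hy] at this
    omega

theorem neighborSet_subset (hY : IsSplitBag G k C Y) (hy : y ∈ C) :
    G.neighborSet y ⊆ Y ∪ C \ Y := by
  intro u hu
  have := nbhdSet_subset_iff.1 hY.nbhdSet_subset y hy u hu
  grind

theorem subset_of_isPiece (hY : IsSplitBag G k C Y) (hU : G.nbhdSet U ⊆ ∅)
    (hC : IsPiece G k U C) : Y ⊆ U := by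
  intro y hy
  obtain ⟨-, c, hc, hcy⟩ | hyC := hY.subset hy
  · exact (nbhdSet_subset_iff.1 hU c (hC.subset hc) y hcy).resolve_left (by simp)
  · exact hC.subset hyC

theorem derivable_compl [Finite V] (hY : IsSplitBag G k C Y) (hC : IsPiece G k U C) :
    Derivable G (k + 1) Y (U \ Y) := by
  have hNY := hY.nbhdSet_subset
  have hYC := hY.subset
  have hCU := hC.subset
  have hrest : Derivable G (k + 1) Y (U \ (G.nbhdSet C ∪ C)) :=
    hC.derivable_rest.change_bag (hC.derivable_rest.nbhdSet_subset.trans hNY) (by grind)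
      hY.derivable.ncard_le
  have hsplit : U \ Y = U \ (G.nbhdSet C ∪ C) ∪ C \ Y := by grind
  rw [hsplit]
  exact hrest.join _ _ _ (by grind) hY.derivable

theorem isComponent (hY : IsSplitBag G k C Y) (hCU : C ⊆ U) (hC' : IsComponent G (C \ Y) C') :
    IsComponent G (U \ Y) C' where
  subset := hC'.subset.trans (Set.sdiff_subset_sdiff_left hCU)
  connected := hC'.connected
  mem_of_adj u hu v hv huv :=
    (nbhdSet_subset_iff.1 (hY.nbhdSet_subset_of_isComponent hC') u hu v huv).resolve_left hv.2

theorem sdiff_singleton (hY : IsSplitBag G k C Y) (hC' : IsComponent G (C \ Y) C')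
    (hxY : x ∈ Y) (hxC : x ∈ C) (hx : x ∈ G.nbhdSet C')
    (hnbr : G.neighborSet x ⊆ G.nbhdSet C' ∪ C') : IsSplitBag G k C (Y \ {x}) := by
  have hNC : Disjoint (G.nbhdSet C) C := disjoint_nbhdSet
  have hNY := hY.nbhdSet_subset
  have hNY' := hY.nbhdSet_subset_of_isComponent hC'
  have hYC := hY.subset
  have hsub := hC'.subset
  have hinsert : C \ (Y \ {x}) = insert x (C \ Y) := by grind
  refine ⟨by grind, by grind, ?_, ?_⟩
  · rw [hinsert]
    have hYx : insert x (Y \ {x}) = Y := Set.insert_sdiff_self_of_mem hxY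
    refine .forget _ _ x (by simp) (by simp [hxY]) (fun u hu => ?_) (hYx.symm ▸ hY.derivable)
    have hux : u ≠ x := (G.ne_of_adj hu).symm
    have := hnbr hu
    grind
  rw [hinsert]
  intro hconn hsees
  have hwhole : insert x C' = insert x (C \ Y) := by
    refine eq_of_connected_of_adj_closed hconn (Set.insert_nonempty x C')
      (Set.insert_subset_insert hsub) ?_
    rintro u (rfl | hu) v (rfl | hv) huv
    · exact Set.mem_insert _ _
    · exact Or.inr ((hnbr huv).resolve_left fun hvN => hv.2 (hNY' hvN))
    · exact Set.mem_insert _ _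
    · exact Or.inr (hC'.mem_of_adj u hu v hv huv)
  have hCC' : C \ Y = C' := by grind
  rw [hCC'] at hsees
  refine hY.not_subset_nbhdSet (hCC' ▸ hC'.connected) (hCC' ▸ fun y hy => ?_)
  obtain rfl | hyx := eq_or_ne y x
  · exact hx
  obtain ⟨-, c, rfl | hc, hcy⟩ := hsees ⟨hy, hyx⟩
  · exact (hnbr hcy).resolve_right fun hyC' => (hsub hyC').2 hy
  · exact ⟨fun hyC' => (hsub hyC').2 hy, c, hc, hcy⟩

theorem isPiece [Finite V] (hY : IsSplitBag G k C Y) (hU : G.nbhdSet U ⊆ ∅)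
    (hC : IsPiece G k U C) (hmin : ∀ Y', IsSplitBag G k C Y' → Y.ncard ≤ Y'.ncard)
    (hC' : IsComponent G (C \ Y) C') : IsPiece G k U C' where
  connected := hC'.connected
  subset := hC'.subset.trans (Set.sdiff_subset.trans hC.subset)
  derivable := hY.derivable.restrict (hY.nbhdSet_subset_of_isComponent hC') hC'.subset subset_rfl
  derivable_rest := (hY.derivable_compl hC).compl_of_isComponent hU
    (hY.subset_of_isPiece hU hC) (hY.isComponent hC.subset hC')
  exists_adj x hx := by
    have hxY := hY.nbhdSet_subset_of_isComponent hC' hx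
    have hYC := hY.subset
    have hCC' := hC'.subset
    have hNY := hY.nbhdSet_subset_of_isComponent hC'
    by_cases hxC : x ∈ C
    · by_contra! hnone
      have hnbr : G.neighborSet x ⊆ G.nbhdSet C' ∪ C' := by
        intro u hu
        by_contra hu'
        have huU := (nbhdSet_subset_iff.1 hU x (hC.subset hxC) u hu).resolve_left (by simp)
        exact hnone u ⟨huU, hu'⟩ hu
      have := hmin _ (hY.sdiff_singleton hC' hxY hxC hx hnbr)
      have := Set.ncard_sdiff_singleton_lt_of_mem hxY
      omega
    · obtain ⟨r, hr, hxr⟩ := hC.exists_adj x ((hY.subset hxY).resolve_right hxC)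
      exact ⟨r, by grind, hxr⟩

end IsSplitBag

end Splitting

section Reduced

variable {V : Type} {G : SimpleGraph V} {S U C C' Y : Set V} {k : ℕ} {x y : V}

/-- No bag of a decomposition of `G[U]` of width at most `k` separates a part of `U` from `S`. -/
def IsReduced (G : SimpleGraph V) (S : Set V) (k : ℕ) (U : Set V) : Prop :=
  ∀ X ⊆ U, Derivable G (k + 1) X (U \ X) → ∀ C, IsComponent G (U \ X) C → (C ∩ S).Nonempty

namespace IsSplitBag

theorem slimDerivable_of_insert [Finite V] (hY : IsSplitBag G k C Y) (hy : y ∈ C)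
    (h : SlimDerivable G S k (Y \ {y}) (insert y (C \ Y))) :
    SlimDerivable G S k (G.nbhdSet C) C := by
  have hNC : Disjoint (G.nbhdSet C) C := disjoint_nbhdSet
  have hNY := hY.nbhdSet_subset
  have hYC := hY.subset
  have hsplit : insert y (C \ Y) ∪ (Y \ {y}) \ G.nbhdSet C = C := by grind
  have hforget := SlimDerivable.isDecompositionRel.forget_all h (Z := G.nbhdSet C) (by grind)
    fun x hx => (hY.neighborSet_subset (y := x) (by grind)).trans (by grind)
  rwa [hsplit] at hforget

theorem slimDerivable_of_ncard_le [Finite V] (hY : IsSplitBag G k C Y) (hcard : Y.ncard ≤ k)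
    (h : ∀ C', IsComponent G (C \ Y) C' → SlimDerivable G S k (G.nbhdSet C') C') :
    SlimDerivable G S k (G.nbhdSet C) C := by
  have hNC : Disjoint (G.nbhdSet C) C := disjoint_nbhdSet
  have hYC := hY.subset
  have hrel := SlimDerivable.isDecompositionRel (G := G) (S := S) (k := k)
  have hbelow : SlimDerivable G S k Y (C \ Y) := hrel.join_components hcard fun C' hC' =>
    hrel.introduce_all (h C' hC') (hY.nbhdSet_subset_of_isComponent hC')
      (Set.disjoint_sdiff_right.mono_right hC'.subset) hcard
  have hsplit : C \ Y ∪ Y \ G.nbhdSet C = C := by grind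
  have hforget := hrel.forget_all hbelow hY.nbhdSet_subset
    fun x hx => hY.neighborSet_subset ((hYC hx.1).resolve_left hx.2)
  rwa [hsplit] at hforget

theorem exists_isFullBag [Finite V] (hY : IsSplitBag G k C Y) (hU : G.nbhdSet U ⊆ ∅)
    (hS : IsReduced G S k U) (hC : IsPiece G k U C) (hcard : Y.ncard = k + 1)
    (h : ∀ C', IsComponent G (C \ Y) C' → SlimDerivable G S k (G.nbhdSet C') C') :
    ∃ l, IsFullBag G S k Y l ∧ listUnion l = C \ Y := by
  obtain ⟨l, hl, hdisj, hlC⟩ := exists_list_isComponent G (C \ Y)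
  have hYC : ∀ C' ∈ l, IsComponent G (C \ Y) C' := fun C' => (hl C').1
  have hYdisj : ∀ C' ∈ l, Disjoint Y C' := fun C' hC' =>
    Set.disjoint_sdiff_right.mono_right (hYC C' hC').subset
  have hmeets := hS Y (hY.subset_of_isPiece hU hC) (hY.derivable_compl hC)
  refine ⟨l, ⟨hcard, hdisj, hYdisj, ?_, fun C' hC' => ?_, fun C' hC' y hy hyN => ?_,
    fun v hv u hu hvu => ?_⟩, hlC⟩
  · exact fun C' hC' => hmeets C' (hY.isComponent hC.subset (hYC C' hC'))
  · by_contra! hall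
    have := Set.ncard_le_ncard hall
    have := hY.ncard_nbhdSet_le (hYC C' hC')
    omega
  · refine SlimDerivable.isDecompositionRel.introduce_all (h C' (hYC C' hC'))
      (Set.subset_sdiff_singleton (hY.nbhdSet_subset_of_isComponent (hYC C' hC')) hyN)
      ((hYdisj C' hC').mono_left Set.sdiff_subset) ?_
    rw [Set.ncard_sdiff_singleton_of_mem hy, hcard, Nat.add_sub_cancel]
  · have huU := (nbhdSet_subset_iff.1 hU v (hY.subset_of_isPiece hU hC hv) u hvu).resolve_left id
    obtain ⟨D, hD, huD⟩ := exists_isComponent_mem (G := G) (show u ∈ U \ Y from ⟨huU, hu⟩)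
    obtain ⟨s, hsD, hsS⟩ := hmeets D hD
    exact ⟨s, hsS, reachableIn_mono (fun d hd => (hD.subset hd).2)
      (reachableIn_of_connected hD.connected huD hsD)⟩

theorem slimDerivable [Finite V] (hY : IsSplitBag G k C Y) (hU : G.nbhdSet U ⊆ ∅)
    (hS : IsReduced G S k U) (hC : IsPiece G k U C)
    (h : ∀ C', IsComponent G (C \ Y) C' → SlimDerivable G S k (G.nbhdSet C') C') :
    SlimDerivable G S k (G.nbhdSet C) C := by
  obtain hcard | hcard := hY.derivable.ncard_le.lt_or_eq
  · exact hY.slimDerivable_of_ncard_le (Nat.lt_succ_iff.1 hcard) h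
  obtain ⟨l, hfull, hlC⟩ := hY.exists_isFullBag hU hS hC hcard h
  obtain ⟨y, hyY, hyC⟩ := hY.exists_mem hC
  obtain ⟨z, hzY, hznbr, hz⟩ := hfull.exists_slimDerivable hyY
    (by rw [hlC]; exact hY.neighborSet_subset hyC)
  rw [hlC] at hznbr hz
  refine hY.slimDerivable_of_insert ?_ hz
  by_contra hzC
  obtain ⟨r, hr, hzr⟩ := hC.exists_adj z ((hY.subset hzY).resolve_right hzC)
  have hr' : r ∈ Y ∪ C \ Y := hznbr hzr
  have hYC := hY.subset
  grind

end IsSplitBag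

theorem IsPiece.slimDerivable [Finite V] (hC : IsPiece G k U C) (hU : G.nbhdSet U ⊆ ∅)
    (hS : IsReduced G S k U) : SlimDerivable G S k (G.nbhdSet C) C := by
  induction hn : C.ncard using Nat.strong_induction_on generalizing C with
  | _ n ih =>
  obtain ⟨Y, hY, hmin⟩ := Set.exists_min_image {Y | IsSplitBag G k C Y} Set.ncard (Set.toFinite _)
    hC.exists_isSplitBag
  refine IsSplitBag.slimDerivable hY hU hS hC fun C' hC' => ?_
  obtain ⟨y, hyY, hyC⟩ := IsSplitBag.exists_mem hY hC
  refine ih C'.ncard ?_ (IsSplitBag.isPiece hY hU hC hmin hC') rfl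
  rw [← hn]
  exact Set.ncard_lt_ncard ⟨hC'.subset.trans Set.sdiff_subset,
    fun hCC' => (hC'.subset (hCC' hyC)).2 hyY⟩

theorem IsReduced.slimDerivable [Finite V] (hS : IsReduced G S k U)
    (h : Derivable G (k + 1) ∅ U) : SlimDerivable G S k ∅ U := by
  have hU := h.nbhdSet_subset
  refine SlimDerivable.isDecompositionRel.join_components (by simp) fun C hC => ?_
  have hN : G.nbhdSet C = ∅ := Set.subset_empty_iff.1 (hC.nbhdSet_subset hU)
  have hpiece : IsPiece G k U C :=
    { connected := hC.connected
      subset := hC.subset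
      derivable := by
        rw [hN]
        exact h.restrict subset_rfl hC.subset hN.subset
      derivable_rest := Derivable.compl_of_isComponent (Y := ∅) (by simpa using h) hU
        (Set.empty_subset U) (by simpa using hC)
      exists_adj := by simp [hN] }
  exact hN ▸ hpiece.slimDerivable hU hS

end Reduced

/-! ### Cutting off parts that avoid `S` -/

section Torso

variable {V : Type} {G : SimpleGraph V} {S A B C U W X Y Z : Set V} {k : ℕ}
  {l l' lS lN : List (Set V)} {x : Set V → V} {v w : V}

/-- The graph that is decomposed in place of `G` when the connected part `C` is cut off: the
vertices of `C` become isolated and the neighbourhood of `C` becomes a clique. -/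
def torso (G : SimpleGraph V) (C : Set V) : SimpleGraph V where
  Adj u v := u ≠ v ∧ u ∉ C ∧ v ∉ C ∧ (G.Adj u v ∨ u ∈ G.nbhdSet C ∧ v ∈ G.nbhdSet C)
  symm := ⟨fun _ _ ⟨hne, hu, hv, h⟩ => ⟨hne.symm, hv, hu, h.imp .symm .symm⟩⟩
  loopless := ⟨fun _ h => h.1 rfl⟩

/-- A connected part `C` avoiding `S` that can be decomposed below its neighbourhood. -/
structure IsDetachable (G : SimpleGraph V) (S : Set V) (k : ℕ) (C : Set V) : Prop where
  connected : (G.induce C).Connected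
  disjoint : Disjoint C S
  derivable : Derivable G (k + 1) (G.nbhdSet C) C

/-- The set `W` together with `C` if `W` meets the neighbourhood of `C`; as this neighbourhood is a
clique of the torso, at most one of several separated sets receives `C`. -/
def attach (G : SimpleGraph V) (C W : Set V) : Set V :=
  {v | v ∈ W ∨ v ∈ C ∧ (G.nbhdSet C ∩ W).Nonempty}

theorem subset_attach : W ⊆ attach G C W := fun _ => Or.inl

theorem attach_subset : attach G C W ⊆ W ∪ C := fun _ hv => hv.imp_right And.left

theorem attach_of_nonempty (h : (G.nbhdSet C ∩ W).Nonempty) : attach G C W = W ∪ C := by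
  ext v
  simp [attach, h]

theorem attach_of_disjoint (h : Disjoint (G.nbhdSet C) W) : attach G C W = W := by
  simp [attach, h.inter_eq]

theorem attach_sdiff (hW : Disjoint C W) : attach G C W \ C = W := by
  have := attach_subset (G := G) (C := C) (W := W)
  have := subset_attach (G := G) (C := C) (W := W)
  grind

theorem attach_union : attach G C (A ∪ B) = attach G C A ∪ attach G C B := by
  ext v
  simp only [attach, Set.inter_union_distrib_left, Set.union_nonempty, Set.mem_ofPred_eq,
    Set.mem_union]
  tauto

theorem attach_listUnion : attach G C (listUnion l) = listUnion (l.map (attach G C)) := by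
  induction l with
  | nil => simp [attach]
  | cons A l ih => simp [attach_union, ih]

theorem attach_insert (h : w ∈ G.nbhdSet C → (G.nbhdSet C ∩ W).Nonempty) :
    attach G C (insert w W) = insert w (attach G C W) := by
  ext v
  simp only [attach, Set.mem_ofPred_eq, Set.mem_insert_iff]
  constructor
  · rintro ((rfl | hv) | ⟨hv, q, hq, rfl | hqW⟩)
    · exact Or.inl rfl
    · exact Or.inr (Or.inl hv)
    · exact Or.inr (Or.inr ⟨hv, h hq⟩)
    · exact Or.inr (Or.inr ⟨hv, q, hq, hqW⟩)
  · rintro (rfl | hv | ⟨hv, q, hq, hqW⟩)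
    · exact Or.inl (Or.inl rfl)
    · exact Or.inl (Or.inr hv)
    · exact Or.inr ⟨hv, q, hq, Or.inr hqW⟩

theorem nbhdSet_subset_of_torso (hw : w ∈ G.nbhdSet C) (hnbr : (torso G C).neighborSet w ⊆ Z)
    (hwZ : w ∈ Z) : G.nbhdSet C ⊆ Z := by
  intro q hq
  obtain rfl | hne := eq_or_ne w q
  · exact hwZ
  · exact hnbr ⟨hne, hw.1, hq.1, Or.inr ⟨hw, hq⟩⟩

theorem neighborSet_subset_of_torso (hwC : w ∉ C) (hnbr : (torso G C).neighborSet w ⊆ Z)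
    (hC : w ∈ G.nbhdSet C → C ⊆ Z) : G.neighborSet w ⊆ Z := by
  intro u hu
  by_cases huC : u ∈ C
  · exact hC ⟨hwC, u, huC, hu.symm⟩ huC
  · exact hnbr ⟨G.ne_of_adj hu, hwC, huC, Or.inl hu⟩

theorem disjoint_attach (hA : SlimDerivable (torso G C) S k X A) (hXB : Disjoint X B)
    (hAB : Disjoint A B) (hCA : Disjoint C A) (hCB : Disjoint C B) :
    Disjoint (attach G C A) (attach G C B) := by
  rw [Set.disjoint_left]
  rintro v (hvA | ⟨hvC, q, hqC, hqA⟩) (hvB | ⟨hvC', q', hqC', hqB⟩)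
  · exact Set.disjoint_left.1 hAB hvA hvB
  · exact Set.disjoint_left.1 hCA hvC' hvA
  · exact Set.disjoint_left.1 hCB hvC hvB
  · have hclique := nbhdSet_subset_of_torso hqC (hA.neighborSet_subset q hqA) (Or.inr hqA)
    exact (hclique hqC').elim (Set.disjoint_right.1 hXB hqB) (Set.disjoint_right.1 hAB hqB)

namespace IsDetachable

theorem reachableIn (hC : IsDetachable G S k C) (hY : Disjoint C Y) {u s : V}
    (h : (torso G C).ReachableIn Yᶜ u s) : G.ReachableIn Yᶜ u s := by
  refine reachableIn_induction (P := G.ReachableIn Yᶜ u) h ?_ fun a ha b hb hab hua => ?_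
  · obtain ⟨p, hp⟩ := h
    exact reachableIn_refl (hp u p.start_mem_support)
  refine reachableIn_trans hua ?_
  obtain ⟨-, -, -, hab | ⟨⟨-, c, hc, hca⟩, -, c', hc', hcb⟩⟩ := hab
  · exact reachableIn_of_adj ha hb hab
  · have hCY : C ⊆ Yᶜ := hY.subset_compl_right
    exact reachableIn_trans (reachableIn_of_adj ha (hCY hc) hca.symm) <|
      reachableIn_trans (reachableIn_mono hCY (reachableIn_of_connected hC.connected hc hc')) <|
      reachableIn_of_adj (hCY hc') hb hcb

theorem touches (hC : IsDetachable G S k C) (hY : Disjoint C Y)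
    (h : Touches (torso G C) S Y v A) (hAB : A \ C ⊆ B)
    (hCB : ∀ u ∈ A \ Y, u ∈ G.nbhdSet C → C ⊆ B) : Touches G S Y v B := by
  obtain ⟨u, huA, ⟨-, -, huC, hadj⟩, huY, s, hs, hus⟩ := h
  have hus' := hC.reachableIn hY hus
  obtain hvu | ⟨⟨-, c, hc, hcv⟩, hu⟩ := hadj
  · exact ⟨u, hAB ⟨huA, huC⟩, hvu, huY, s, hs, hus'⟩
  · have hCY : C ⊆ Yᶜ := hY.subset_compl_right
    obtain ⟨c', hc', hcu⟩ := hu.2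
    refine ⟨c, hCB u ⟨huA, huY⟩ hu hc, hcv.symm, hCY hc, s, hs, ?_⟩
    exact reachableIn_trans
      (reachableIn_mono hCY (reachableIn_of_connected hC.connected hc hc'))
      (reachableIn_trans (reachableIn_of_adj (hCY hc') huY hcu) hus')

theorem touchesThree (hC : IsDetachable G S k C) (hY : Disjoint C Y)
    (h : TouchesThree (torso G C) S Y l) (hl : l.Pairwise Disjoint)
    (hl' : ∀ A ∈ l, ∃ B ∈ l', B \ C = A \ C ∧ ∀ u ∈ A \ Y, u ∈ G.nbhdSet C → C ⊆ B) :
    TouchesThree G S Y l' := by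
  intro v hv
  choose! f hf using hl'
  have hne : ∀ A ∈ l, ∀ B ∈ l, A ≠ B → Touches (torso G C) S Y v A → f A ≠ f B := by
    rintro A hA B hB hAB ⟨u, huA, hvu, -⟩ hfAB
    have huB : u ∈ f B \ C := by
      rw [← hfAB, (hf A hA).2.1]
      exact ⟨huA, hvu.2.2.1⟩
    rw [(hf B hB).2.1] at huB
    exact hAB (eq_of_mem_of_pairwise_disjoint hl hA hB huA huB.1)
  have htouches : ∀ A ∈ l, Touches (torso G C) S Y v A → Touches G S Y v (f A) := fun A hA h =>
    hC.touches hY h ((hf A hA).2.1.symm.subset.trans Set.sdiff_subset) (hf A hA).2.2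
  obtain ⟨A₁, h₁, A₂, h₂, A₃, h₃, hne₁₂, hne₁₃, hne₂₃, ht₁, ht₂, ht₃⟩ := h v hv
  exact ⟨f A₁, (hf A₁ h₁).1, f A₂, (hf A₂ h₂).1, f A₃, (hf A₃ h₃).1, hne A₁ h₁ A₂ h₂ hne₁₂ ht₁,
    hne A₁ h₁ A₃ h₃ hne₁₃ ht₁, hne A₂ h₂ A₃ h₃ hne₂₃ ht₂, htouches A₁ h₁ ht₁,
    htouches A₂ h₂ ht₂, htouches A₃ h₃ ht₃⟩

theorem slimDerivable [Finite V] (hC : IsDetachable G S k C) (hCX : G.nbhdSet C ⊆ X)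
    (hX : Disjoint C X) (hXk : X.ncard ≤ k) : SlimDerivable G S k X C :=
  .of_disjoint (hC.derivable.change_bag hCX hX.symm (hXk.trans k.le_succ)) hC.disjoint hXk

theorem isBranching_map_attach (hC : IsDetachable G S k C) (hY : Disjoint C Y)
    (hB : IsBranching S k Y lS lN x)
    (hW : ∀ W ∈ lS ++ lN, SlimDerivable (torso G C) S k (Y \ {x W}) W)
    (hl : Disjoint C (listUnion (lS ++ lN))) :
    IsBranching S k Y (lS.map (attach G C)) (lN.map (attach G C)) (fun W => x (W \ C)) := by
  have hlC : ∀ W ∈ lS ++ lN, Disjoint C W := disjoint_listUnion_right.1 hl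
  have hsdiff : ∀ W ∈ lS ++ lN, attach G C W \ C = W := fun W hW => attach_sdiff (hlC W hW)
  constructor
  case ncard_eq => exact hB.ncard_eq
  all_goals simp only [← List.map_append, List.pairwise_map, List.forall_mem_map]
  case pairwise =>
    refine hB.pairwise.imp_of_mem fun {A B} hA hB' hAB => disjoint_attach (hW A hA)
      ((hB.disjoint B hB').mono_left Set.sdiff_subset) hAB (hlC A hA) (hlC B hB')
  case nonempty => exact fun W hW => (hB.nonempty W hW).mono subset_attach
  case disjoint =>
    exact fun W hW => ((hB.disjoint W hW).union_right hY.symm).mono_right attach_subset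
  case mem =>
    intro W hW
    rw [hsdiff W hW]
    exact hB.mem W hW
  case meets =>
    exact fun W hW => (hB.meets W hW).mono (Set.inter_subset_inter_left S subset_attach)
  case misses =>
    exact fun W hW => ((hB.misses W hW).union_left hC.disjoint).mono_left attach_subset

theorem attach_forget [Finite V] (hC : IsDetachable G S k C) (hX : Disjoint C X)
    (hW : Disjoint C (insert w W)) (hwX : w ∉ X) (hwW : w ∉ W)
    (hw : (torso G C).neighborSet w ⊆ X ∪ W)
    (h : SlimDerivable G S k (insert w X) (attach G C W)) :
    SlimDerivable G S k X (attach G C (insert w W)) := by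
  have hrel := SlimDerivable.isDecompositionRel (G := G) (S := S) (k := k)
  rw [Set.disjoint_insert_right] at hW
  by_cases hmeet : w ∈ G.nbhdSet C → (G.nbhdSet C ∩ W).Nonempty
  · rw [attach_insert hmeet]
    refine .forget _ _ w hwX (fun hw' => ?_) (neighborSet_subset_of_torso hW.1 ?_ fun hwC => ?_) h
    · exact (attach_subset hw').elim hwW hW.1
    · exact hw.trans (Set.union_subset_union_right X subset_attach)
    · rw [attach_of_nonempty (hmeet hwC)]
      grind
  · push Not at hmeet
    have hwC := hmeet.1
    have hdisj : Disjoint (G.nbhdSet C) W := Set.disjoint_iff_inter_eq_empty.2 hmeet.2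
    rw [attach_of_nonempty ⟨w, hwC, Set.mem_insert w W⟩, Set.insert_union]
    rw [attach_of_disjoint hdisj] at h
    have hCX : G.nbhdSet C ⊆ insert w X := hdisj.subset_left_of_subset_union <|
      nbhdSet_subset_of_torso hwC (hw.trans (by grind)) (by grind)
    have hder := hC.slimDerivable hCX (Set.disjoint_insert_right.2 ⟨hW.1, hX⟩) h.ncard_le
    refine .forget _ _ w hwX (by grind) (neighborSet_subset_of_torso hW.1 (by grind) (by grind))
      (hrel.join _ _ _ hW.2.symm h hder)

theorem touchesThree_map_attach (hC : IsDetachable G S k C) (hYC : Disjoint C Y)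
    (h : TouchesThree (torso G C) S Y ((Y ∪ W)ᶜ :: lS)) (hl : lS.Pairwise Disjoint)
    (hlW : ∀ A ∈ lS, A ⊆ W) (hWC : Disjoint C W) (hWZ : W ⊆ Z) (hZ : Z ⊆ W ∪ C)
    (hCZ : ∀ u ∈ G.nbhdSet C, u ∉ Y → u ∉ W → Disjoint C Z) :
    TouchesThree G S Y ((Y ∪ Z)ᶜ :: lS.map (attach G C)) := by
  refine hC.touchesThree hYC h ?_ ?_
  · exact List.pairwise_cons.2 ⟨fun A hA => disjoint_compl_left.mono_right
      ((hlW A hA).trans Set.subset_union_right), hl⟩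
  rw [List.forall_mem_cons]
  constructor
  · refine ⟨_, List.mem_cons_self, by grind, fun u hu huC => ?_⟩
    have := hCZ u huC (by grind) (by grind)
    grind
  · intro A hA
    refine ⟨_, List.mem_cons_of_mem _ (List.mem_map_of_mem hA), ?_, fun u hu huC => ?_⟩
    · rw [attach_sdiff (hWC.mono_right (hlW A hA)), (hWC.mono_right (hlW A hA)).symm.sdiff_eq_left]
    · rw [attach_of_nonempty ⟨u, huC, hu.1⟩]
      exact Set.subset_union_right

theorem exists_isBranching_concat (hC : IsDetachable G S k C) (hY : Disjoint C Y)
    (hB : IsBranching S k Y lS lN x) (hl : Disjoint C (listUnion (lS ++ lN))) (hv : v ∈ Y) :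
    ∃ x' : Set V → V, IsBranching S k Y lS (lN ++ [C]) x' ∧ x' C = v ∧
      ∀ W ∈ lS ++ lN, x' W = x W := by
  classical
  have hlC := disjoint_listUnion_right.1 hl
  have hne : ∀ W ∈ lS ++ lN, W ≠ C := by
    rintro W hW rfl
    exact (hB.nonempty W hW).ne_empty (disjoint_self.1 (hlC W hW))
  have hx : ∀ W ∈ lS ++ lN, Function.update x C v W = x W := fun W hW =>
    Function.update_of_ne (hne W hW) v x
  refine ⟨Function.update x C v, ?_, Function.update_self .., hx⟩
  constructor
  case ncard_eq => exact hB.ncard_eq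
  case meets => exact hB.meets
  all_goals simp only [← List.append_assoc, List.forall_mem_append, List.forall_mem_singleton]
  case pairwise =>
    exact List.pairwise_append.2 ⟨hB.pairwise, List.pairwise_singleton _ C,
      fun W hW B hB => List.mem_singleton.1 hB ▸ (hlC W hW).symm⟩
  case nonempty => exact ⟨List.forall_mem_append.1 hB.nonempty, nonempty_of_connected hC.connected⟩
  case disjoint => exact ⟨List.forall_mem_append.1 hB.disjoint, hY.symm⟩
  case mem =>
    rw [Function.update_self, ← List.forall_mem_append]
    exact ⟨fun W hW => (hx W hW).symm ▸ hB.mem W hW, hv⟩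
  case misses => exact ⟨hB.misses, hC.disjoint⟩

theorem exists_slimDerivable [Finite V] (hC : IsDetachable G S k C) (hCY : G.nbhdSet C ⊆ Y)
    (hY : Disjoint C Y) (hYk : Y.ncard = k + 1) : ∃ v ∈ Y, SlimDerivable G S k (Y \ {v}) C := by
  have hYC := hC.derivable.change_bag hCY hY.symm hYk.le
  obtain ⟨v, hv, hvC⟩ := hYC.exists_mem_notMem_nbhdSet hC.connected hYk.ge
  refine ⟨v, hv, hC.slimDerivable (Set.subset_sdiff_singleton hCY hvC)
    (hY.mono_right Set.sdiff_subset) ?_⟩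
  rw [Set.ncard_sdiff_singleton_of_mem hv, hYk, Nat.add_sub_cancel]

theorem attach_full (hC : IsDetachable G S k C) (hwX : w ∉ X) (hX : Disjoint C (insert w X))
    (hB : IsBranching S k (insert w X) lS lN x)
    (hW : ∀ W ∈ lS ++ lN, SlimDerivable (torso G C) S k (insert w X \ {x W}) W)
    (hl : Disjoint C (listUnion (lS ++ lN)))
    (hw : (torso G C).neighborSet w ⊆ X ∪ listUnion (lS ++ lN))
    (htouch : lS.length ≤ 2 ∨ TouchesThree (torso G C) S (insert w X)
      ((insert w X ∪ listUnion (lS ++ lN))ᶜ :: lS))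
    (ih : ∀ W ∈ lS ++ lN, SlimDerivable G S k (insert w X \ {x W}) (attach G C W))
    (hmeet : w ∈ G.nbhdSet C → (G.nbhdSet C ∩ listUnion (lS ++ lN)).Nonempty) :
    SlimDerivable G S k X (attach G C (insert w (listUnion (lS ++ lN)))) := by
  have hlC := disjoint_listUnion_right.1 hl
  have hB' := hC.isBranching_map_attach hX hB hW hl
  have hunion : listUnion (lS.map (attach G C) ++ lN.map (attach G C)) =
      attach G C (listUnion (lS ++ lN)) := by
    rw [attach_listUnion, List.map_append]
  rw [attach_insert hmeet, ← hunion]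
  refine .full X w _ _ _ hwX hB' ?_ ?_ ?_
  · rw [← List.map_append, List.forall_mem_map]
    intro W hW'
    rw [attach_sdiff (hlC W hW')]
    exact ih W hW'
  · rw [hunion]
    refine neighborSet_subset_of_torso (Set.disjoint_right.1 hX (Set.mem_insert w X))
      (hw.trans (Set.union_subset_union_right X subset_attach)) fun hwC => ?_
    rw [attach_of_nonempty (hmeet hwC)]
    exact Set.subset_union_right.trans Set.subset_union_right
  · rw [List.length_map, hunion]
    refine htouch.imp_right fun h => hC.touchesThree_map_attach hX h
      (List.pairwise_append.1 hB.pairwise).1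
      (fun A hA => subset_listUnion (List.mem_append_left lN hA)) hl subset_attach attach_subset
      fun u huC huX hul => ?_
    rw [attach_of_disjoint]
    · exact hl
    refine disjoint_listUnion_right.2 fun W hW' => Set.disjoint_left.2 fun q hqC hqW => ?_
    have hclique := nbhdSet_subset_of_torso hqC ((hW W hW').neighborSet_subset q hqW) (Or.inr hqW)
    exact (hclique huC).elim (fun hu => huX hu.1) fun hu => hul (subset_listUnion hW' hu)

theorem attach_full_of_disjoint [Finite V] (hC : IsDetachable G S k C) (hwX : w ∉ X)
    (hX : Disjoint C (insert w X)) (hB : IsBranching S k (insert w X) lS lN x)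
    (hW : ∀ W ∈ lS ++ lN, SlimDerivable (torso G C) S k (insert w X \ {x W}) W)
    (hl : Disjoint C (listUnion (lS ++ lN)))
    (hw : (torso G C).neighborSet w ⊆ X ∪ listUnion (lS ++ lN))
    (htouch : lS.length ≤ 2 ∨ TouchesThree (torso G C) S (insert w X)
      ((insert w X ∪ listUnion (lS ++ lN))ᶜ :: lS))
    (ih : ∀ W ∈ lS ++ lN, SlimDerivable G S k (insert w X \ {x W}) (attach G C W))
    (hwC : w ∈ G.nbhdSet C) (hdisj : Disjoint (G.nbhdSet C) (listUnion (lS ++ lN))) :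
    SlimDerivable G S k X (attach G C (insert w (listUnion (lS ++ lN)))) := by
  have hlC := disjoint_listUnion_right.1 hl
  have hCX : G.nbhdSet C ⊆ insert w X := hdisj.subset_left_of_subset_union <|
    nbhdSet_subset_of_torso hwC (hw.trans (by grind)) (by grind)
  obtain ⟨v, hv, hvC⟩ := hC.exists_slimDerivable hCX hX hB.ncard_eq
  have hunion : listUnion (lS.map (attach G C) ++ lN.map (attach G C)) = listUnion (lS ++ lN) := by
    rw [← List.map_append, ← attach_listUnion, attach_of_disjoint hdisj]
  obtain ⟨x', hB', hx'C, hx'⟩ := hC.exists_isBranching_concat hX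
    (hC.isBranching_map_attach hX hB hW hl) (hunion ▸ hl) hv
  have hunion' : listUnion (lS.map (attach G C) ++ (lN.map (attach G C) ++ [C])) =
      listUnion (lS ++ lN) ∪ C := by
    rw [← List.append_assoc, listUnion_append, hunion]
    simp
  rw [attach_of_nonempty ⟨w, hwC, Set.mem_insert w _⟩, Set.insert_union, ← hunion']
  refine .full X w _ _ _ hwX hB' ?_ ?_ ?_
  · rw [← List.append_assoc, List.forall_mem_append, List.forall_mem_singleton, hx'C]
    refine ⟨fun W hW' => ?_, hvC⟩
    rw [hx' W hW']
    rw [← List.map_append, List.mem_map] at hW'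
    obtain ⟨A, hA, rfl⟩ := hW'
    rw [attach_sdiff (hlC A hA)]
    exact ih A hA
  · rw [hunion']
    exact neighborSet_subset_of_torso (Set.disjoint_right.1 hX (Set.mem_insert w X))
      (hw.trans (by grind)) fun _ => Set.subset_union_right.trans Set.subset_union_right
  · rw [List.length_map, hunion']
    exact htouch.imp_right fun h => hC.touchesThree_map_attach hX h
      (List.pairwise_append.1 hB.pairwise).1
      (fun A hA => subset_listUnion (List.mem_append_left lN hA)) hl Set.subset_union_left
      subset_rfl fun u huC huX _ => absurd (hCX huC) huX

theorem slimDerivable_attach [Finite V] (hC : IsDetachable G S k C)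
    (h : SlimDerivable (torso G C) S k X W) (hX : Disjoint C X) (hW : Disjoint C W) :
    SlimDerivable G S k X (attach G C W) := by
  induction h with
  | leaf X hXk =>
    rw [attach_of_disjoint (Set.disjoint_empty _)]
    exact .leaf X hXk
  | join X A B _ _ hAB hA hB ihA ihB =>
    rw [Set.disjoint_union_right] at hW
    rw [attach_union]
    exact SlimDerivable.isDecompositionRel.join _ _ _
      (disjoint_attach hA hB.disjoint hAB hW.1 hW.2) (ihA hX hW.1) (ihB hX hW.2)
  | introduce X W v hvX hvW hXk _ ih =>
    refine .introduce X _ v hvX (fun hv => ?_) hXk (ih (hX.mono_right Set.sdiff_subset) hW)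
    exact (attach_subset hv).elim hvW (Set.disjoint_right.1 hX hvX)
  | forget X W w hwX hwW hw _ ih =>
    have hW' := Set.disjoint_insert_right.1 hW
    exact hC.attach_forget hX hW hwX hwW hw (ih (Set.disjoint_insert_right.2 ⟨hW'.1, hX⟩) hW'.2)
  | full X w lS lN x hwX hB hder hw htouch ih =>
    rw [Set.disjoint_insert_right] at hW
    have hwX' : Disjoint C (insert w X) := Set.disjoint_insert_right.2 ⟨hW.1, hX⟩
    have ih' : ∀ W ∈ lS ++ lN, SlimDerivable G S k (insert w X \ {x W}) (attach G C W) :=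
      fun W hW' => ih W hW' (hwX'.mono_right Set.sdiff_subset)
        (disjoint_listUnion_right.1 hW.2 W hW')
    by_cases hmeet : w ∈ G.nbhdSet C → (G.nbhdSet C ∩ listUnion (lS ++ lN)).Nonempty
    · exact hC.attach_full hwX hwX' hB hder hW.2 hw htouch ih' hmeet
    · push Not at hmeet
      exact hC.attach_full_of_disjoint hwX hwX' hB hder hW.2 hw htouch ih' hmeet.1
        (Set.disjoint_iff_inter_eq_empty.2 hmeet.2)

theorem slimDerivable_of_sdiff [Finite V] (hC : IsDetachable G S k C)
    (hCU : C ⊆ U) (hN : G.nbhdSet C ⊆ U) (h : SlimDerivable (torso G C) S k ∅ (U \ C)) :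
    SlimDerivable G S k ∅ U := by
  have hUC : U \ C ∪ C = U := Set.sdiff_union_of_subset hCU
  have hattach := hC.slimDerivable_attach h (Set.disjoint_empty C) Set.disjoint_sdiff_right
  obtain hempty | ⟨q, hq⟩ := (G.nbhdSet C).eq_empty_or_nonempty
  · rw [attach_of_disjoint (by simp [hempty])] at hattach
    rw [← hUC]
    exact SlimDerivable.isDecompositionRel.join _ _ _ Set.disjoint_sdiff_left hattach
      (hC.slimDerivable hempty.subset (Set.disjoint_empty C) (by simp))
  · rwa [attach_of_nonempty (W := U \ C) ⟨q, hq, hN hq, hq.1⟩, hUC] at hattach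

end IsDetachable

theorem Derivable.torso_of_isComponent [Finite V] {m : ℕ} (h : Derivable G m X (U \ X))
    (hXU : X ⊆ U) (hU : G.nbhdSet U ⊆ ∅) (hC : IsComponent G (U \ X) C) :
    Derivable (torso G C) m ∅ (U \ C) := by
  have hCX := hC.nbhdSet_subset h.nbhdSet_subset
  have hCU := hC.subset
  have hnbr := nbhdSet_subset_iff.1 hU
  have hC' := hC.mem_of_adj
  have hrest : Derivable (torso G C) m X ((U \ X) \ C) := by
    refine (h.restrict subset_rfl Set.sdiff_subset (nbhdSet_subset_iff.2 fun u hu v huv => ?_)).mono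
      fun u hu v huv => ?_
    · have := hnbr u hu.1.1 v huv
      have := huv.symm
      grind
    · exact huv.2.2.2.resolve_right fun huv' => hu.1.2 (hCX huv'.1)
  have hsplit : U \ C = (U \ X) \ C ∪ X \ ∅ := by grind
  rw [hsplit]
  refine Derivable.isDecompositionRel.forget_all hrest (Set.empty_subset X) fun u hu v huv => ?_
  obtain ⟨-, -, hvC, huv | ⟨-, hv⟩⟩ := huv
  · have := hnbr u (hXU hu.1) v huv
    grind
  · exact Or.inl (hCX hv)

theorem Derivable.slimDerivable [Finite V] (h : Derivable G (k + 1) ∅ U) :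
    SlimDerivable G S k ∅ U := by
  induction hn : U.ncard using Nat.strong_induction_on generalizing G U with
  | _ n ih =>
  have hU := h.nbhdSet_subset
  by_cases hS : IsReduced G S k U
  · exact hS.slimDerivable h
  simp only [IsReduced, not_forall, Set.not_nonempty_iff_eq_empty] at hS
  obtain ⟨X, hXU, hX, C, hC, hCS⟩ := hS
  have hN := hC.nbhdSet_subset hX.nbhdSet_subset
  have hCU : C ⊆ U := hC.subset.trans Set.sdiff_subset
  have hdetach : IsDetachable G S k C :=
    { connected := hC.connected
      disjoint := Set.disjoint_iff_inter_eq_empty.2 hCS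
      derivable := hX.restrict hN hC.subset subset_rfl }
  refine hdetach.slimDerivable_of_sdiff hCU (hN.trans hXU)
    (ih _ ?_ (hX.torso_of_isComponent hXU hU hC) rfl)
  rw [← hn]
  exact Set.ncard_lt_ncard (hCU.sdiff_ssubset_of_nonempty hC.nonempty)

end Torso

/-! ### Unfolding a system of states -/

/-- The local data from which a tree decomposition is unfolded top-down. A state is a type of
node: `bag` is its bag, `low` the set of vertices that still have to be placed strictly below it,
`good` an invariant and `rank` a termination measure. -/
structure SplitData (V σ : Type) where
  bag : σ → Set V
  low : σ → Set V
  good : σ → Prop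
  rank : σ → ℕ ×ₗ ℕ

namespace SplitData

variable {V σ : Type}

/-- The vertices occurring at or below a state; this becomes the set `V_t`. -/
def span (D : SplitData V σ) (s : σ) : Set V := D.bag s ∪ D.low s

/-- The states in `C` may serve as the children of `s`: they distribute the vertices of `low s`
among themselves, and the neighbours of a vertex of `low s` that enters the bag of a child occur at
or below that child. -/
structure IsSplit (D : SplitData V σ) (G : SimpleGraph V) (s : σ) (C : Set σ) : Prop where
  good : ∀ c ∈ C, D.good c
  rank_lt : ∀ c ∈ C, D.rank c < D.rank s
  low_subset : ∀ c ∈ C, D.low c ⊆ D.low s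
  span_subset : ∀ c ∈ C, D.span c ⊆ D.span s
  existsUnique : ∀ v ∈ D.low s, ∃! c, c ∈ C ∧ v ∈ D.span c
  neighborSet_subset : ∀ c ∈ C, ∀ v ∈ D.low s, v ∈ D.bag c → G.neighborSet v ⊆ D.span c

end SplitData

/-- A choice of children for every good state, together with a start state that has everything
below it. -/
structure TreeSystem (V σ : Type) (G : SimpleGraph V) extends SplitData V σ where
  start : σ
  children : σ → Set σ
  good_start : good start
  low_start : low start = Set.univ
  disjoint : ∀ s, good s → Disjoint (bag s) (low s)
  neighborSet_subset : ∀ s, good s → ∀ v ∈ low s, G.neighborSet v ⊆ bag s ∪ low s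
  isSplit : ∀ s, good s → toSplitData.IsSplit G s (children s)

namespace TreeSystem

section Node

variable {V σ : Type} {G : SimpleGraph V} (P : TreeSystem V σ G)

/-- A finite downward path of states, listed from its end back to (but excluding) the start
state. -/
def IsPath : List σ → Prop
  | [] => True
  | c :: l => c ∈ P.children (l.headD P.start) ∧ IsPath l

/-- The nodes of the unfolded tree: a node is the path leading to it. -/
def Node : Type := {l : List σ // P.IsPath l}

namespace Node

variable {P}

instance : PartialOrder P.Node where
  le a b := a.1 <:+ b.1
  le_refl _ := List.suffix_rfl
  le_trans _ _ _ := List.IsSuffix.trans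
  le_antisymm _ _ h h' :=
    Subtype.ext (h.eq_of_length (Nat.le_antisymm h.length_le h'.length_le))

theorem le_def {a b : P.Node} : a ≤ b ↔ a.1 <:+ b.1 := Iff.rfl

instance : OrderBot P.Node where
  bot := ⟨[], trivial⟩
  bot_le _ := List.nil_suffix

/-- The state at which a path ends. -/
def state (t : P.Node) : σ := t.1.headD P.start

/-- The child of `t` with state `c`. -/
def child (t : P.Node) (c : σ) (hc : c ∈ P.children t.state) : P.Node := ⟨c :: t.1, hc, t.2⟩

/-- The parent of a node, the root being its own parent. -/
def parent (t : P.Node) : P.Node :=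
  ⟨t.1.tail, by
    obtain ⟨_ | ⟨c, l⟩, ht⟩ := t
    exacts [trivial, ht.2]⟩

@[simp] theorem state_child (t : P.Node) {c : σ} (hc : c ∈ P.children t.state) :
    (t.child c hc).state = c := rfl

@[elab_as_elim]
theorem induction {motive : P.Node → Prop} (bot : motive ⊥)
    (child : ∀ (t : P.Node) (c : σ) (hc : c ∈ P.children t.state), motive t →
      motive (t.child c hc)) (t : P.Node) : motive t := by
  obtain ⟨l, hl⟩ := t
  induction l with
  | nil => exact bot
  | cons c l ih => exact child ⟨l, hl.2⟩ c hl.1 (ih hl.2)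

theorem eq_bot_or_exists_child (t : P.Node) :
    t = ⊥ ∨ ∃ (p : P.Node) (c : σ) (hc : c ∈ P.children p.state), t = p.child c hc := by
  induction t using Node.induction with
  | bot => exact Or.inl rfl
  | child t c hc _ => exact Or.inr ⟨t, c, hc, rfl⟩

theorem le_child_iff {m t : P.Node} {c : σ} {hc : c ∈ P.children t.state} :
    m ≤ t.child c hc ↔ m = t.child c hc ∨ m ≤ t :=
  List.suffix_cons_iff.trans (or_congr_left ⟨fun h => Subtype.ext h, congrArg Subtype.val⟩)

theorem le_child (t : P.Node) {c : σ} (hc : c ∈ P.children t.state) : t ≤ t.child c hc :=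
  le_child_iff.2 (Or.inr le_rfl)

theorem lt_child (t : P.Node) {c : σ} (hc : c ∈ P.children t.state) : t < t.child c hc :=
  (le_child t hc).lt_of_ne fun h => by
    simpa [child] using congrArg (fun u : P.Node => u.1.length) h

theorem le_or_le_of_le {a b t : P.Node} (ha : a ≤ t) (hb : b ≤ t) : a ≤ b ∨ b ≤ a :=
  List.suffix_or_suffix_of_suffix ha hb

theorem exists_child_le_of_lt {a b : P.Node} (h : a < b) :
    ∃ c, ∃ hc : c ∈ P.children a.state, a.child c hc ≤ b := by
  induction b using Node.induction with
  | bot => exact absurd h not_lt_bot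
  | child t c hc ih =>
    rcases (le_child_iff.1 h.le).resolve_left h.ne |>.eq_or_lt with rfl | hlt
    · exact ⟨c, hc, le_rfl⟩
    · obtain ⟨d, hd, hle⟩ := ih hlt
      exact ⟨d, hd, hle.trans (le_child t hc)⟩

theorem coe_iterate_parent (t : P.Node) (n : ℕ) : (parent^[n] t).1 = t.1.drop n := by
  induction n generalizing t with
  | zero => rfl
  | succ n ih => rw [Function.iterate_succ_apply, ih, parent, List.drop_tail]

theorem exists_iterate_parent_eq_iff {m t : P.Node} : (∃ n, parent^[n] t = m) ↔ m ≤ t := by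
  constructor
  · rintro ⟨n, rfl⟩
    exact le_def.2 (coe_iterate_parent t n ▸ List.drop_suffix n t.1)
  · exact fun h => ⟨t.1.length - m.1.length,
      Subtype.ext ((coe_iterate_parent t _).trans (List.suffix_iff_eq_drop.1 h).symm)⟩

theorem exists_iterate_parent_mem_iff {m t : P.Node} {A : Set P.Node} :
    (∃ n, parent^[n] t = m ∧ ∀ i ≤ n, parent^[i] t ∈ A) ↔ m ≤ t ∧ Set.Icc m t ⊆ A := by
  constructor
  · rintro ⟨n, rfl, hA⟩
    refine ⟨exists_iterate_parent_eq_iff.1 ⟨n, rfl⟩, fun q ⟨hmq, hqt⟩ => ?_⟩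
    obtain ⟨j, rfl⟩ := exists_iterate_parent_eq_iff.2 hqt
    rcases Nat.le_total j n with hjn | hnj
    · exact hA j hjn
    · have hqm : parent^[j] t ≤ parent^[n] t := exists_iterate_parent_eq_iff.1
        ⟨j - n, by rw [← Function.iterate_add_apply, Nat.sub_add_cancel hnj]⟩
      exact hqm.antisymm hmq ▸ hA n le_rfl
  · rintro ⟨hmt, hA⟩
    obtain ⟨n, rfl⟩ := exists_iterate_parent_eq_iff.2 hmt
    refine ⟨n, rfl, fun i hi => hA ⟨exists_iterate_parent_eq_iff.1 ⟨n - i, ?_⟩,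
      exists_iterate_parent_eq_iff.1 ⟨i, rfl⟩⟩⟩
    rw [← Function.iterate_add_apply, Nat.sub_add_cancel hi]

end Node

end Node

section Unfolding

variable {V σ : Type} {G : SimpleGraph V} {P : TreeSystem V σ G}

theorem Node.good_state (t : P.Node) : P.good t.state := by
  induction t using Node.induction with
  | bot => exact P.good_start
  | child t c hc ih => exact (P.isSplit _ ih).good c hc

theorem Node.isSplit (t : P.Node) : P.IsSplit G t.state (P.children t.state) :=
  P.isSplit _ t.good_state

theorem Node.disjoint (t : P.Node) : Disjoint (P.bag t.state) (P.low t.state) :=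
  P.disjoint _ t.good_state

theorem antitone_span_state : Antitone fun t : P.Node => P.span t.state := by
  intro m t h
  induction t using Node.induction with
  | bot => rw [le_bot_iff.1 h]
  | child t c hc ih =>
    rcases Node.le_child_iff.1 h with rfl | h
    · exact le_rfl
    · exact (t.isSplit.span_subset c hc).trans (ih h)

theorem antitone_low_state : Antitone fun t : P.Node => P.low t.state := by
  intro m t h
  induction t using Node.induction with
  | bot => rw [le_bot_iff.1 h]
  | child t c hc ih =>
    rcases Node.le_child_iff.1 h with rfl | h
    · exact le_rfl
    · exact (t.isSplit.low_subset c hc).trans (ih h)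

theorem mem_bag_of_le {m t : P.Node} (h : m ≤ t) {v : V} (hm : v ∈ P.bag m.state)
    (ht : v ∈ P.span t.state) : v ∈ P.bag t.state :=
  ht.resolve_right fun hv => Set.disjoint_left.1 m.disjoint hm (antitone_low_state h hv)

theorem exists_child_mem_span {t : P.Node} {u v : V} (huv : u = v ∨ G.Adj u v)
    (hu : u ∈ P.low t.state) :
    ∃ c ∈ P.children t.state, u ∈ P.span c ∧ v ∈ P.span c := by
  obtain ⟨c, ⟨hc, huc⟩, _⟩ := t.isSplit.existsUnique u hu
  refine ⟨c, hc, huc, ?_⟩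
  rcases huv with rfl | huv
  · exact huc
  · rcases huc with huc | huc
    · exact t.isSplit.neighborSet_subset c hc u hu huc huv
    · exact P.neighborSet_subset c (t.isSplit.good c hc) u huc huv

theorem exists_le_mem_bag {u v : V} (huv : u = v ∨ G.Adj u v) (t : P.Node)
    (hu : u ∈ P.span t.state) (hv : v ∈ P.span t.state) :
    ∃ t', t ≤ t' ∧ u ∈ P.bag t'.state ∧ v ∈ P.bag t'.state := by
  by_cases hbag : u ∈ P.bag t.state ∧ v ∈ P.bag t.state
  · exact ⟨t, le_rfl, hbag⟩
  obtain ⟨c, hc, huc, hvc⟩ : ∃ c ∈ P.children t.state, u ∈ P.span c ∧ v ∈ P.span c := by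
    by_cases hub : u ∈ P.bag t.state
    · obtain ⟨c, hc, hvc, huc⟩ := exists_child_mem_span (huv.imp Eq.symm SimpleGraph.Adj.symm)
        (hv.resolve_left fun hvb => hbag ⟨hub, hvb⟩)
      exact ⟨c, hc, huc, hvc⟩
    · exact exists_child_mem_span huv (hu.resolve_left hub)
  obtain ⟨t', htt', h⟩ := exists_le_mem_bag huv (t.child c hc) huc hvc
  exact ⟨t', (t.le_child hc).trans htt', h⟩
termination_by P.rank t.state
decreasing_by exact t.isSplit.rank_lt c hc

theorem exists_child_mem_bag_of_mem_low {v : V} (t : P.Node) (hv : v ∈ P.low t.state) :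
    ∃ (p : P.Node) (c : σ), c ∈ P.children p.state ∧ v ∈ P.low p.state ∧ v ∈ P.bag c := by
  obtain ⟨c, ⟨hc, hvc⟩, _⟩ := t.isSplit.existsUnique v hv
  rcases hvc with hvc | hvc
  · exact ⟨t, c, hc, hv, hvc⟩
  · exact exists_child_mem_bag_of_mem_low (t.child c hc) hvc
termination_by P.rank t.state
decreasing_by exact t.isSplit.rank_lt c hc

/-- On the way down from the root to a node `t` with `v` at or below it, `v` stays in `low` until
`m` is met, and in the bag afterwards. -/
theorem exists_top_node (v : V) : ∃ m : P.Node, v ∈ P.bag m.state ∧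
    ∀ t : P.Node, v ∈ P.span t.state → (t ≤ m ∧ v ∈ P.low t.state) ∨ m ≤ t := by
  obtain ⟨p, c, hc, hvp, hvc⟩ :=
    exists_child_mem_bag_of_mem_low (⊥ : P.Node) (P.low_start ▸ Set.mem_univ v)
  refine ⟨p.child c hc, hvc, fun t => ?_⟩
  induction t using Node.induction with
  | bot => exact fun _ => Or.inl ⟨bot_le, P.low_start ▸ Set.mem_univ v⟩
  | child t d hd ih =>
    intro hvd
    rcases ih (t.isSplit.span_subset d hd hvd) with ⟨htm, hvt⟩ | hmt
    · have htm' : t < p.child c hc :=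
        htm.lt_of_ne fun h => Set.disjoint_left.1 (p.child c hc).disjoint hvc (h ▸ hvt)
      obtain ⟨e, he, hem⟩ := Node.exists_child_le_of_lt htm'
      obtain rfl : e = d := (t.isSplit.existsUnique v hvt).unique
        ⟨he, antitone_span_state hem (Or.inl hvc)⟩ ⟨hd, hvd⟩
      rcases Node.le_child_iff.1 hem with hem | hep
      · exact Or.inr hem.ge
      · refine Or.inl ⟨hem, hvd.resolve_left fun hve => ?_⟩
        exact Set.disjoint_left.1 p.disjoint (mem_bag_of_le hep hve (Or.inr hvp)) hvp
    · exact Or.inr (hmt.trans (t.le_child hd))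

variable (P) in
/-- The tree decomposition obtained by unfolding a tree system. -/
def td : RootedTreeDecomp V P.Node G where
  root := ⊥
  parent := Node.parent
  parent_root := rfl
  reaches_root _ := Node.exists_iterate_parent_eq_iff.2 bot_le
  bag t := P.bag t.state
  bags_cover v := by
    have hv : v ∈ P.span (⊥ : P.Node).state := Or.inr (P.low_start ▸ Set.mem_univ v)
    obtain ⟨t, -, ht, -⟩ := exists_le_mem_bag (Or.inl rfl) ⊥ hv hv
    exact ⟨t, ht⟩
  bags_of_edges u v huv := by
    have hbot : ∀ w, w ∈ P.span (⊥ : P.Node).state := fun w =>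
      Or.inr (P.low_start ▸ Set.mem_univ w)
    obtain ⟨t, -, ht⟩ := exists_le_mem_bag (Or.inr huv) ⊥ (hbot u) (hbot v)
    exact ⟨t, ht⟩
  bags_connected v := by
    obtain ⟨m, hvm, hm⟩ := exists_top_node (P := P) v
    refine ⟨m, hvm, fun t hvt => ?_⟩
    have hmt : m ≤ t := (hm t (Or.inl hvt)).resolve_left fun h =>
      Set.disjoint_left.1 t.disjoint hvt h.2
    exact (Node.exists_iterate_parent_mem_iff (A := {q | v ∈ P.bag q.state})).2
      ⟨hmt, fun q hq => mem_bag_of_le hq.1 hvm (antitone_span_state hq.2 (Or.inl hvt))⟩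

@[simp] theorem td_bag (t : P.Node) : P.td.bag t = P.bag t.state := rfl

theorem td_inSubtree_iff {t t' : P.Node} : P.td.InSubtree t t' ↔ t ≤ t' :=
  Node.exists_iterate_parent_eq_iff

theorem td_isParent_iff {t u : P.Node} : P.td.IsParent t u ↔
    ∃ c, ∃ hc : c ∈ P.children t.state, u = t.child c hc := by
  constructor
  · rintro ⟨hu, rfl⟩
    rcases u.eq_bot_or_exists_child with rfl | ⟨p, c, hc, rfl⟩
    exacts [absurd rfl hu, ⟨c, hc, rfl⟩]
  · rintro ⟨c, hc, rfl⟩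
    exact ⟨(bot_le.trans_lt (t.lt_child hc)).ne', rfl⟩

@[simp] theorem td_Vt (t : P.Node) : P.td.Vt t = P.span t.state := by
  ext v
  constructor
  · rintro ⟨t', h, hv⟩
    exact antitone_span_state (td_inSubtree_iff.1 h) (Or.inl hv)
  · intro hv
    obtain ⟨t', h, hv', -⟩ := exists_le_mem_bag (Or.inl rfl) t hv hv
    exact ⟨t', td_inSubtree_iff.2 h, hv'⟩

@[simp] theorem td_Lt (t : P.Node) : P.td.Lt t = P.low t.state := by
  rw [RootedTreeDecomp.Lt, td_Vt, td_bag, SplitData.span, Set.union_sdiff_cancel_left]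
  exact t.disjoint.le_bot

theorem td_connectedNodeSet_iff {A : Set P.Node} : P.td.ConnectedNodeSet A ↔
    ∃ m ∈ A, ∀ t ∈ A, m ≤ t ∧ Set.Icc m t ⊆ A :=
  exists_congr fun _ => and_congr_right fun _ => forall₂_congr fun _ _ =>
    Node.exists_iterate_parent_mem_iff

end Unfolding

section Trace

variable {V σ : Type} {G : SimpleGraph V} {P : TreeSystem V σ G} {S : Set V}

variable (P) in
/-- The state-level counterpart of `RootedTreeDecomp.IsSChild`. -/
def SChild (S : Set V) (s c : σ) : Prop :=
  c ∈ P.children s ∧ (P.low s ∩ P.span c ∩ S).Nonempty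

variable (P) in
/-- The state-level counterpart of `RootedTreeDecomp.IsSBottom`: no child has the same
`S`-trace. -/
def SBottom (S : Set V) (s : σ) : Prop :=
  (P.low s ∩ S).Nonempty ∧
    ∀ c ∈ P.children s, P.low c ∩ S = P.low s ∩ S → P.bag c ∩ S ≠ P.bag s ∩ S

theorem td_isSChild_iff {t u : P.Node} : P.td.IsSChild S t u ↔
    ∃ c, ∃ hc : c ∈ P.children t.state, u = t.child c hc ∧ P.SChild S t.state c := by
  have trace_diff (c : σ) (hc : c ∈ P.children t.state) :
      (P.td.LS S (t.child c hc) ∪ P.td.XS S (t.child c hc)) \ (P.td.RS S t ∪ P.td.XS S t) =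
        P.low t.state ∩ P.span c ∩ S := by
    ext v
    have hspan : v ∈ P.span c → v ∈ P.span t.state := fun h => t.isSplit.span_subset c hc h
    have hdisj : v ∈ P.bag t.state → v ∉ P.low t.state := fun h => Set.disjoint_left.1 t.disjoint h
    simp only [RootedTreeDecomp.LS, RootedTreeDecomp.XS, RootedTreeDecomp.RS, RootedTreeDecomp.Rt,
      td_Lt, td_Vt, td_bag, Node.state_child, SplitData.span, Set.mem_sdiff, Set.mem_union,
      Set.mem_inter_iff, Set.mem_compl_iff] at *
    tauto
  rw [RootedTreeDecomp.IsSChild, td_isParent_iff]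
  constructor
  · rintro ⟨⟨c, hc, rfl⟩, h⟩
    exact ⟨c, hc, rfl, hc, trace_diff c hc ▸ h⟩
  · rintro ⟨c, hc, rfl, -, h⟩
    exact ⟨⟨c, hc, rfl⟩, (trace_diff c hc).symm ▸ h⟩

theorem td_sTrace_eq_iff {a b : P.Node} : P.td.STrace S a = P.td.STrace S b ↔
    P.low a.state ∩ S = P.low b.state ∩ S ∧ P.bag a.state ∩ S = P.bag b.state ∩ S := by
  simp only [RootedTreeDecomp.STrace, RootedTreeDecomp.LS, RootedTreeDecomp.XS,
    RootedTreeDecomp.RS, RootedTreeDecomp.Rt, td_Lt, td_Vt, td_bag, Prod.mk.injEq]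
  refine ⟨fun h => ⟨h.1, h.2.1⟩, fun ⟨hlow, hbag⟩ => ⟨hlow, hbag, ?_⟩⟩
  have hspan : P.span a.state ∩ S = P.span b.state ∩ S := by
    rw [SplitData.span, SplitData.span, Set.union_inter_distrib_right,
      Set.union_inter_distrib_right, hlow, hbag]
  rw [Set.inter_comm, ← Set.sdiff_eq, ← Set.sdiff_inter_self_eq_sdiff, hspan,
    Set.sdiff_inter_self_eq_sdiff, Set.sdiff_eq, Set.inter_comm]

theorem le_or_le_of_mem_low {v : V} {a b : P.Node} (ha : v ∈ P.low a.state)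
    (hb : v ∈ P.low b.state) : a ≤ b ∨ b ≤ a := by
  obtain ⟨m, hvm, hm⟩ := exists_top_node (P := P) v
  have le_top : ∀ t : P.Node, v ∈ P.low t.state → t ≤ m := fun t ht =>
    (hm t (Or.inr ht)).elim And.left fun hmt =>
      absurd ht (Set.disjoint_left.1 t.disjoint (mem_bag_of_le hmt hvm (Or.inr ht)))
  exact Node.le_or_le_of_le (le_top a ha) (le_top b hb)

/-- Going down the tree, both `low` and `span` shrink, so a trace that recurs is constant in
between. -/
theorem sTrace_eq_of_le_of_le {a b c : P.Node} (hab : a ≤ b) (hbc : b ≤ c)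
    (h : P.td.STrace S c = P.td.STrace S a) : P.td.STrace S b = P.td.STrace S a := by
  obtain ⟨hlow, hbag⟩ := td_sTrace_eq_iff.1 h
  have hlow' : P.low b.state ∩ S = P.low a.state ∩ S :=
    (Set.inter_subset_inter_left S (antitone_low_state hab)).antisymm
      (hlow ▸ Set.inter_subset_inter_left S (antitone_low_state hbc))
  refine td_sTrace_eq_iff.2 ⟨hlow', Set.ext fun v => ⟨fun ⟨hvb, hvS⟩ => ?_, fun ⟨hva, hvS⟩ => ?_⟩⟩
  · refine ⟨(antitone_span_state hab (Or.inl hvb)).resolve_right fun hva => ?_, hvS⟩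
    exact Set.disjoint_left.1 b.disjoint hvb (hlow'.ge ⟨hva, hvS⟩).1
  · have hvc : v ∈ P.bag c.state := (hbag.ge ⟨hva, hvS⟩).1
    exact ⟨mem_bag_of_le hab hva (antitone_span_state hbc (Or.inl hvc)), hvS⟩

theorem td_isSBottom_iff {t : P.Node} : P.td.IsSBottom S t ↔ P.SBottom S t.state := by
  rw [RootedTreeDecomp.IsSBottom, SBottom, RootedTreeDecomp.LS, td_Lt]
  refine and_congr_right fun ⟨v, hvt, hvS⟩ => ⟨fun h c hc hlow hbag => ?_, fun h t' ht' => ?_⟩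
  · exact (t.lt_child hc).not_ge
      (td_inSubtree_iff.1 (h (t.child c hc) (td_sTrace_eq_iff.2 ⟨hlow, hbag⟩)))
  · rw [td_inSubtree_iff]
    have hvt' : v ∈ P.low t'.state := ((td_sTrace_eq_iff.1 ht').1.ge ⟨hvt, hvS⟩).1
    by_contra hle
    have htt' : t < t' := ((le_or_le_of_mem_low hvt' hvt).resolve_left hle).lt_of_not_ge hle
    obtain ⟨c, hc, hct'⟩ := Node.exists_child_le_of_lt htt'
    obtain ⟨hlow, hbag⟩ := td_sTrace_eq_iff.1 (sTrace_eq_of_le_of_le (t.le_child hc) hct' ht')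
    exact h c hc hlow hbag

end Trace


section FullJoinTree

variable {V σ : Type} {G : SimpleGraph V} {P : TreeSystem V σ G} {k : ℕ} {A : Set P.Node}
  {X : Set V} {t : P.Node} {c : σ}

theorem Node.Icc_child_subset (m : P.Node) (hc : c ∈ P.children t.state) :
    Set.Icc m (t.child c hc) ⊆ insert (t.child c hc) (Set.Icc m t) := fun _ hq =>
  (Node.le_child_iff.1 hq.2).imp_right fun hqt => ⟨hq.1, hqt⟩

theorem exists_least_Icc_subset {Q : Set P.Node} (t : P.Node) (ht : t ∈ Q) :
    ∃ m, IsLeast {m | m ≤ t ∧ Set.Icc m t ⊆ Q} m := by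
  induction t using Node.induction with
  | bot => exact ⟨⊥, ⟨le_rfl, by rwa [Set.Icc_self, Set.singleton_subset_iff]⟩, fun _ _ => bot_le⟩
  | child t c hc ih =>
    by_cases htQ : t ∈ Q
    · obtain ⟨m, ⟨hmt, hmQ⟩, hleast⟩ := ih htQ
      refine ⟨m, ⟨hmt.trans (t.le_child hc),
        (Node.Icc_child_subset m hc).trans (Set.insert_subset ht hmQ)⟩, fun m' ⟨hm', hQ⟩ => ?_⟩
      rcases Node.le_child_iff.1 hm' with rfl | hm't
      · exact hmt.trans (t.le_child hc)
      · exact hleast ⟨hm't, (Set.Icc_subset_Icc_right (t.le_child hc)).trans hQ⟩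
    · refine ⟨t.child c hc, ⟨le_rfl, by rwa [Set.Icc_self, Set.singleton_subset_iff]⟩,
        fun m' ⟨hm', hQ⟩ => ?_⟩
      exact (Node.le_child_iff.1 hm').elim Eq.ge fun hm't =>
        absurd (hQ ⟨hm't, t.le_child hc⟩) htQ

theorem exists_isFullJoinTree (hc : c ∈ P.children t.state) (hbag : P.bag c = P.bag t.state)
    (hfull : (P.bag t.state).ncard = k + 1) :
    ∃ A X, P.td.IsFullJoinTree k A X ∧ t ∈ A ∧ t.child c hc ∈ A := by
  set Q : Set P.Node := {q | P.bag q.state = P.bag t.state}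
  obtain ⟨m, ⟨hmt, hmQ⟩, hleast⟩ := exists_least_Icc_subset (Q := Q) t rfl
  set A : Set P.Node := {q | m ≤ q ∧ Set.Icc m q ⊆ Q}
  have htA : t ∈ A := ⟨hmt, hmQ⟩
  have hcA : t.child c hc ∈ A := ⟨hmt.trans (t.le_child hc),
    (Node.Icc_child_subset m hc).trans (Set.insert_subset hbag hmQ)⟩
  have hmA : m ∈ A := ⟨le_rfl, (Set.Icc_subset_Icc_right hmt).trans hmQ⟩
  refine ⟨A, P.bag t.state, ⟨⟨t, htA, _, hcA, (t.lt_child hc).ne⟩, ?_, hfull,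
    fun q hq => hq.2 ⟨hq.1, le_rfl⟩, fun A' hAA' hconn hbag' => ?_⟩, htA, hcA⟩
  · exact td_connectedNodeSet_iff.2 ⟨m, hmA, fun q hq => ⟨hq.1, fun r hr =>
      ⟨hr.1, (Set.Icc_subset_Icc_right hr.2).trans hq.2⟩⟩⟩
  · obtain ⟨m', -, hm'⟩ := td_connectedNodeSet_iff.1 hconn
    have hmm' : m ≤ m' := hleast ⟨(hm' t (hAA' htA)).1,
      fun q hq => hbag' q ((hm' t (hAA' htA)).2 hq)⟩
    have hm'm : m' ≤ m := (hm' m (hAA' hmA)).1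
    obtain rfl := hmm'.antisymm hm'm
    exact hAA'.antisymm' fun q hq => ⟨(hm' q hq).1, fun r hr => hbag' r ((hm' q hq).2 hr)⟩

theorem child_mem_of_isFullJoinTree (hA : P.td.IsFullJoinTree k A X) (ht : t ∈ A)
    (hc : c ∈ P.children t.state) (hbag : P.bag c = X) : t.child c hc ∈ A := by
  obtain ⟨-, hconn, -, hX, hmax⟩ := hA
  obtain ⟨m, hmA, hm⟩ := td_connectedNodeSet_iff.1 hconn
  have hconn' : P.td.ConnectedNodeSet (insert (t.child c hc) A) := by
    refine td_connectedNodeSet_iff.2 ⟨m, Or.inr hmA, ?_⟩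
    rintro q (rfl | hq)
    · exact ⟨(hm t ht).1.trans (t.le_child hc),
        (Node.Icc_child_subset m hc).trans (Set.insert_subset_insert (hm t ht).2)⟩
    · exact ⟨(hm q hq).1, (hm q hq).2.trans (Set.subset_insert _ A)⟩
  rw [← hmax _ (Set.subset_insert _ A) hconn' (Set.forall_mem_insert.2 ⟨hbag, hX⟩)]
  exact Set.mem_insert _ A

theorem bag_ne_of_child_isTopOf (hA : P.td.IsFullJoinTree k A X) {hc : c ∈ P.children t.state}
    (htop : P.td.IsTopOf A (t.child c hc)) : P.bag t.state ≠ X := by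
  intro hbag
  obtain ⟨-, hconn, -, hX, hmax⟩ := hA
  obtain ⟨m, hmA, hm⟩ := td_connectedNodeSet_iff.1 hconn
  obtain rfl : m = t.child c hc :=
    (hm _ htop.1).1.antisymm (td_inSubtree_iff.1 (htop.2 m hmA))
  have hconn' : P.td.ConnectedNodeSet (insert t A) := by
    refine td_connectedNodeSet_iff.2 ⟨t, Or.inl rfl, ?_⟩
    rintro q (rfl | hq)
    · exact ⟨le_rfl, by simp⟩
    · refine ⟨(t.le_child hc).trans (hm q hq).1, fun r ⟨htr, hrq⟩ => ?_⟩
      rcases htr.eq_or_lt with rfl | htr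
      · exact Set.mem_insert _ A
      · refine Or.inr ((hm q hq).2 ⟨?_, hrq⟩)
        refine (Node.le_or_le_of_le (hm q hq).1 hrq).elim id fun hr => ?_
        exact ((Node.le_child_iff.1 hr).resolve_right htr.not_ge).ge
  have htA : t ∈ A := by
    rw [← hmax _ (Set.subset_insert t A) hconn' (Set.forall_mem_insert.2 ⟨hbag, hX⟩)]
    exact Set.mem_insert t A
  exact (t.lt_child hc).not_ge (hm t htA).1

theorem exists_adjacent_mem_of_isFullJoinTree (hA : P.td.IsFullJoinTree k A X) (ht : t ∈ A) :
    (∃ c, ∃ hc : c ∈ P.children t.state, t.child c hc ∈ A) ∨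
      ∃ (p : P.Node) (c : σ) (hc : c ∈ P.children p.state), t = p.child c hc ∧ p ∈ A := by
  obtain ⟨hnontrivial, hconn, -⟩ := hA
  obtain ⟨m, hmA, hm⟩ := td_connectedNodeSet_iff.1 hconn
  rcases eq_or_ne t m with rfl | htm
  · obtain ⟨u, hu, hut⟩ := hnontrivial.exists_ne t
    obtain ⟨c, hc, hle⟩ := Node.exists_child_le_of_lt ((hm u hu).1.lt_of_ne hut.symm)
    exact Or.inl ⟨c, hc, (hm u hu).2 ⟨t.le_child hc, hle⟩⟩
  · rcases t.eq_bot_or_exists_child with rfl | ⟨p, c, hc, rfl⟩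
    · exact absurd (le_bot_iff.1 (hm ⊥ ht).1).symm htm
    · exact Or.inr ⟨p, c, hc, rfl, (hm _ ht).2
        ⟨(Node.le_child_iff.1 (hm _ ht).1).resolve_left htm.symm, p.le_child hc⟩⟩

end FullJoinTree

end TreeSystem

/-! ### The slim decomposition of a slim derivation -/

section State

variable {V : Type} {G : SimpleGraph V} {S X Y W : Set V} {k i : ℕ} {lS lN : List (Set V)}
  {x : Set V → V} {b : Bool}

/-- The states from which the slim decomposition is unfolded. The state `node X W i` decomposes `W`
below the bag `X`; the counter `i` makes every such node occur three times in a row, with the same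
bag, because conditions (3), (4) and (5) of slimness ask for copies. The state `comb Y lS lN x b` is
a node with full bag `Y` that still has to split off its branches; `b` says whether it is the top
node of its full join tree. -/
inductive State (V : Type) : Type
  | node (X W : Set V) (i : ℕ) : State V
  | comb (Y : Set V) (lS lN : List (Set V)) (x : Set V → V) (b : Bool) : State V

namespace State

/-- The bag of a node in state `s`. -/
def bag : State V → Set V
  | node X _ _ => X
  | comb Y _ _ _ _ => Y

/-- The vertices that occur strictly below a node in state `s`. -/
def low : State V → Set V
  | node _ W _ => W
  | comb _ lS lN _ _ => listUnion (lS ++ lN)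

/-- How many further copies of a node are to follow. -/
def copiesLeft : State V → ℕ
  | node _ _ i => 2 - i
  | comb _ _ _ _ _ => 0

/-- Termination measure: vertices below get fewer, or else the bag shrinks (which outweighs the at
most two copies), or else a copy is used up. -/
noncomputable def rank (s : State V) : ℕ ×ₗ ℕ :=
  toLex (s.low.ncard, 3 * s.bag.ncard + s.copiesLeft)

theorem rank_lt_of_low_ssubset [Finite V] {s c : State V} (h : c.low ⊂ s.low) :
    c.rank < s.rank :=
  Prod.Lex.toLex_lt_toLex.2 (Or.inl (Set.ncard_lt_ncard h))

theorem rank_lt_of_low_subset [Finite V] {s c : State V} (h : c.low ⊆ s.low)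
    (hlt : 3 * c.bag.ncard + c.copiesLeft < 3 * s.bag.ncard + s.copiesLeft) : c.rank < s.rank := by
  rcases h.eq_or_ssubset with heq | hlow
  · exact Prod.Lex.toLex_lt_toLex.2 (Or.inr ⟨congrArg Set.ncard heq, hlt⟩)
  · exact rank_lt_of_low_ssubset hlow

end State

open State

/-- The state at which the branch `W` of a comb with bag `Y` begins. -/
def branch (Y : Set V) (x : Set V → V) (W : Set V) : State V := node (Y \ {x W}) W 0

/-- The invariant of the state `comb Y lS lN x b`. -/
structure IsComb (G : SimpleGraph V) (S : Set V) (k : ℕ) (Y : Set V) (lS lN : List (Set V))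
    (x : Set V → V) (b : Bool) : Prop extends IsBranching S k Y lS lN x where
  slimDerivable : ∀ W ∈ lS ++ lN, SlimDerivable G S k (Y \ {x W}) W
  touches : b = true → lS.length ≤ 2 ∨
    TouchesThree G S Y ((Y ∪ listUnion (lS ++ lN))ᶜ :: lS)

/-- The invariant of states: what they announce is derivable. -/
def State.IsGood (G : SimpleGraph V) (S : Set V) (k : ℕ) : State V → Prop
  | node X W i => i ≤ 2 ∧ SlimDerivable G S k X W
  | comb Y lS lN x b => IsComb G S k Y lS lN x b

/-- `Step G S k s C` says that the states in `C` may be used for the children of a node in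
state `s`. -/
inductive Step (G : SimpleGraph V) (S : Set V) (k : ℕ) : State V → Set (State V) → Prop
  | copy (X W : Set V) (i : ℕ) (hi : i < 2) (hW : SlimDerivable G S k X W) :
      Step G S k (node X W i) {node X W (i + 1)}
  | leaf (X : Set V) : Step G S k (node X ∅ 2) ∅
  | join (X W₁ W₂ : Set V) (h₁ : W₁.Nonempty) (h₂ : W₂.Nonempty) (hdisj : Disjoint W₁ W₂)
      (hW₁ : SlimDerivable G S k X W₁) (hW₂ : SlimDerivable G S k X W₂) :
      Step G S k (node X (W₁ ∪ W₂) 2) {node X W₁ 0, node X W₂ 0}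
  | introduce (X W : Set V) (v : V) (hvX : v ∈ X) (hvW : v ∉ W)
      (hW : SlimDerivable G S k (X \ {v}) W) : Step G S k (node X W 2) {node (X \ {v}) W 0}
  | forget (X W : Set V) (w : V) (hwX : w ∉ X) (hwW : w ∉ W) (hw : G.neighborSet w ⊆ X ∪ W)
      (hW : SlimDerivable G S k (insert w X) W) :
      Step G S k (node X (insert w W) 2) {node (insert w X) W 0}
  | full (X : Set V) (w : V) (lS lN : List (Set V)) (x : Set V → V) (hwX : w ∉ X)
      (hw : G.neighborSet w ⊆ X ∪ listUnion (lS ++ lN))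
      (h : IsComb G S k (insert w X) lS lN x true) :
      Step G S k (node X (insert w (listUnion (lS ++ lN))) 2) {comb (insert w X) lS lN x true}
  | combShort (Y : Set V) (lS lN : List (Set V)) (x : Set V → V) (b : Bool)
      (h : IsComb G S k Y lS lN x b) (hlen : lS.length ≤ 2) :
      Step G S k (comb Y lS lN x b) {c | ∃ W ∈ lS ++ lN, c = branch Y x W}
  | combCons (Y A : Set V) (lS lN : List (Set V)) (x : Set V → V) (b : Bool)
      (h : IsComb G S k Y (A :: lS) lN x b) (hlen : 2 ≤ lS.length) :
      Step G S k (comb Y (A :: lS) lN x b)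
        (insert (comb Y lS [] x false) {c | ∃ W ∈ A :: lN, c = branch Y x W})

theorem State.IsGood.exists_step {s : State V} (h : s.IsGood G S k) : ∃ C, Step G S k s C := by
  rcases s with ⟨X, W, i⟩ | ⟨Y, lS, lN, x, b⟩
  · obtain ⟨hi, hW⟩ := h
    rcases hi.lt_or_eq with hi | rfl
    · exact ⟨_, .copy X W i hi hW⟩
    · cases hW with
      | leaf _ hX => exact ⟨_, .leaf X⟩
      | join _ W₁ W₂ h₁ h₂ hdisj hW₁ hW₂ => exact ⟨_, .join X W₁ W₂ h₁ h₂ hdisj hW₁ hW₂⟩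
      | introduce _ _ v hvX hvW _ hW => exact ⟨_, .introduce X W v hvX hvW hW⟩
      | forget _ W w hwX hwW hw hW => exact ⟨_, .forget X W w hwX hwW hw hW⟩
      | full _ w lS lN x hwX hB hW hw htouch =>
        exact ⟨_, .full X w lS lN x hwX hw ⟨hB, hW, fun _ => htouch⟩⟩
  · rcases le_or_gt lS.length 2 with hlen | hlen
    · exact ⟨_, .combShort Y lS lN x b h hlen⟩
    · match lS with
      | A :: lS => exact ⟨_, .combCons Y A lS lN x b h (by simpa using hlen)⟩

theorem IsComb.tail {A : Set V} (h : IsComb G S k Y (A :: lS) lN x b) :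
    IsComb G S k Y lS [] x false := by
  have hmem : ∀ W ∈ lS ++ [], W ∈ A :: lS ++ lN := by grind
  have hpair := h.pairwise
  rw [List.cons_append, List.pairwise_cons, List.pairwise_append] at hpair
  exact
    { ncard_eq := h.ncard_eq
      pairwise := by simpa using hpair.2.1
      nonempty := fun W hW => h.nonempty W (hmem W hW)
      disjoint := fun W hW => h.disjoint W (hmem W hW)
      mem := fun W hW => h.mem W (hmem W hW)
      meets := fun W hW => h.meets W (List.mem_cons_of_mem A hW)
      misses := by simp
      slimDerivable := fun W hW => h.slimDerivable W (hmem W hW)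
      touches := by simp }

theorem IsComb.disjoint_head {A : Set V} (h : IsComb G S k Y (A :: lS) lN x b) :
    Disjoint A (listUnion lS) := by
  have hpair := h.pairwise
  rw [List.cons_append, List.pairwise_cons] at hpair
  exact disjoint_listUnion_right.2 fun W hW => hpair.1 W (List.mem_append_left lN hW)

theorem IsBranching.disjoint_lists (h : IsBranching S k Y lS lN x) :
    Disjoint (listUnion lS) (listUnion lN) := by
  have hpair := (List.pairwise_append.1 h.pairwise).2.2
  refine disjoint_listUnion_right.2 fun B hB => (disjoint_listUnion_right.2 fun A hA => ?_).symm
  exact (hpair A hA B hB).symm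

theorem State.IsGood.disjoint {s : State V} (h : s.IsGood G S k) : Disjoint s.bag s.low := by
  rcases s with ⟨X, W, i⟩ | ⟨Y, lS, lN, x, b⟩
  · exact h.2.disjoint
  · exact IsBranching.disjoint_listUnion h.toIsBranching

theorem State.IsGood.neighborSet_subset {s : State V} (h : s.IsGood G S k) :
    ∀ v ∈ s.low, G.neighborSet v ⊆ s.bag ∪ s.low := by
  rcases s with ⟨X, W, i⟩ | ⟨Y, lS, lN, x, b⟩
  · exact h.2.neighborSet_subset
  · rintro v ⟨W, hW, hv⟩
    exact ((h.slimDerivable W hW).neighborSet_subset v hv).trans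
      (Set.union_subset_union Set.sdiff_subset (subset_listUnion hW))

/-- States with their invariant and rank, ready to be unfolded into a tree decomposition. -/
noncomputable def stateData (G : SimpleGraph V) (S : Set V) (k : ℕ) : SplitData V (State V) where
  bag := State.bag
  low := State.low
  good := State.IsGood G S k
  rank := State.rank

theorem isSplit_of_partition {s : State V} {C : Set (State V)} (hs : Disjoint s.bag s.low)
    (hgood : ∀ c ∈ C, c.IsGood G S k) (hrank : ∀ c ∈ C, c.rank < s.rank)
    (hbag : ∀ c ∈ C, c.bag ⊆ s.bag) (hlow : ∀ c ∈ C, c.low ⊆ s.low)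
    (hpart : ∀ v ∈ s.low, ∃! c, c ∈ C ∧ v ∈ c.low) : (stateData G S k).IsSplit G s C where
  good := hgood
  rank_lt := hrank
  low_subset := hlow
  span_subset c hc := Set.union_subset_union (hbag c hc) (hlow c hc)
  existsUnique v hv := by
    refine (existsUnique_congr fun c => and_congr_right fun hc => ?_).2 (hpart v hv)
    exact ⟨fun h => h.resolve_left fun hv' => Set.disjoint_left.1 hs (hbag c hc hv') hv, Or.inr⟩
  neighborSet_subset c hc v hv hv' := (Set.disjoint_left.1 hs (hbag c hc hv') hv).elim

theorem isSplit_forget [Finite V] {s c : State V} {w : V} (hc : c.IsGood G S k) (hw : w ∉ c.low)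
    (hbag : c.bag = insert w s.bag) (hlow : s.low = insert w c.low)
    (hnbr : G.neighborSet w ⊆ s.bag ∪ c.low) (hs : Disjoint s.bag s.low) :
    (stateData G S k).IsSplit G s {c} where
  good := by rintro _ rfl; exact hc
  rank_lt := by rintro _ rfl; exact rank_lt_of_low_ssubset (hlow ▸ Set.ssubset_insert hw)
  low_subset := by rintro _ rfl; exact (Set.subset_insert w _).trans_eq hlow.symm
  span_subset := by
    rintro _ rfl
    simp only [SplitData.span, stateData]
    grind
  existsUnique v hv := by
    refine ⟨c, ⟨rfl, ?_⟩, fun d hd => hd.1⟩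
    simp only [SplitData.span, stateData] at hv ⊢
    grind
  neighborSet_subset := by
    rintro _ rfl v hv hv'
    simp only [SplitData.span, stateData] at hv hv' ⊢
    grind

theorem existsUnique_branch {l : List (Set V)} (hl : l.Pairwise Disjoint) {v : V}
    (hv : v ∈ listUnion l) : ∃! c, c ∈ {c | ∃ W ∈ l, c = branch Y x W} ∧ v ∈ c.low := by
  obtain ⟨W, hW, hvW⟩ := hv
  refine ⟨branch Y x W, ⟨⟨W, hW, rfl⟩, hvW⟩, ?_⟩
  rintro _ ⟨⟨W', hW', rfl⟩, hvW'⟩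
  rw [eq_of_mem_of_pairwise_disjoint hl hW' hW hvW' hvW]

theorem IsComb.isGood_branch (h : IsComb G S k Y lS lN x b) (hW : W ∈ lS ++ lN) :
    (branch Y x W).IsGood G S k :=
  ⟨Nat.zero_le 2, h.slimDerivable W hW⟩

theorem IsComb.rank_branch_lt [Finite V] (h : IsComb G S k Y lS lN x b) (hW : W ∈ lS ++ lN) :
    (branch Y x W).rank < (comb Y lS lN x b).rank := by
  refine rank_lt_of_low_subset (subset_listUnion hW) ?_
  have := Set.ncard_sdiff_singleton_add_one (h.mem W hW)
  simp only [branch, State.bag, copiesLeft]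
  omega

theorem isSplit_combShort [Finite V] (h : IsComb G S k Y lS lN x b) :
    (stateData G S k).IsSplit G (comb Y lS lN x b) {c | ∃ W ∈ lS ++ lN, c = branch Y x W} := by
  refine isSplit_of_partition (IsGood.disjoint (s := comb Y lS lN x b) h) ?_ ?_ ?_ ?_
    fun v hv => existsUnique_branch h.pairwise hv
  · rintro _ ⟨W, hW, rfl⟩
    exact h.isGood_branch hW
  · rintro _ ⟨W, hW, rfl⟩
    exact h.rank_branch_lt hW
  · rintro _ ⟨W, _, rfl⟩
    exact Set.sdiff_subset
  · rintro _ ⟨W, hW, rfl⟩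
    exact subset_listUnion hW

theorem IsComb.existsUnique_cons {A : Set V} (h : IsComb G S k Y (A :: lS) lN x b) {v : V}
    (hv : v ∈ listUnion (A :: lS ++ lN)) :
    ∃! c, c ∈ insert (comb Y lS [] x false) {c | ∃ W ∈ A :: lN, c = branch Y x W} ∧
      v ∈ c.low := by
  have htail {W : Set V} (hW : W ∈ A :: lN) (hvW : v ∈ W) : v ∉ listUnion lS := by
    rcases List.mem_cons.1 hW with rfl | hW
    · exact Set.disjoint_left.1 h.disjoint_head hvW
    · have hlists : Disjoint (listUnion (A :: lS)) (listUnion lN) := h.disjoint_lists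
      exact fun hv => Set.disjoint_left.1 hlists (by simp [hv]) ⟨W, hW, hvW⟩
  by_cases hvS : v ∈ listUnion lS
  · refine ⟨comb Y lS [] x false, ⟨Or.inl rfl, by simpa [State.low] using hvS⟩, ?_⟩
    rintro _ ⟨rfl | ⟨W, hW, rfl⟩, hvW⟩
    · rfl
    · exact (htail hW hvW hvS).elim
  · have hpair : (A :: lN).Pairwise Disjoint :=
      h.pairwise.sublist ((List.sublist_append_right lS lN).cons_cons A)
    have hv' : v ∈ listUnion (A :: lN) := by
      simp only [List.cons_append, listUnion_cons, listUnion_append] at hv ⊢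
      grind
    refine (existsUnique_congr fun c => ?_).2 (existsUnique_branch (Y := Y) (x := x) hpair hv')
    refine ⟨fun ⟨hc, hvc⟩ => ⟨hc.resolve_left ?_, hvc⟩, fun ⟨hc, hvc⟩ => ⟨Or.inr hc, hvc⟩⟩
    rintro rfl
    exact hvS (by simpa [State.low] using hvc)

theorem isSplit_combCons [Finite V] {A : Set V} (h : IsComb G S k Y (A :: lS) lN x b) :
    (stateData G S k).IsSplit G (comb Y (A :: lS) lN x b)
      (insert (comb Y lS [] x false) {c | ∃ W ∈ A :: lN, c = branch Y x W}) := by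
  have hmem : ∀ W ∈ A :: lN, W ∈ A :: lS ++ lN := by grind
  have hlow : (comb Y lS [] x false).low ⊂ (comb Y (A :: lS) lN x b).low := by
    obtain ⟨a, ha⟩ := h.nonempty A (by simp)
    refine Set.ssubset_iff_exists.2 ⟨?_, a, ⟨A, by simp, ha⟩, ?_⟩
    · simp only [State.low, List.cons_append, listUnion_cons, listUnion_append, listUnion_nil]
      grind
    · simpa [State.low] using Set.disjoint_left.1 h.disjoint_head ha
  refine isSplit_of_partition (IsGood.disjoint (s := comb Y (A :: lS) lN x b) h) ?_ ?_ ?_ ?_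
    fun v hv => h.existsUnique_cons hv
  · rintro _ (rfl | ⟨W, hW, rfl⟩)
    exacts [h.tail, h.isGood_branch (hmem W hW)]
  · rintro _ (rfl | ⟨W, hW, rfl⟩)
    exacts [rank_lt_of_low_ssubset hlow, h.rank_branch_lt (hmem W hW)]
  · rintro _ (rfl | ⟨W, _, rfl⟩)
    exacts [subset_rfl, Set.sdiff_subset]
  · rintro _ (rfl | ⟨W, hW, rfl⟩)
    exacts [hlow.subset, subset_listUnion (hmem W hW)]

theorem isSplit_join [Finite V] {W₁ W₂ : Set V} (h₁ : W₁.Nonempty) (h₂ : W₂.Nonempty)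
    (hdisj : Disjoint W₁ W₂) (hW₁ : SlimDerivable G S k X W₁) (hW₂ : SlimDerivable G S k X W₂) :
    (stateData G S k).IsSplit G (node X (W₁ ∪ W₂) i) {node X W₁ 0, node X W₂ 0} := by
  refine isSplit_of_partition (hW₁.disjoint.union_right hW₂.disjoint) ?_ ?_ ?_ ?_ ?_
  · rintro _ (rfl | rfl)
    exacts [⟨Nat.zero_le 2, hW₁⟩, ⟨Nat.zero_le 2, hW₂⟩]
  · rintro _ (rfl | rfl)
    · refine rank_lt_of_low_ssubset ?_
      simp only [State.low]
      exact Set.ssubset_union_left_iff.2 fun h => h₂.ne_empty (hdisj.symm.eq_bot_of_le h)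
    · refine rank_lt_of_low_ssubset ?_
      simp only [State.low]
      exact Set.ssubset_union_right_iff.2 fun h => h₁.ne_empty (hdisj.eq_bot_of_le h)
  · rintro _ (rfl | rfl) <;> exact subset_rfl
  · rintro _ (rfl | rfl)
    exacts [Set.subset_union_left, Set.subset_union_right]
  · rintro v (hv | hv)
    · refine ⟨node X W₁ 0, ⟨Or.inl rfl, hv⟩, ?_⟩
      rintro _ ⟨rfl | rfl, hv'⟩
      exacts [rfl, (Set.disjoint_left.1 hdisj hv hv').elim]
    · refine ⟨node X W₂ 0, ⟨Or.inr rfl, hv⟩, ?_⟩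
      rintro _ ⟨rfl | rfl, hv'⟩
      exacts [(Set.disjoint_left.1 hdisj hv' hv).elim, rfl]

theorem isSplit_singleton {s c : State V} (hs : Disjoint s.bag s.low) (hc : c.IsGood G S k)
    (hrank : c.rank < s.rank) (hbag : c.bag ⊆ s.bag) (hlow : c.low = s.low) :
    (stateData G S k).IsSplit G s {c} := by
  refine isSplit_of_partition hs ?_ ?_ ?_ ?_ fun v hv => ⟨c, ⟨rfl, hlow ▸ hv⟩, fun d hd => hd.1⟩
  all_goals rintro _ rfl
  exacts [hc, hrank, hbag, hlow.subset]

theorem Step.isSplit [Finite V] {s : State V} {C : Set (State V)} (h : Step G S k s C)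
    (hs : Disjoint s.bag s.low) : (stateData G S k).IsSplit G s C := by
  cases h with
  | copy X W i hi hW =>
    refine isSplit_singleton hs ⟨hi, hW⟩ (rank_lt_of_low_subset subset_rfl ?_) subset_rfl rfl
    simp only [State.bag, copiesLeft]
    omega
  | leaf X =>
    exact isSplit_of_partition hs (by simp) (by simp) (by simp) (by simp) (by simp [State.low])
  | join X W₁ W₂ h₁ h₂ hdisj hW₁ hW₂ => exact isSplit_join h₁ h₂ hdisj hW₁ hW₂
  | introduce X W v hvX _ hW =>
    refine isSplit_singleton hs ⟨Nat.zero_le 2, hW⟩ (rank_lt_of_low_subset subset_rfl ?_)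
      Set.sdiff_subset rfl
    have := Set.ncard_sdiff_singleton_add_one hvX
    simp only [State.bag, copiesLeft]
    omega
  | forget X W w _ hwW hw hW => exact isSplit_forget ⟨Nat.zero_le 2, hW⟩ hwW rfl rfl hw hs
  | full X w lS lN x _ hw h =>
    have hwl : w ∉ listUnion (lS ++ lN) :=
      Set.disjoint_left.1 h.disjoint_listUnion (Set.mem_insert w X)
    exact isSplit_forget (s := node X _ 2) (c := comb _ lS lN x true) h hwl rfl rfl hw hs
  | combShort Y lS lN x b h _ => exact isSplit_combShort h
  | combCons Y A lS lN x b h hlen => exact isSplit_combCons h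

open Classical in
/-- The states used for the children of a node in state `s`; junk value `∅` unless `s` is good. -/
noncomputable def stateChildren (G : SimpleGraph V) (S : Set V) (k : ℕ) (s : State V) :
    Set (State V) :=
  if h : ∃ C, Step G S k s C then h.choose else ∅

theorem State.IsGood.step {s : State V} (h : s.IsGood G S k) :
    Step G S k s (stateChildren G S k s) := by
  rw [stateChildren, dif_pos h.exists_step]
  exact h.exists_step.choose_spec

/-- The tree system unfolding a slim derivation of the whole graph. -/
noncomputable def stateSystem [Finite V] (h : SlimDerivable G S k ∅ Set.univ) :
    TreeSystem V (State V) G where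
  toSplitData := stateData G S k
  start := node ∅ Set.univ 0
  children := stateChildren G S k
  good_start := ⟨Nat.zero_le 2, h⟩
  low_start := rfl
  disjoint _ hs := IsGood.disjoint hs
  neighborSet_subset _ hs := IsGood.neighborSet_subset hs
  isSplit _ hs := (IsGood.step hs).isSplit (IsGood.disjoint hs)

end State

section Operations

variable {V : Type} {G : SimpleGraph V} {S X Y W : Set V} {k i : ℕ}
  {lS lN : List (Set V)} {x : Set V → V} {b : Bool} {s c : State V} {C : Set (State V)}

open State

theorem State.IsGood.ncard_bag_le [Finite V] (h : s.IsGood G S k) : s.bag.ncard ≤ k + 1 := by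
  rcases s with ⟨X, W, i⟩ | ⟨Y, lS, lN, x, b⟩
  · exact h.2.ncard_le.trans k.le_succ
  · exact h.ncard_eq.le

theorem IsComb.ncard_bag_branch [Finite V] (h : IsComb G S k Y lS lN x b) (hW : W ∈ lS ++ lN) :
    (branch Y x W).bag.ncard = k := by
  have := Set.ncard_sdiff_singleton_add_one (h.mem W hW)
  rw [h.ncard_eq] at this
  exact Nat.succ.inj this

namespace Step

theorem bag_subset_or_eq_insert (h : Step G S k s C) (hc : c ∈ C) :
    c.bag ⊆ s.bag ∧ s.bag.ncard ≤ c.bag.ncard + 1 ∨ ∃ w, c.bag = insert w s.bag := by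
  have hdel {Y : Set V} {v : V} : Y.ncard ≤ (Y \ {v}).ncard + 1 :=
    Nat.sub_le_iff_le_add.1 (Set.pred_ncard_le_ncard_sdiff_singleton Y v)
  cases h with
  | copy | join => left; grind [State.bag]
  | leaf => exact hc.elim
  | introduce => obtain rfl := hc; exact Or.inl ⟨Set.sdiff_subset, hdel⟩
  | forget _ _ w | full _ w => obtain rfl := hc; exact Or.inr ⟨w, rfl⟩
  | combShort => obtain ⟨W, _, rfl⟩ := hc; exact Or.inl ⟨Set.sdiff_subset, hdel⟩
  | combCons =>
    rcases hc with rfl | ⟨W, _, rfl⟩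
    exacts [Or.inl ⟨subset_rfl, Nat.le_succ _⟩, Or.inl ⟨Set.sdiff_subset, hdel⟩]

theorem eq_node_of_mem (h : Step G S k s C) (hc : node X W (i + 1) ∈ C) : s = node X W i := by
  cases h <;> grind [branch]

theorem eq_node_or_comb_of_mem (h : Step G S k s C) (hc : comb Y lS lN x b ∈ C) :
    (b = true ∧ ∃ X W, s = node X W 2) ∨
      b = false ∧ 2 ≤ lS.length ∧ ∃ A lN' b', s = comb Y (A :: lS) lN' x b' := by
  cases h with
  | copy | leaf | join | introduce | forget => grind
  | full => obtain ⟨⟩ := hc; exact Or.inl ⟨rfl, _, _, rfl⟩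
  | combShort => obtain ⟨W, _, hW⟩ := hc; cases hW
  | combCons _ A _ _ _ _ _ hlen =>
    rcases hc with hc | ⟨W, _, hW⟩
    · cases hc; exact Or.inr ⟨rfl, hlen, A, _, _, rfl⟩
    · cases hW

theorem eq_copy (h : Step G S k (node X W i) C) (hi : i < 2) : C = {node X W (i + 1)} := by
  cases h <;> first | rfl | omega

end Step

/-- The vertices of `S` at or below `c` that lie strictly below `s` witness that a child in state
`c` is an `S`-child of a node in state `s`. -/
def State.Meets (S : Set V) (s c : State V) : Prop := (s.low ∩ (c.bag ∪ c.low) ∩ S).Nonempty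

/-- A node in state `s` with children in the states `C` is an `S`-bottom node. -/
def State.IsBottom (S : Set V) (s : State V) (C : Set (State V)) : Prop :=
  (s.low ∩ S).Nonempty ∧ ∀ c ∈ C, c.low ∩ S = s.low ∩ S → c.bag ∩ S ≠ s.bag ∩ S

/-- `SOperation S s C` says that an `S`-bottom node in state `s` whose `S`-children have the states
in `C` admits one of the three `S`-operations, listed by the rule from which it arises. -/
inductive SOperation (S : Set V) : State V → Set (State V) → Prop
  | join (X W₁ W₂ : Set V) (hne : W₁ ≠ W₂) :
      SOperation S (node X (W₁ ∪ W₂) 2) {node X W₁ 0, node X W₂ 0}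
  | introduce (X W : Set V) (v : V) (hvX : v ∈ X) (hvS : v ∈ S) :
      SOperation S (node X W 2) {node (X \ {v}) W 0}
  | forget (X W : Set V) (w : V) (hwX : w ∉ X) (hwS : w ∈ S) :
      SOperation S (node X (insert w W) 2) {node (insert w X) W 0}
  | full (X : Set V) (w : V) (lS lN : List (Set V)) (x : Set V → V) (hwX : w ∉ X) (hwS : w ∈ S) :
      SOperation S (node X (insert w (listUnion (lS ++ lN))) 2) {comb (insert w X) lS lN x true}
  | combIntroduce (Y A : Set V) (lN : List (Set V)) (x : Set V → V) (b : Bool) (hx : x A ∈ Y)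
      (hxS : x A ∈ S) : SOperation S (comb Y [A] lN x b) {branch Y x A}
  | combPair (Y A B : Set V) (lN : List (Set V)) (x : Set V → V) (b : Bool) (hne : A ≠ B) :
      SOperation S (comb Y [A, B] lN x b) {branch Y x A, branch Y x B}
  | combCons (Y A : Set V) (lS lN : List (Set V)) (x : Set V → V) (b : Bool)
      (hlen : 2 ≤ lS.length) :
      SOperation S (comb Y (A :: lS) lN x b) {branch Y x A, comb Y lS [] x false}

theorem State.meets_iff (hs : Disjoint s.bag s.low) (hbag : c.bag ⊆ s.bag)
    (hlow : c.low ⊆ s.low) : s.Meets S c ↔ (c.low ∩ S).Nonempty := by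
  rw [State.Meets, Set.inter_union_distrib_left, Set.inter_eq_self_of_subset_right hlow,
    (hs.symm.mono_right hbag).inter_eq, Set.empty_union]

theorem State.IsBottom.meets_singleton [Finite V] (hb : s.IsBottom S {c}) (h : Step G S k s {c})
    (hs : Disjoint s.bag s.low) : s.Meets S c := by
  obtain ⟨v, hv, hvS⟩ := hb.1
  obtain ⟨_, ⟨rfl, hvc⟩, _⟩ := (h.isSplit hs).existsUnique v hv
  exact ⟨v, ⟨hv, hvc⟩, hvS⟩

theorem SOperation.exists_of_singleton [Finite V] (hop : SOperation S s {c})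
    (hb : s.IsBottom S {c}) (h : Step G S k s {c}) (hs : Disjoint s.bag s.low) :
    ∃ C', SOperation S s C' ∧ ∀ d, d ∈ ({c} : Set (State V)) ∧ s.Meets S d ↔ d ∈ C' := by
  refine ⟨{c}, hop, fun d => ⟨And.left, fun hd => ⟨hd, ?_⟩⟩⟩
  obtain rfl := hd
  exact hb.meets_singleton h hs

theorem mem_of_isBottom_forget {w : V} (hbag : c.bag = insert w s.bag)
    (hlow : s.low = insert w c.low) (hb : s.IsBottom S {c}) : w ∈ S := by
  by_contra hw
  refine hb.2 c rfl ?_ ?_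
  · rw [hlow, Set.insert_inter_of_notMem hw]
  · rw [hbag, Set.insert_inter_of_notMem hw]

theorem meets_branch_iff (h : IsComb G S k Y lS lN x b) (hW : W ∈ lS ++ lN) :
    (comb Y lS lN x b).Meets S (branch Y x W) ↔ W ∈ lS := by
  refine (State.meets_iff (c := branch Y x W) (IsGood.disjoint (s := comb Y lS lN x b) h)
    Set.sdiff_subset (subset_listUnion hW)).trans ⟨fun hne => ?_, h.meets W⟩
  refine (List.mem_append.1 hW).resolve_right fun hWN => ?_
  exact Set.not_disjoint_iff_nonempty_inter.2 hne (h.misses W hWN)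

theorem SOperation.exists_of_combShort (h : IsComb G S k Y lS lN x b) (hlen : lS.length ≤ 2)
    (hb : (comb Y lS lN x b).IsBottom S {c | ∃ W ∈ lS ++ lN, c = branch Y x W}) :
    ∃ C', SOperation S (comb Y lS lN x b) C' ∧ ∀ c,
      (∃ W ∈ lS ++ lN, c = branch Y x W) ∧ (comb Y lS lN x b).Meets S c ↔ c ∈ C' := by
  have hlowS : (listUnion (lS ++ lN)) ∩ S = listUnion lS ∩ S := by
    have : Disjoint S (listUnion lN) := disjoint_listUnion_right.2 fun W hW => (h.misses W hW).symm
    rw [listUnion_append, Set.union_inter_distrib_right, this.symm.inter_eq, Set.union_empty]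
  have hmeets (c : State V) : (∃ W ∈ lS ++ lN, c = branch Y x W) ∧
      (comb Y lS lN x b).Meets S c ↔ ∃ W ∈ lS, c = branch Y x W := by
    constructor
    · rintro ⟨⟨W, hW, rfl⟩, hd⟩
      exact ⟨W, (meets_branch_iff h hW).1 hd, rfl⟩
    · rintro ⟨W, hW, rfl⟩
      have hW' := List.mem_append_left lN hW
      exact ⟨⟨W, hW', rfl⟩, (meets_branch_iff h hW').2 hW⟩
  match lS with
  | [] =>
    obtain ⟨v, hv⟩ : (listUnion ([] ++ lN) ∩ S).Nonempty := hb.1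
    rw [hlowS] at hv
    simp at hv
  | [A] =>
    have hxS : x A ∈ S := by
      by_contra hx
      refine hb.2 (branch Y x A) ⟨A, by simp, rfl⟩ ?_ ?_
      · simpa [State.low, branch] using hlowS.symm
      · simp only [branch, State.bag]
        grind
    have hxY : x A ∈ Y := h.mem A (by simp)
    exact ⟨_, .combIntroduce Y A lN x b hxY hxS, fun d => (hmeets d).trans (by simp)⟩
  | [A, B] =>
    have hne : A ≠ B := by
      obtain ⟨a, ha⟩ := h.nonempty A (by simp)
      have := h.pairwise
      rintro rfl
      simp at this
      grind
    exact ⟨_, .combPair Y A B lN x b hne, fun d => (hmeets d).trans (by simp)⟩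

theorem SOperation.exists_of_combCons {A : Set V} (h : IsComb G S k Y (A :: lS) lN x b)
    (hlen : 2 ≤ lS.length) :
    ∃ C', SOperation S (comb Y (A :: lS) lN x b) C' ∧
      ∀ d, d ∈ insert (comb Y lS [] x false) {c | ∃ W ∈ A :: lN, c = branch Y x W} ∧
        (comb Y (A :: lS) lN x b).Meets S d ↔ d ∈ C' := by
  have hcomb : (comb Y (A :: lS) lN x b).Meets S (comb Y lS [] x false) := by
    obtain ⟨B, hB⟩ := List.exists_mem_of_length_pos (Nat.lt_of_lt_of_le Nat.zero_lt_two hlen)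
    obtain ⟨a, ha, haS⟩ := h.meets B (List.mem_cons_of_mem A hB)
    exact ⟨a, ⟨⟨B, by simp [hB], ha⟩, Or.inr ⟨B, by simp [hB], ha⟩⟩, haS⟩
  refine ⟨_, .combCons Y A lS lN x b hlen, fun d => ⟨?_, ?_⟩⟩
  · rintro ⟨rfl | ⟨W, hW, rfl⟩, hd⟩
    · exact Or.inr rfl
    · have hWS := h.meets W ((meets_branch_iff h (by grind)).1 hd)
      rcases List.mem_cons.1 hW with rfl | hWN
      · exact Or.inl rfl
      · exact (Set.not_disjoint_iff_nonempty_inter.2 hWS (h.misses W hWN)).elim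
  · rintro (rfl | rfl)
    · exact ⟨Or.inr ⟨A, by simp, rfl⟩, (meets_branch_iff h (by simp)).2 (by simp)⟩
    · exact ⟨Or.inl rfl, hcomb⟩

theorem SOperation.exists_of_isBottom [Finite V] (h : Step G S k s C) (hs : Disjoint s.bag s.low)
    (hb : s.IsBottom S C) : ∃ C', SOperation S s C' ∧ ∀ c, c ∈ C ∧ s.Meets S c ↔ c ∈ C' := by
  have hstep := h
  cases h with
  | copy X W i => exact (hb.2 _ rfl rfl rfl).elim
  | leaf X => simp [State.IsBottom, State.low] at hb
  | join X W₁ W₂ h₁ h₂ hdisj =>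
    refine ⟨_, .join X W₁ W₂ ?_, fun c => and_iff_left_of_imp ?_⟩
    · rintro rfl
      exact h₁.ne_empty (disjoint_self.1 hdisj)
    · rintro (rfl | rfl)
      · refine (State.meets_iff (c := node X W₁ 0) hs subset_rfl Set.subset_union_left).2 ?_
        by_contra hW₁
        have hlow : W₁ ∩ S = ∅ := Set.not_nonempty_iff_eq_empty.1 hW₁
        refine hb.2 (node X W₂ 0) (by simp) ?_ rfl
        simp only [State.low, Set.union_inter_distrib_right, hlow, Set.empty_union]
      · refine (State.meets_iff (c := node X W₂ 0) hs subset_rfl Set.subset_union_right).2 ?_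
        by_contra hW₂
        have hlow : W₂ ∩ S = ∅ := Set.not_nonempty_iff_eq_empty.1 hW₂
        refine hb.2 (node X W₁ 0) (by simp) ?_ rfl
        simp only [State.low, Set.union_inter_distrib_right, hlow, Set.union_empty]
  | introduce X W v hvX _ _ =>
    refine SOperation.exists_of_singleton (.introduce X W v hvX ?_) hb hstep hs
    by_contra hv
    exact hb.2 _ rfl rfl (by simp only [State.bag]; grind)
  | forget X W w hwX =>
    have hwS := mem_of_isBottom_forget rfl rfl hb
    exact SOperation.exists_of_singleton (.forget X W w hwX hwS) hb hstep hs
  | full X w lS lN x hwX =>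
    have hwS := mem_of_isBottom_forget rfl rfl hb
    exact SOperation.exists_of_singleton (.full X w lS lN x hwX hwS) hb hstep hs
  | combShort Y lS lN x b h hlen => exact SOperation.exists_of_combShort h hlen hb
  | combCons Y A lS lN x b h hlen => exact SOperation.exists_of_combCons h hlen

theorem Step.isBottom_comb (h : Step G S k (comb Y lS lN x b) C) (hlen : 2 ≤ lS.length) :
    (comb Y lS lN x b).IsBottom S C := by
  have hcover {c : State V} (hlow : c.low ∩ S = listUnion (lS ++ lN) ∩ S) {W : Set V}
      (hW : W ∈ lS) (hWS : (W ∩ S).Nonempty) : (W ∩ c.low).Nonempty := by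
    obtain ⟨a, ha, haS⟩ := hWS
    have hac : a ∈ c.low ∩ S := hlow ▸ ⟨subset_listUnion (List.mem_append_left lN hW) ha, haS⟩
    exact ⟨a, ha, hac.1⟩
  have hbranch (h : IsComb G S k Y lS lN x b) {W : Set V} (hW : W ∈ lS ++ lN) :
      (branch Y x W).low ∩ S ≠ listUnion (lS ++ lN) ∩ S := by
    intro hlow
    match lS with
    | A :: B :: l =>
      obtain ⟨a, haA, haW⟩ := hcover hlow (W := A) (by simp) (h.meets A (by simp))
      obtain ⟨b, hbB, hbW⟩ := hcover hlow (W := B) (by simp) (h.meets B (by simp))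
      have hAW := eq_of_mem_of_pairwise_disjoint h.pairwise (by simp) hW haA haW
      have hBW := eq_of_mem_of_pairwise_disjoint h.pairwise (by simp) hW hbB hbW
      have hAB := h.pairwise
      simp only [List.cons_append, List.pairwise_cons, hAW, hBW] at hAB
      exact Set.disjoint_left.1 (hAB.1 W (by simp)) hbW hbW
  cases h with
  | combShort _ _ _ _ _ h =>
    refine ⟨?_, ?_⟩
    · obtain ⟨A, hA⟩ := List.exists_mem_of_length_pos (Nat.lt_of_lt_of_le Nat.zero_lt_two hlen)
      obtain ⟨a, ha, haS⟩ := h.meets A hA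
      exact ⟨a, subset_listUnion (List.mem_append_left lN hA) ha, haS⟩
    · rintro _ ⟨W, hW, rfl⟩ hlow
      exact (hbranch h hW hlow).elim
  | combCons _ A lS _ _ _ h _ =>
    refine ⟨?_, ?_⟩
    · obtain ⟨a, ha, haS⟩ := h.meets A (by simp)
      exact ⟨a, subset_listUnion (by simp) ha, haS⟩
    · rintro _ (rfl | ⟨W, hW, rfl⟩) hlow
      · obtain ⟨a, haA, ha⟩ := hcover hlow (W := A) (by simp) (h.meets A (by simp))
        exact (Set.disjoint_left.1 h.disjoint_head haA (by simpa [State.low] using ha)).elim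
      · exact (hbranch h (by grind) hlow).elim

theorem Step.not_isBottom_copy (h : Step G S k (node X W i) C) (hi : i < 2) :
    ¬(node X W i).IsBottom S C := by
  intro hb
  obtain rfl := h.eq_copy hi
  exact hb.2 _ rfl rfl rfl

theorem SOperation.eq_node_or_comb_of_mem (h : SOperation S s C) (hc : c ∈ C) :
    (∃ X W, c = node X W 0) ∨ ∃ Y lS lN x b, c = comb Y lS lN x b := by
  cases h <;> grind [branch]

theorem SOperation.cases_of_nontrivial (h : SOperation S s C) (hC : C.Nontrivial) :
    (∃ X W, s = node X W 2 ∧ ∀ c ∈ C, c.bag = X) ∨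
    (∃ Y lS lN x, s = comb Y lS lN x true ∧ ∀ c ∈ C, ∃ W ∈ lS, c = branch Y x W) ∨
    (∃ Y lS lN x, s = comb Y lS lN x false) ∨
    ∃ Y lS lN x b, comb Y lS lN x b ∈ C ∧ s.bag = Y := by
  cases h with
  | join X W₁ W₂ => exact Or.inl ⟨X, _, rfl, by simp [State.bag]⟩
  | introduce | forget | full | combIntroduce => exact (Set.not_nontrivial_singleton hC).elim
  | combPair Y A B lN x b =>
    cases b
    · exact Or.inr (Or.inr (Or.inl ⟨Y, _, _, _, rfl⟩))
    · exact Or.inr (Or.inl ⟨Y, _, _, _, rfl, by simp⟩)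
  | combCons Y A lS lN x =>
    exact Or.inr (Or.inr (Or.inr ⟨Y, lS, [], x, false, by simp, rfl⟩))

theorem SOperation.exists_pair_of_comb (h : SOperation S (comb Y lS lN x b) C)
    (hlen : 2 ≤ lS.length) : ∃ c ∈ C, ∃ d ∈ C, c ≠ d := by
  cases h with
  | combIntroduce => simp at hlen
  | combPair _ A B _ _ _ hne =>
    exact ⟨branch Y x A, by simp, branch Y x B, by simp, by simp [branch, hne]⟩
  | combCons _ A lS =>
    exact ⟨branch Y x A, by simp, comb Y lS [] x false, by simp, by simp [branch]⟩

end Operations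

section Slim

variable {V : Type} [Finite V] {G : SimpleGraph V} {S X Y W : Set V} {k i : ℕ}
  {lS lN : List (Set V)} {x : Set V → V} {b : Bool} {h : SlimDerivable G S k ∅ Set.univ}

open State TreeSystem TreeSystem.Node

theorem stateSystem_bag (s : State V) : (stateSystem h).bag s = s.bag := rfl

theorem good_state (t : (stateSystem h).Node) : t.state.IsGood G S k := t.good_state

theorem step_state (t : (stateSystem h).Node) :
    Step G S k t.state ((stateSystem h).children t.state) :=
  (good_state t).step

theorem isSBottom_iff {t : (stateSystem h).Node} : (stateSystem h).td.IsSBottom S t ↔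
    t.state.IsBottom S ((stateSystem h).children t.state) :=
  td_isSBottom_iff

theorem isSChild_iff {t u : (stateSystem h).Node} : (stateSystem h).td.IsSChild S t u ↔
    ∃ c, ∃ hc : c ∈ (stateSystem h).children t.state, u = t.child c hc ∧ t.state.Meets S c := by
  refine td_isSChild_iff.trans (exists_congr fun c => exists_congr fun hc => ?_)
  exact and_congr_right fun _ => ⟨And.right, fun hm => ⟨hc, hm⟩⟩

/-- The `S`-children of the node `t` are the children whose states form the set `C`. -/
def HasSChildren (S : Set V) (t : (stateSystem h).Node) (C : Set (State V)) : Prop :=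
  C ⊆ (stateSystem h).children t.state ∧ ∀ u, (stateSystem h).td.IsSChild S t u ↔
    ∃ c ∈ C, ∃ hc : c ∈ (stateSystem h).children t.state, u = t.child c hc

theorem exists_sOperation {t : (stateSystem h).Node} (ht : (stateSystem h).td.IsSBottom S t) :
    ∃ C, SOperation S t.state C ∧ HasSChildren S t C := by
  obtain ⟨C, hop, hC⟩ := SOperation.exists_of_isBottom (step_state t) (good_state t).disjoint
    (isSBottom_iff.1 ht)
  refine ⟨C, hop, fun c hc => ((hC c).2 hc).1, fun u => isSChild_iff.trans ?_⟩
  refine exists_congr fun c => ?_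
  rw [← hC c]
  exact ⟨fun ⟨hc, hu, hm⟩ => ⟨⟨hc, hm⟩, hc, hu⟩, fun ⟨⟨_, hm⟩, hc, hu⟩ => ⟨hc, hu, hm⟩⟩

theorem HasSChildren.admitsIntroduce {t : (stateSystem h).Node} {c : State V} {v : V}
    (ht : HasSChildren S t {c}) (hvS : v ∈ S) (hv : v ∈ t.state.bag)
    (hbag : c.bag = t.state.bag \ {v}) : (stateSystem h).td.AdmitsIntroduce S t v := by
  have hc := ht.1 rfl
  refine ⟨t.child c hc, (ht.2 _).2 ⟨c, rfl, hc, rfl⟩, fun u hu => ?_, hvS, ?_, ?_⟩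
  · obtain ⟨_, rfl, _, rfl⟩ := (ht.2 u).1 hu
    rfl
  · simp only [td_bag, state_child, stateSystem_bag, hbag]
    grind
  · simp only [RootedTreeDecomp.XS, td_bag, state_child, stateSystem_bag, hbag]
    grind

theorem HasSChildren.admitsForget {t : (stateSystem h).Node} {c : State V} {w : V}
    (ht : HasSChildren S t {c}) (hwS : w ∈ S) (hw : w ∉ t.state.bag)
    (hbag : c.bag = insert w t.state.bag) : (stateSystem h).td.AdmitsForget S t w := by
  have hc := ht.1 rfl
  refine ⟨t.child c hc, (ht.2 _).2 ⟨c, rfl, hc, rfl⟩, fun u hu => ?_, hwS, ?_, ?_⟩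
  · obtain ⟨_, rfl, _, rfl⟩ := (ht.2 u).1 hu
    rfl
  · simp only [td_bag, state_child, stateSystem_bag, hbag]
    grind
  · simp only [RootedTreeDecomp.XS, td_bag, state_child, stateSystem_bag, hbag]
    grind

theorem HasSChildren.admitsJoin {t : (stateSystem h).Node} {c d : State V}
    (ht : HasSChildren S t {c, d}) (hne : c ≠ d) (hc : c.bag ⊆ t.state.bag)
    (hd : d.bag ⊆ t.state.bag) : ∃ t₁ t₂, (stateSystem h).td.AdmitsJoin S t t₁ t₂ := by
  have hcC := ht.1 (Set.mem_insert c {d})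
  have hdC := ht.1 (Set.mem_insert_of_mem c rfl)
  refine ⟨t.child c hcC, t.child d hdC, fun heq => hne (congrArg Node.state heq),
    (ht.2 _).2 ⟨c, by simp, hcC, rfl⟩, (ht.2 _).2 ⟨d, by simp, hdC, rfl⟩, fun u hu => ?_,
    Set.union_subset (Set.inter_subset_inter_left S hc) (Set.inter_subset_inter_left S hd)⟩
  obtain ⟨_, rfl | rfl, _, rfl⟩ := (ht.2 u).1 hu
  exacts [Or.inl rfl, Or.inr rfl]

theorem ncard_bag_parent_child {t : (stateSystem h).Node} {c : State V}
    (hc : c ∈ (stateSystem h).children t.state) :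
    (c.bag ⊆ t.state.bag ∨ t.state.bag ⊆ c.bag) ∧ c.bag.ncard ≤ t.state.bag.ncard + 1 ∧
      t.state.bag.ncard ≤ c.bag.ncard + 1 := by
  rcases (step_state t).bag_subset_or_eq_insert hc with ⟨hsub, hcard⟩ | ⟨w, hw⟩
  · exact ⟨Or.inl hsub, (Set.ncard_le_ncard hsub).trans (Nat.le_succ _), hcard⟩
  · have hsub : t.state.bag ⊆ c.bag := hw ▸ Set.subset_insert w _
    have hle : c.bag.ncard ≤ t.state.bag.ncard + 1 := hw ▸ Set.ncard_insert_le w _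
    exact ⟨Or.inr hsub, hle, (Set.ncard_le_ncard hsub).trans (Nat.le_succ _)⟩

theorem isSNice_stateSystem (h : SlimDerivable G S k ∅ Set.univ) :
    (stateSystem h).td.IsSNice S := by
  refine ⟨fun t t' htt' => ?_, fun t ht => ?_⟩
  · obtain ⟨c, hc, rfl⟩ := td_isParent_iff.1 htt'
    exact ncard_bag_parent_child hc
  obtain ⟨C, hop, hC⟩ := exists_sOperation ht
  generalize hs : t.state = s at hop
  cases hop with
  | join X W₁ W₂ hne =>
    refine Or.inr (Or.inr (hC.admitsJoin (by simpa using hne) ?_ ?_)) <;> rw [hs] <;> rfl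
  | introduce X W v hvX hvS => exact Or.inl ⟨v, hC.admitsIntroduce hvS (hs ▸ hvX) (hs ▸ rfl)⟩
  | forget X W w hwX hwS => exact Or.inr (Or.inl ⟨w, hC.admitsForget hwS (hs ▸ hwX) (hs ▸ rfl)⟩)
  | full X w lS lN x hwX hwS =>
    exact Or.inr (Or.inl ⟨w, hC.admitsForget hwS (hs ▸ hwX) (hs ▸ rfl)⟩)
  | combIntroduce Y A lN x b hx hxS =>
    exact Or.inl ⟨x A, hC.admitsIntroduce hxS (hs ▸ hx) (hs ▸ rfl)⟩
  | combPair Y A B lN x b hne =>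
    refine Or.inr (Or.inr (hC.admitsJoin (by simp [branch, hne]) ?_ ?_)) <;> rw [hs] <;>
      exact Set.sdiff_subset
  | combCons Y A lS lN x b hlen =>
    refine Or.inr (Or.inr (hC.admitsJoin (by simp [branch]) ?_ ?_)) <;> rw [hs]
    exacts [Set.sdiff_subset, subset_rfl]

theorem state_eq_of_state_node_succ {t p : (stateSystem h).Node}
    (hp : (stateSystem h).td.IsParent p t) (ht : t.state = node X W (i + 1)) :
    p.state = node X W i := by
  obtain ⟨c, hc, rfl⟩ := td_isParent_iff.1 hp
  obtain rfl : c = node X W (i + 1) := ht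
  exact (step_state p).eq_node_of_mem hc

theorem state_eq_of_state_comb {t p : (stateSystem h).Node}
    (hp : (stateSystem h).td.IsParent p t) (ht : t.state = comb Y lS lN x b) :
    (b = true ∧ ∃ X W, p.state = node X W 2) ∨
      b = false ∧ 2 ≤ lS.length ∧ ∃ A lN' b', p.state = comb Y (A :: lS) lN' x b' := by
  obtain ⟨c, hc, rfl⟩ := td_isParent_iff.1 hp
  obtain rfl : c = comb Y lS lN x b := ht
  exact (step_state p).eq_node_or_comb_of_mem hc

theorem ncard_bag_le_of_state_node {t : (stateSystem h).Node} (ht : t.state = node X W i) :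
    X.ncard ≤ k := by
  have := good_state t
  rw [ht] at this
  exact this.2.ncard_le

theorem isComb_of_state_comb {t : (stateSystem h).Node} (ht : t.state = comb Y lS lN x b) :
    IsComb G S k Y lS lN x b := by
  have hgood := good_state t
  rw [ht] at hgood
  exact hgood

theorem state_eq_of_parent_copy {t u : (stateSystem h).Node} (ht : t.state = node X W i)
    (hi : i < 2) (hu : (stateSystem h).td.IsParent t u) : u.state = node X W (i + 1) := by
  obtain ⟨c, hc, rfl⟩ := td_isParent_iff.1 hu
  have hstep := step_state t
  rw [ht] at hstep hc
  rw [hstep.eq_copy hi] at hc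
  exact hc

theorem eq_of_state_eq {p t u : (stateSystem h).Node} (ht : (stateSystem h).td.IsParent p t)
    (hu : (stateSystem h).td.IsParent p u) (hstate : t.state = u.state) : t = u := by
  obtain ⟨c, hc, rfl⟩ := td_isParent_iff.1 ht
  obtain ⟨d, hd, rfl⟩ := td_isParent_iff.1 hu
  obtain rfl : c = d := hstate
  rfl

theorem not_isSBottom_of_copy {t : (stateSystem h).Node} (ht : t.state = node X W i)
    (hi : i < 2) : ¬(stateSystem h).td.IsSBottom S t := by
  have hstep := step_state t
  rw [isSBottom_iff]
  rw [ht] at hstep ⊢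
  exact hstep.not_isBottom_copy hi

theorem state_eq_of_isSBottom {t : (stateSystem h).Node}
    (ht : (stateSystem h).td.IsSBottom S t) :
    (∃ X W, t.state = node X W 2) ∨ ∃ Y lS lN x b, t.state = comb Y lS lN x b := by
  have hgood := good_state t
  rcases hs : t.state with ⟨X, W, i⟩ | ⟨Y, lS, lN, x, b⟩
  · rw [hs] at hgood
    have hi : 2 ≤ i := le_of_not_gt fun hi => not_isSBottom_of_copy hs hi ht
    obtain rfl := le_antisymm hi hgood.1
    exact Or.inl ⟨X, W, rfl⟩
  · exact Or.inr ⟨Y, lS, lN, x, b, rfl⟩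

theorem exists_isFullJoinTree_of_isParent {t p : (stateSystem h).Node}
    (hp : (stateSystem h).td.IsParent p t) (hbag : t.state.bag = p.state.bag)
    (hfull : p.state.bag.ncard = k + 1) :
    ∃ A X, (stateSystem h).td.IsFullJoinTree k A X ∧ p ∈ A ∧ t ∈ A := by
  obtain ⟨c, hc, rfl⟩ := td_isParent_iff.1 hp
  exact exists_isFullJoinTree hc hbag hfull

theorem exists_isParent_of_state_comb {t : (stateSystem h).Node}
    (ht : t.state = comb Y lS lN x b) : ∃ p, (stateSystem h).td.IsParent p t := by
  rcases t.eq_bot_or_exists_child with rfl | ⟨p, c, hc, rfl⟩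
  · cases ht
  · exact ⟨p, td_isParent_iff.2 ⟨c, hc, rfl⟩⟩

theorem exists_isFullJoinTree_of_comb_false {t : (stateSystem h).Node}
    (ht : t.state = comb Y lS lN x false) :
    ∃ A X, (stateSystem h).td.IsFullJoinTree k A X ∧ t ∈ A := by
  obtain ⟨p, hp⟩ := exists_isParent_of_state_comb ht
  rcases state_eq_of_state_comb hp ht with ⟨hfalse, _⟩ | ⟨_, _, A, lN', b', hp'⟩
  · cases hfalse
  · obtain ⟨A, X, hA, _, htA⟩ := exists_isFullJoinTree_of_isParent hp (by rw [ht, hp']; rfl)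
      (by rw [hp']; exact (isComb_of_state_comb hp').ncard_eq)
    exact ⟨A, X, hA, htA⟩

theorem isFullJoinTree_or_bags_not_full {t t₁ t₂ : (stateSystem h).Node}
    (ht : (stateSystem h).td.IsSBottom S t)
    (hne : t₁ ≠ t₂) (h₁ : (stateSystem h).td.IsSChild S t t₁)
    (h₂ : (stateSystem h).td.IsSChild S t t₂) :
    (∃ A X, (stateSystem h).td.IsFullJoinTree k A X ∧ t ∈ A) ∨
      (t₁.state.bag.ncard ≤ k ∧ t₂.state.bag.ncard ≤ k ∧
        t₁.state.bag.ncard ≤ t.state.bag.ncard ∧ t₂.state.bag.ncard ≤ t.state.bag.ncard ∧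
        ∀ p, (stateSystem h).td.IsParent p t →
          p.state.bag.ncard ≤ k ∧ p.state.bag.ncard ≤ t.state.bag.ncard) := by
  obtain ⟨C, hop, hC⟩ := exists_sOperation ht
  obtain ⟨c, hc, hct, rfl⟩ := (hC.2 t₁).1 h₁
  obtain ⟨d, hd, hdt, rfl⟩ := (hC.2 t₂).1 h₂
  have hCne : C.Nontrivial := ⟨c, hc, d, hd, fun hcd => hne (by subst hcd; rfl)⟩
  simp only [state_child]
  rcases hop.cases_of_nontrivial hCne with ⟨X, W, hs, hbag⟩ | ⟨Y, lS, lN, x, hs, hbranch⟩ |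
    ⟨Y, lS, lN, x, hs⟩ | ⟨Y, lS, lN, x, b, hcomb, hbag⟩
  · have hX := ncard_bag_le_of_state_node hs
    rw [hs, hbag c hc, hbag d hd]
    refine Or.inr ⟨hX, hX, le_rfl, le_rfl, fun p hp => ?_⟩
    rw [state_eq_of_state_node_succ hp hs]
    exact ⟨hX, le_rfl⟩
  · have hY := isComb_of_state_comb hs
    have hcard {e : State V} (he : e ∈ C) : e.bag.ncard = k := by
      obtain ⟨W, hW, rfl⟩ := hbranch e he
      exact hY.ncard_bag_branch (List.mem_append_left lN hW)
    have ht' : t.state.bag.ncard = k + 1 := hs ▸ hY.ncard_eq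
    rw [hcard hc, hcard hd, ht']
    refine Or.inr ⟨le_rfl, le_rfl, k.le_succ, k.le_succ, fun p hp => ?_⟩
    obtain ⟨_, X, W, hp'⟩ | ⟨hfalse, _⟩ := state_eq_of_state_comb hp hs
    · have hX := ncard_bag_le_of_state_node hp'
      rw [hp']
      exact ⟨hX, hX.trans k.le_succ⟩
    · cases hfalse
  · exact Or.inl (exists_isFullJoinTree_of_comb_false hs)
  · have hcC := hC.1 hcomb
    have hcard : Y.ncard = k + 1 :=
      (isComb_of_state_comb (t := t.child _ hcC) (state_child t hcC)).ncard_eq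
    obtain ⟨A, X, hA, htA, _⟩ := exists_isFullJoinTree_of_isParent
      (td_isParent_iff.2 ⟨_, hcC, rfl⟩) (by rw [state_child, hbag]; rfl) (hbag ▸ hcard)
    exact Or.inl ⟨A, X, hA, htA⟩

theorem eq_of_isSBottom_of_not_full {t p u : (stateSystem h).Node}
    (ht : (stateSystem h).td.IsSBottom S t) (hbag : t.state.bag.ncard ≠ k + 1)
    (hp : (stateSystem h).td.IsParent p t) (hu : (stateSystem h).td.IsParent p u) :
    t.state.bag = p.state.bag ∧ u = t := by
  rcases state_eq_of_isSBottom ht with ⟨X, W, hs⟩ | ⟨Y, lS, lN, x, b, hs⟩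
  · have hps := state_eq_of_state_node_succ hp hs
    have hus := state_eq_of_parent_copy hps one_lt_two hu
    exact ⟨by rw [hs, hps]; rfl, eq_of_state_eq hu hp (hus.trans hs.symm)⟩
  · exact (hbag (hs ▸ (isComb_of_state_comb hs).ncard_eq)).elim

theorem unique_sChild_of_not_full {t t' u v : (stateSystem h).Node}
    (ht : (stateSystem h).td.IsSBottom S t) (ht' : (stateSystem h).td.IsSChild S t t')
    (hbag : t'.state.bag.ncard ≠ k + 1) (hu : (stateSystem h).td.IsParent t' u)
    (hv : (stateSystem h).td.IsParent t' v) : u = v ∧ t'.state.bag = u.state.bag := by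
  obtain ⟨C, hop, hC⟩ := exists_sOperation ht
  obtain ⟨c, hcC, hc, rfl⟩ := (hC.2 t').1 ht'
  rcases hop.eq_node_or_comb_of_mem hcC with ⟨X, W, rfl⟩ | ⟨Y, lS, lN, x, b, rfl⟩
  · have hus := state_eq_of_parent_copy (state_child t hc) zero_lt_two hu
    have hvs := state_eq_of_parent_copy (state_child t hc) zero_lt_two hv
    exact ⟨eq_of_state_eq hu hv (hus.trans hvs.symm), by rw [hus, state_child]; rfl⟩
  · exact (hbag (isComb_of_state_comb (state_child t hc)).ncard_eq).elim

theorem not_isSBottom_grandparent {t p q : (stateSystem h).Node}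
    (ht : (stateSystem h).td.IsSBottom S t) (hp : (stateSystem h).td.IsParent p t)
    (hbag : p.state.bag.ncard ≠ k + 1) (hq : (stateSystem h).td.IsParent q p) :
    ¬(stateSystem h).td.IsSBottom S q := by
  rcases state_eq_of_isSBottom ht with ⟨X, W, hs⟩ | ⟨Y, lS, lN, x, b, hs⟩
  · have hps := state_eq_of_state_node_succ hp hs
    exact not_isSBottom_of_copy (state_eq_of_state_node_succ hq hps) zero_lt_two
  · rcases state_eq_of_state_comb hp hs with ⟨_, X, W, hps⟩ | ⟨_, _, A, lN', b', hps⟩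
    · exact not_isSBottom_of_copy (state_eq_of_state_node_succ hq hps) one_lt_two
    · exact (hbag (hps ▸ (isComb_of_state_comb hps).ncard_eq)).elim

theorem exists_comb_of_mem_isFullJoinTree {A : Set (stateSystem h).Node}
    {t : (stateSystem h).Node} (hA : (stateSystem h).td.IsFullJoinTree k A X) (ht : t ∈ A) :
    ∃ lS lN x b, t.state = comb X lS lN x b ∧ 2 ≤ lS.length ∧ (b = true → 3 ≤ lS.length) := by
  have hbag {u : (stateSystem h).Node} (hu : u ∈ A) : u.state.bag = X := hA.2.2.2.1 u hu
  have hcomb {u : (stateSystem h).Node} (hu : u ∈ A) :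
      ∃ lS lN x b, u.state = comb X lS lN x b := by
    rcases hs : u.state with ⟨X', W, i⟩ | ⟨Y, lS, lN, x, b⟩
    · have hX := ncard_bag_le_of_state_node hs
      obtain rfl : X' = X := (congrArg State.bag hs).symm.trans (hbag hu)
      have := hA.2.2.1
      omega
    · obtain rfl : Y = X := (congrArg State.bag hs).symm.trans (hbag hu)
      exact ⟨lS, lN, x, b, rfl⟩
  obtain ⟨lS, lN, x, b, hs⟩ := hcomb ht
  refine ⟨lS, lN, x, b, hs, ?_⟩
  rcases exists_adjacent_mem_of_isFullJoinTree hA ht with ⟨c, hc, hcA⟩ | ⟨p, c, hc, rfl, hpA⟩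
  · obtain ⟨lS', lN', x', b', hcs⟩ := hcomb hcA
    rcases state_eq_of_state_comb (td_isParent_iff.2 ⟨c, hc, rfl⟩) hcs with
      ⟨_, X', W, ht'⟩ | ⟨_, hlen, A', lN'', b'', ht'⟩
    · cases hs.symm.trans ht'
    · cases hs.symm.trans ht'
      simp only [List.length_cons]
      omega
  · obtain ⟨lS', lN', x', b', hps⟩ := hcomb hpA
    rcases state_eq_of_state_comb (td_isParent_iff.2 ⟨c, hc, rfl⟩) hs with
      ⟨_, X', W, hp'⟩ | ⟨hb, hlen, _⟩
    · cases hps.symm.trans hp'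
    · exact ⟨hlen, by simp [hb]⟩

theorem isSBottom_of_mem_isFullJoinTree {A : Set (stateSystem h).Node}
    {t : (stateSystem h).Node} (hA : (stateSystem h).td.IsFullJoinTree k A X) (ht : t ∈ A) :
    (stateSystem h).td.IsSBottom S t ∧ ∃ t₁ t₂, t₁ ≠ t₂ ∧
      (stateSystem h).td.IsSChild S t t₁ ∧ (stateSystem h).td.IsSChild S t t₂ := by
  obtain ⟨lS, lN, x, b, hs, hlen, _⟩ := exists_comb_of_mem_isFullJoinTree hA ht
  have hstep := step_state t
  have hbot : (stateSystem h).td.IsSBottom S t := by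
    rw [isSBottom_iff]
    rw [hs] at hstep ⊢
    exact hstep.isBottom_comb hlen
  obtain ⟨C, hop, hC⟩ := exists_sOperation hbot
  rw [hs] at hop
  obtain ⟨c, hc, d, hd, hne⟩ := hop.exists_pair_of_comb hlen
  exact ⟨hbot, t.child c (hC.1 hc), t.child d (hC.1 hd), fun heq => hne (congrArg Node.state heq),
    (hC.2 _).2 ⟨c, hc, _, rfl⟩, (hC.2 _).2 ⟨d, hd, _, rfl⟩⟩

theorem mem_children_of_comb {t : (stateSystem h).Node} (hs : t.state = comb Y lS lN x b)
    (hW : W ∈ lS) : branch Y x W ∈ (stateSystem h).children t.state ∨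
      ∃ A lS', lS = A :: lS' ∧ W ∈ lS' ∧
        comb Y lS' [] x false ∈ (stateSystem h).children t.state := by
  have hstep := step_state t
  rw [hs] at hstep ⊢
  generalize (stateSystem h).children _ = C at hstep ⊢
  cases hstep with
  | combShort => exact Or.inl ⟨W, List.mem_append_left lN hW, rfl⟩
  | combCons _ A lS' =>
    rcases List.mem_cons.1 hW with rfl | hW
    · exact Or.inl (Or.inr ⟨W, by simp, rfl⟩)
    · exact Or.inr ⟨A, lS', rfl, hW, Or.inl rfl⟩

theorem exists_branch_isSChild {A : Set (stateSystem h).Node} {t : (stateSystem h).Node}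
    (hA : (stateSystem h).td.IsFullJoinTree k A X) (ht : t ∈ A) (hs : t.state = comb X lS lN x b)
    (hW : W ∈ lS) : ∃ m u, t ≤ m ∧ m ∈ A ∧ (stateSystem h).td.IsSChild S m u ∧
      m ≤ u ∧ u.state = branch X x W := by
  induction hlen : lS.length generalizing t lS lN b with
  | zero => simp_all
  | succ n ih =>
    rcases mem_children_of_comb hs hW with hc | ⟨B, lS', rfl, hW', hc⟩
    · refine ⟨t, t.child _ hc, le_rfl, ht, isSChild_iff.2 ⟨_, hc, rfl, ?_⟩, le_child t hc, rfl⟩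
      rw [hs]
      exact (meets_branch_iff (isComb_of_state_comb hs) (List.mem_append_left lN hW)).2 hW
    · obtain ⟨m, u, hm, hmA, hu⟩ := ih (t := t.child _ hc)
        (child_mem_of_isFullJoinTree hA ht hc rfl) rfl hW' (by simpa using hlen)
      exact ⟨m, u, (le_child t hc).trans hm, hmA, hu⟩

/-- The node `u` leads to the part `B` of the graph as seen from the full join tree `A` with top
node `m` and bag `X`: it is either the parent of `m`, or an `S`-child with `B` strictly below. -/
def LeadsTo (S : Set V) (A : Set (stateSystem h).Node) (m : (stateSystem h).Node)
    (u : (stateSystem h).Node) (B : Set V) : Prop :=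
  (B = ((stateSystem h).span m.state)ᶜ ∧ (stateSystem h).td.IsParent u m) ∨
  (B = u.state.low ∧ u ∉ A ∧ m ≤ u ∧ ∃ a ∈ A, (stateSystem h).td.IsSChild S a u)

theorem LeadsTo.eq {A : Set (stateSystem h).Node} {m u : (stateSystem h).Node} {B B' : Set V}
    (hB : LeadsTo S A m u B) (hB' : LeadsTo S A m u B') : B = B' := by
  have hlt (hp : (stateSystem h).td.IsParent u m) (hle : m ≤ u) : False := by
    obtain ⟨c, hc, rfl⟩ := td_isParent_iff.1 hp
    exact (lt_child u hc).not_ge hle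
  rcases hB with ⟨rfl, hp⟩ | ⟨rfl, _, hle, _⟩ <;> rcases hB' with ⟨rfl, hp'⟩ | ⟨rfl, _, hle', _⟩
  exacts [rfl, (hlt hp hle').elim, (hlt hp' hle).elim, rfl]

theorem LeadsTo.fullJoinBranch {A : Set (stateSystem h).Node} {m u : (stateSystem h).Node}
    {B : Set V} {v : V} (hB : LeadsTo S A m u B) (hv : v ∈ B) :
    (stateSystem h).td.FullJoinBranch S A m v u := by
  rcases hB with ⟨rfl, hp⟩ | ⟨rfl, huA, _, hu⟩
  · exact Or.inr ⟨hp.1, hp.2.symm, by simpa using hv⟩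
  · exact Or.inl ⟨huA, hu, by rw [td_Vt]; exact Or.inr hv⟩

theorem exists_leadsTo {A : Set (stateSystem h).Node} {m : (stateSystem h).Node} {B : Set V}
    (hA : (stateSystem h).td.IsFullJoinTree k A X) (hm : m ∈ A) (hs : m.state = comb X lS lN x b)
    (hB : B ∈ (X ∪ listUnion (lS ++ lN))ᶜ :: lS) : ∃ u, LeadsTo S A m u B := by
  rcases List.mem_cons.1 hB with rfl | hB
  · obtain ⟨p, hp⟩ := exists_isParent_of_state_comb hs
    exact ⟨p, Or.inl ⟨by rw [hs]; rfl, hp⟩⟩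
  · obtain ⟨a, u, hma, haA, hau, hle, hus⟩ := exists_branch_isSChild hA hm hs hB
    refine ⟨u, Or.inr ⟨by rw [hus]; rfl, fun huA => ?_, hma.trans hle, a, haA, hau⟩⟩
    have hbag : X \ {x B} = X := (congrArg State.bag hus).symm.trans (hA.2.2.2.1 u huA)
    have hxX : x B ∈ X := (isComb_of_state_comb hs).mem B (List.mem_append_left lN hB)
    exact (hbag.symm.subset hxX).2 rfl

theorem touchesThree_of_isTopOf {A : Set (stateSystem h).Node} {m : (stateSystem h).Node}
    (hA : (stateSystem h).td.IsFullJoinTree k A X) (hm : (stateSystem h).td.IsTopOf A m) :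
    ∃ lS lN x b, m.state = comb X lS lN x b ∧
      TouchesThree G S X ((X ∪ listUnion (lS ++ lN))ᶜ :: lS) := by
  obtain ⟨lS, lN, x, b, hs, _, hlen⟩ := exists_comb_of_mem_isFullJoinTree hA hm.1
  obtain ⟨p, hp⟩ := exists_isParent_of_state_comb hs
  have hb : b = true := by
    rcases state_eq_of_state_comb hp hs with ⟨hb, _⟩ | ⟨_, _, B, lN', b', hps⟩
    · exact hb
    · obtain ⟨c, hc, rfl⟩ := td_isParent_iff.1 hp
      exact (bag_ne_of_child_isTopOf hA hm (by rw [hps]; rfl)).elim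
  refine ⟨lS, lN, x, b, hs, ((isComb_of_state_comb hs).touches hb).resolve_left ?_⟩
  exact Nat.not_le.2 (hlen hb)

theorem exists_three_fullJoinBranch {A : Set (stateSystem h).Node} {m : (stateSystem h).Node}
    (hA : (stateSystem h).td.IsFullJoinTree k A X) (hm : (stateSystem h).td.IsTopOf A m) {v : V}
    (hv : v ∈ X \ S) : ∃ u₁ u₂ u₃ : V, ∃ t₁ t₂ t₃ : (stateSystem h).Node,
      u₁ ≠ u₂ ∧ u₁ ≠ u₃ ∧ u₂ ≠ u₃ ∧ t₁ ≠ t₂ ∧ t₁ ≠ t₃ ∧ t₂ ≠ t₃ ∧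
      (G.Adj v u₁ ∧ u₁ ∉ X ∧ (∃ s ∈ S, G.ReachableIn Xᶜ u₁ s) ∧
        (stateSystem h).td.FullJoinBranch S A m u₁ t₁) ∧
      (G.Adj v u₂ ∧ u₂ ∉ X ∧ (∃ s ∈ S, G.ReachableIn Xᶜ u₂ s) ∧
        (stateSystem h).td.FullJoinBranch S A m u₂ t₂) ∧
      (G.Adj v u₃ ∧ u₃ ∉ X ∧ (∃ s ∈ S, G.ReachableIn Xᶜ u₃ s) ∧
        (stateSystem h).td.FullJoinBranch S A m u₃ t₃) := by
  obtain ⟨lS, lN, x, b, hs, htouch⟩ := touchesThree_of_isTopOf hA hm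
  obtain ⟨B₁, hB₁, B₂, hB₂, B₃, hB₃, h₁₂, h₁₃, h₂₃, ⟨u₁, hu₁, hvu₁, hr₁⟩, ⟨u₂, hu₂, hvu₂, hr₂⟩,
    ⟨u₃, hu₃, hvu₃, hr₃⟩⟩ := htouch v hv
  have hpair : ((X ∪ listUnion (lS ++ lN))ᶜ :: lS).Pairwise Disjoint := by
    have hcomb := isComb_of_state_comb hs
    refine List.pairwise_cons.2 ⟨fun B hB => ?_, (List.pairwise_append.1 hcomb.pairwise).1⟩
    have hsub := subset_listUnion (List.mem_append_left lN hB)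
    exact (disjoint_compl_left.mono_right (hsub.trans Set.subset_union_right))
  have hne {B B' : Set V} {u u' : V} (hB : B ∈ (X ∪ listUnion (lS ++ lN))ᶜ :: lS)
      (hB' : B' ∈ (X ∪ listUnion (lS ++ lN))ᶜ :: lS) (hu : u ∈ B) (hu' : u' ∈ B')
      (hBB' : B ≠ B') : u ≠ u' := by
    rintro rfl
    exact hBB' (eq_of_mem_of_pairwise_disjoint hpair hB hB' hu hu')
  obtain ⟨t₁, ht₁⟩ := exists_leadsTo (S := S) hA hm.1 hs hB₁
  obtain ⟨t₂, ht₂⟩ := exists_leadsTo (S := S) hA hm.1 hs hB₂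
  obtain ⟨t₃, ht₃⟩ := exists_leadsTo (S := S) hA hm.1 hs hB₃
  exact ⟨u₁, u₂, u₃, t₁, t₂, t₃, hne hB₁ hB₂ hu₁ hu₂ h₁₂, hne hB₁ hB₃ hu₁ hu₃ h₁₃,
    hne hB₂ hB₃ hu₂ hu₃ h₂₃, fun h => h₁₂ (ht₁.eq (h ▸ ht₂)), fun h => h₁₃ (ht₁.eq (h ▸ ht₃)),
    fun h => h₂₃ (ht₂.eq (h ▸ ht₃)), ⟨hvu₁, hr₁.1, hr₁.2, ht₁.fullJoinBranch hu₁⟩,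
    ⟨hvu₂, hr₂.1, hr₂.2, ht₂.fullJoinBranch hu₂⟩, ⟨hvu₃, hr₃.1, hr₃.2, ht₃.fullJoinBranch hu₃⟩⟩

theorem isSlim_stateSystem (h : SlimDerivable G S k ∅ Set.univ) :
    (stateSystem h).td.IsSlim S k := by
  refine ⟨not_isSBottom_of_copy (X := ∅) (W := Set.univ) (i := 0) rfl zero_lt_two, ?_, ?_, ?_, ?_,
    fun A X hA t ht => isSBottom_of_mem_isFullJoinTree hA ht,
    fun A X m hA hm v hv => exists_three_fullJoinBranch hA hm hv⟩
  · intro t t₁ t₂ ht hne h₁ h₂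
    refine (isFullJoinTree_or_bags_not_full ht hne h₁ h₂).imp_right
      fun ⟨hk₁, hk₂, hle₁, hle₂, hp⟩ => ?_
    exact ⟨(Nat.lt_succ_of_le hk₁).ne, (Nat.lt_succ_of_le hk₂).ne, hle₁, hle₂,
      fun p hpt => ⟨(Nat.lt_succ_of_le (hp p hpt).1).ne, (hp p hpt).2⟩⟩
  · intro t p ht hbag hp
    exact ⟨(eq_of_isSBottom_of_not_full ht hbag hp hp).1,
      fun u hu => (eq_of_isSBottom_of_not_full ht hbag hp hu.1).2⟩
  · intro t v t' ht _ ht' hbag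
    exact ⟨fun u v hu hv => (unique_sChild_of_not_full ht ht' hbag hu.1 hv.1).1,
      fun u hu => (unique_sChild_of_not_full ht ht' hbag hu.1 hu.1).2⟩
  · intro t p ht hp hbag
    exact Or.inr fun q hq => not_isSBottom_grandparent ht hp hbag hq

theorem widthAtMost_stateSystem (h : SlimDerivable G S k ∅ Set.univ) :
    (stateSystem h).td.WidthAtMost k :=
  fun t => (good_state t).ncard_bag_le

end Slim

section Main

variable {V : Type} [Finite V] {G : SimpleGraph V}

theorem hasWidth_of_forall_not_treewidthAtMost [Nonempty V] {ι : Type} {k : ℕ}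
    {𝒯 : RootedTreeDecomp V ι G} (hw : 𝒯.WidthAtMost k)
    (hmin : ∀ j < k, ¬ G.TreewidthAtMost j) : 𝒯.HasWidth k := by
  refine ⟨hw, ?_⟩
  by_contra! hno
  have hlt : ∀ t, (𝒯.bag t).ncard ≤ k := fun t => Nat.lt_succ_iff.1 ((hw t).lt_of_ne (hno t))
  cases k with
  | zero =>
    obtain ⟨t, ht⟩ := 𝒯.bags_cover (Classical.arbitrary V)
    exact ((Set.ncard_pos (Set.toFinite _)).2 ⟨_, ht⟩).not_ge (hlt t)
  | succ j => exact hmin j j.lt_succ_self ⟨ι, 𝒯, hlt⟩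

theorem slimDerivable_univ_of_treewidthAtMost (S : Set V) {k : ℕ} (h : G.TreewidthAtMost k) :
    SlimDerivable G S k ∅ Set.univ := by
  obtain ⟨ι, 𝒯, hw⟩ := h
  exact (derivable_of_forall_ncard_le 𝒯 hw).slimDerivable

end Main

end SlimDecomp

theorem statement9_general {V : Type} [Finite V] [Nonempty V] {G : SimpleGraph V} (S : Set V)
    {k : ℕ} (h : G.TreewidthAtMost k) :
    ∃ (ι' : Type) (𝒯' : RootedTreeDecomp V ι' G) (k' : ℕ),
      k' ≤ k ∧ 𝒯'.IsSNice S ∧ 𝒯'.HasWidth k' ∧ 𝒯'.IsSlim S k' := by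
  classical
  have hex : ∃ j, G.TreewidthAtMost j := ⟨k, h⟩
  have hD := SlimDecomp.slimDerivable_univ_of_treewidthAtMost S (Nat.find_spec hex)
  exact ⟨_, (SlimDecomp.stateSystem hD).td, Nat.find hex, Nat.find_min' hex h,
    SlimDecomp.isSNice_stateSystem hD,
    SlimDecomp.hasWidth_of_forall_not_treewidthAtMost (SlimDecomp.widthAtMost_stateSystem hD)
      fun _ hj => Nat.find_min hex hj,
    SlimDecomp.isSlim_stateSystem hD⟩

/-- For every `S`-nice tree decomposition of `G` of width `k`
there is a slim `S`-nice tree decomposition of `G` of width at most `k`. -/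
theorem statement9 {V ι : Type} [Fintype V] [DecidableEq V] {G : SimpleGraph V}
    (𝒯 : RootedTreeDecomp V ι G) (S : Set V) (k : ℕ)
    (hnice : 𝒯.IsSNice S) (hw : 𝒯.HasWidth k) :
    ∃ (ι' : Type) (𝒯' : RootedTreeDecomp V ι' G) (k' : ℕ),
      k' ≤ k ∧ 𝒯'.IsSNice S ∧ 𝒯'.HasWidth k' ∧ 𝒯'.IsSlim S k' := by
  obtain ⟨t, ht⟩ := hw.2
  obtain ⟨v, -⟩ := Set.nonempty_of_ncard_ne_zero (ht.trans_ne k.succ_ne_zero)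
  have : Nonempty V := ⟨v⟩
  exact statement9_general S ⟨ι, 𝒯, hw.1⟩
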